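/- arXiv:1104.1209 — 5 statements merged into one kernel-verified Lean document; each statement's English description precedes it below -/
import Mathlib

section
/- If p is a polynomial of degree at most d on ℝ^n and t > 2 is a real number, then |p|_t ≤ (t − 1)^{d/2} · |p|_2. -/
open MeasureTheory ProbabilityTheory

/-- The standard Gaussian measure on `ℝ^n`. -/
noncomputable def stdGaussian (n : ℕ) : Measure (Fin n → ℝ) :=
  Measure.pi fun _ => gaussianReal 0 1

/-- `N_Y^θ(X) = cos θ · X + sin θ · Y`. -/
noncomputable def noisy {n : ℕ} (θ : ℝ) (Y X : Fin n → ℝ) : Fin n → ℝ :=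
  Real.cos θ • X + Real.sin θ • Y

/-- The noisy derivative `D_{Y,Z}^θ f (X)`. -/
noncomputable def noisyDeriv {n : ℕ} (θ : ℝ) (Y Z : Fin n → ℝ)
    (f : (Fin n → ℝ) → ℝ) (X : Fin n → ℝ) : ℝ :=
  (f (noisy θ Y X) - f (noisy θ Z X)) / θ

/-- `|f_θ^{(ℓ)}(X)|₂²`, the mean square of the `ℓ`-fold noisy derivative over
independent standard Gaussian directions. -/
noncomputable def derivNormSq (n : ℕ) (θ : ℝ) : ℕ → ((Fin n → ℝ) → ℝ) → (Fin n → ℝ) → ℝ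
  | 0, f, X => (f X) ^ 2
  | (ℓ+1), f, X =>
      ∫ YZ : (Fin n → ℝ) × (Fin n → ℝ),
        derivNormSq n θ ℓ (noisyDeriv θ YZ.1 YZ.2 f) X
        ∂((stdGaussian n).prod (stdGaussian n))

/-- The averaging operator `A^θ f (X) = E_Y[f(N_Y^θ(X))]`. -/
noncomputable def avgOp (n : ℕ) (θ : ℝ) (f : (Fin n → ℝ) → ℝ) (X : Fin n → ℝ) : ℝ :=
  ∫ Y, f (noisy θ Y X) ∂(stdGaussian n)

/-- `q_{ℓ,m}(X) = |p_θ^{(ℓ),m}(X)|₂² = (A^θ)^m |p_θ^{(ℓ)}(X)|₂²`. -/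
noncomputable def qlm (n : ℕ) (θ : ℝ) (p : MvPolynomial (Fin n) ℝ) (ℓ m : ℕ)
    (X : Fin n → ℝ) : ℝ :=
  (avgOp n θ)^[m] (derivNormSq n θ ℓ (fun W => MvPolynomial.eval W p)) X

/-- The Gaussian `L^k` norm of a function on `ℝ^n`. -/
noncomputable def gaussNorm (n : ℕ) (k : ℝ) (p : (Fin n → ℝ) → ℝ) : ℝ :=
  (∫ X, |p X| ^ k ∂(stdGaussian n)) ^ (1 / k)

/-- `f` is a degree-`d` polynomial threshold function on `ℝ^n`. -/
def isPTF (n d : ℕ) (f : (Fin n → ℝ) → ℝ) : Prop :=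
  ∃ p : MvPolynomial (Fin n) ℝ, p.totalDegree ≤ d ∧
    ∀ x, f x = Real.sign (MvPolynomial.eval x p)

/-- `X` is a `k`-independent family of standard Gaussians: any `m ≤ k` distinct
coordinates are jointly distributed as `m` independent standard Gaussians. -/
def kIndepGaussian {Ω : Type} [MeasurableSpace Ω] (n k : ℕ) (P : Measure Ω)
    (X : Ω → (Fin n → ℝ)) : Prop :=
  ∀ m : ℕ, m ≤ k → ∀ ι : Fin m → Fin n, Function.Injective ι →
    Measure.map (fun ω i => X ω (ι i)) P = Measure.pi fun _ : Fin m => gaussianReal 0 1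


lemma hc_aux1 (r b : ℝ) (hr : 1 ≤ r) (hb : 0 ≤ b) (hb1 : b ≤ 1) :
    (1 + b) ^ r - (1 - b) ^ r ≤ r * b * ((1 + b) ^ r + (1 - b) ^ r) := by
  let G : ℝ → ℝ := fun b => r * b * ((1 + b) ^ r + (1 - b) ^ r) - ((1 + b) ^ r - (1 - b) ^ r)
  have hmono : MonotoneOn G (Set.Icc 0 1) := by
    apply monotoneOn_of_hasDerivWithinAt_nonneg (f' := fun b => r * (r + 1) * b * ((1 + b) ^ (r - 1) - (1 - b) ^ (r - 1))) (convex_Icc 0 1)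
    · apply Continuous.continuousOn
      have h1 : Continuous (fun b : ℝ => (1 + b) ^ r) :=
        Continuous.rpow_const (by fun_prop) (fun _ => Or.inr (by linarith))
      have h2 : Continuous (fun b : ℝ => (1 - b) ^ r) :=
        Continuous.rpow_const (by fun_prop) (fun _ => Or.inr (by linarith))
      fun_prop
    · intro x hx
      rw [interior_Icc] at hx
      have hA : HasDerivAt (fun b : ℝ => (1 + b) ^ r) (1 * r * (1 + x) ^ (r - 1)) x :=
        ((hasDerivAt_id x).const_add 1).rpow_const (Or.inr hr)
      have hB : HasDerivAt (fun b : ℝ => (1 - b) ^ r) (-1 * r * (1 - x) ^ (r - 1)) x :=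
        ((hasDerivAt_id x).const_sub 1).rpow_const (Or.inr hr)
      have hC : HasDerivAt (fun b : ℝ => r * b) (r * 1) x := (hasDerivAt_id x).const_mul r
      have := ((hC.mul (hA.add hB)).sub (hA.sub hB)).hasDerivWithinAt (s := interior (Set.Icc 0 1))
      refine this.congr_deriv ?_
      have e1 : (1 + x) ^ r = (1 + x) ^ (r - 1) * (1 + x) := by
        rw [← Real.rpow_add_one (by linarith [hx.1])]; ring_nf
      have e2 : (1 - x) ^ r = (1 - x) ^ (r - 1) * (1 - x) := by
        rw [← Real.rpow_add_one (by linarith [hx.2])]; ring_nf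
      simp only [Pi.add_apply]
      rw [e1, e2]; ring
    · intro x hx
      rw [interior_Icc] at hx
      have : (1 - x) ^ (r - 1) ≤ (1 + x) ^ (r - 1) :=
        Real.rpow_le_rpow (by linarith [hx.2]) (by linarith [hx.1]) (by linarith)
      have h0 := hx.1
      have : 0 ≤ (1 + x) ^ (r - 1) - (1 - x) ^ (r - 1) := by linarith
      positivity
  have := hmono (Set.left_mem_Icc.2 zero_le_one) ⟨hb, hb1⟩ hb
  simp only [G] at this
  norm_num at this
  linarith

lemma hc_aux2 (q b : ℝ) (hq : 2 < q) (hb : 0 ≤ b) (hb1 : b ≤ 1) :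
    (1 + b) ^ q + (1 - b) ^ q ≤ 2 * (1 + (q - 1) * b ^ 2) ^ (q / 2) := by
  let G : ℝ → ℝ := fun b => ((1 + b) ^ q + (1 - b) ^ q) * (1 + (q - 1) * b ^ 2) ^ (-(q / 2))
  have hpos : ∀ b : ℝ, 0 < 1 + (q - 1) * b ^ 2 := fun b => by
    have : 0 ≤ (q - 1) * b ^ 2 := mul_nonneg (by linarith) (sq_nonneg b)
    linarith
  have hanti : AntitoneOn G (Set.Icc 0 1) := by
    apply antitoneOn_of_hasDerivWithinAt_nonpos (f' := fun x => q * (1 + (q - 1) * x ^ 2) ^ (-(q / 2) - 1) * (((1 + x) ^ (q-1) - (1 - x) ^ (q-1)) - (q - 1) * x * ((1 + x) ^ (q-1) + (1 - x) ^ (q-1)))) (convex_Icc 0 1)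
    · apply Continuous.continuousOn
      have h1 : Continuous (fun b : ℝ => (1 + b) ^ q) :=
        Continuous.rpow_const (by fun_prop) (fun _ => Or.inr (by linarith))
      have h2 : Continuous (fun b : ℝ => (1 - b) ^ q) :=
        Continuous.rpow_const (by fun_prop) (fun _ => Or.inr (by linarith))
      have h3 : Continuous (fun b : ℝ => (1 + (q - 1) * b ^ 2) ^ (-(q / 2))) :=
        Continuous.rpow_const (by fun_prop) (fun b => Or.inl (hpos b).ne')
      fun_prop
    · intro x hx
      rw [interior_Icc] at hx
      have hA : HasDerivAt (fun b : ℝ => (1 + b) ^ q) (1 * q * (1 + x) ^ (q - 1)) x :=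
        ((hasDerivAt_id x).const_add 1).rpow_const (Or.inr (by linarith))
      have hB : HasDerivAt (fun b : ℝ => (1 - b) ^ q) (-1 * q * (1 - x) ^ (q - 1)) x :=
        ((hasDerivAt_id x).const_sub 1).rpow_const (Or.inr (by linarith))
      have hC : HasDerivAt (fun b : ℝ => 1 + (q - 1) * b ^ 2) ((q - 1) * (2 * x)) x := by
        simpa using ((hasDerivAt_pow 2 x).const_mul (q - 1)).const_add 1
      have hD := hC.rpow_const (p := -(q / 2)) (Or.inl (hpos x).ne')
      have := ((hA.add hB).mul hD).hasDerivWithinAt (s := interior (Set.Icc 0 1))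
      refine this.congr_deriv ?_
      have e1 : (1 + x) ^ q = (1 + x) ^ (q - 1) * (1 + x) := by
        rw [← Real.rpow_add_one (by linarith [hx.1])]; ring_nf
      have e2 : (1 - x) ^ q = (1 - x) ^ (q - 1) * (1 - x) := by
        rw [← Real.rpow_add_one (by linarith [hx.2])]; ring_nf
      have e3 : (1 + (q - 1) * x ^ 2) ^ (-(q / 2)) =
          (1 + (q - 1) * x ^ 2) ^ (-(q / 2) - 1) * (1 + (q - 1) * x ^ 2) := by
        rw [← Real.rpow_add_one (hpos x).ne']; ring_nf
      simp only [Pi.add_apply]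
      rw [e1, e2, e3]; ring
    · intro x hx
      rw [interior_Icc] at hx
      have h1 := hc_aux1 (q - 1) x (by linarith) hx.1.le hx.2.le
      apply mul_nonpos_of_nonneg_of_nonpos
      · exact mul_nonneg (by linarith) (Real.rpow_nonneg (hpos x).le _)
      · linarith
  have := hanti (Set.left_mem_Icc.2 zero_le_one) ⟨hb, hb1⟩ hb
  simp only [G] at this
  norm_num at this
  rw [Real.rpow_neg (hpos b).le, ← div_eq_mul_inv, div_le_iff₀ (Real.rpow_pos_of_pos (hpos b) _)] at this
  linarith

lemma hc_aux3 (q a b : ℝ) (hq : 2 < q) (hb : 0 ≤ b) (hba : b ≤ a) :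
    (a + b) ^ q + (a - b) ^ q ≤ 2 * (a ^ 2 + (q - 1) * b ^ 2) ^ (q / 2) := by
  rcases (hb.trans hba).eq_or_lt with h | h
  · have : b = 0 := by linarith
    subst this; subst h
    rw [add_zero, sub_zero, Real.zero_rpow (by linarith)]
    norm_num
    positivity
  · have := hc_aux2 q (b / a) hq (by positivity) ((div_le_one h).2 hba)
    have h1 : a + b = a * (1 + b / a) := by field_simp
    have h2 : a - b = a * (1 - b / a) := by field_simp
    have h3 : a ^ 2 + (q - 1) * b ^ 2 = a ^ 2 * (1 + (q - 1) * (b / a) ^ 2) := by field_simp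
    have h4 : 0 ≤ b / a := by positivity
    have h5 : b / a ≤ 1 := (div_le_one h).2 hba
    have h6 : 0 ≤ (q - 1) * (b / a) ^ 2 := mul_nonneg (by linarith) (sq_nonneg _)
    have h7 : (a ^ 2) ^ (q / 2) = a ^ q := by
      rw [← Real.rpow_natCast, ← Real.rpow_mul h.le]; congr 1; push_cast; ring
    rw [h1, h2, h3, Real.mul_rpow h.le (by linarith), Real.mul_rpow h.le (by linarith),
      Real.mul_rpow (by positivity) (by linarith), h7]
    have : 0 < a ^ q := Real.rpow_pos_of_pos h q
    nlinarith

/-- The two-point inequality. -/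
lemma two_point (q a b : ℝ) (hq : 2 < q) :
    (|a + b| ^ q + |a - b| ^ q) / 2 ≤ (a ^ 2 + (q - 1) * b ^ 2) ^ (q / 2) := by
  have key : ∀ a b : ℝ, 0 ≤ a → 0 ≤ b →
      |a + b| ^ q + |a - b| ^ q ≤ 2 * (a ^ 2 + (q - 1) * b ^ 2) ^ (q / 2) := by
    intro a b ha hb
    rcases le_total b a with h | h
    · rw [abs_of_nonneg (by linarith), abs_of_nonneg (by linarith)]
      exact hc_aux3 q a b hq hb h
    · rw [abs_of_nonneg (by linarith), abs_sub_comm, abs_of_nonneg (by linarith), add_comm a b]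
      refine (hc_aux3 q b a hq ha h).trans ?_
      have : 0 ≤ (q - 1) * a ^ 2 := mul_nonneg (by linarith) (sq_nonneg _)
      have h8 : b ^ 2 + (q - 1) * a ^ 2 ≤ a ^ 2 + (q - 1) * b ^ 2 := by
        nlinarith [mul_nonneg (by linarith : 0 ≤ q - 2) (by nlinarith : 0 ≤ b ^ 2 - a ^ 2)]
      have := Real.rpow_le_rpow (by positivity) h8 (by linarith : 0 ≤ q / 2)
      linarith
  have h2 : |a + b| ^ q + |a - b| ^ q = |(|a| + |b|)| ^ q + |(|a| - |b|)| ^ q := by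
    rcases abs_cases a with ⟨h, _⟩ | ⟨h, _⟩ <;> rcases abs_cases b with ⟨h', _⟩ | ⟨h', _⟩ <;>
      rw [h, h']
    · rw [sub_neg_eq_add, ← sub_eq_add_neg, add_comm]
    · rw [← abs_neg (-a + b), ← abs_neg (-a - b), add_comm]; ring_nf
    · rw [← abs_neg (-a + -b), ← abs_neg (-a - -b)]; ring_nf
  have := key |a| |b| (abs_nonneg _) (abs_nonneg _)
  rw [← h2, sq_abs, sq_abs] at this
  linarith

def sg (b : Bool) : ℝ := if b then 1 else -1

noncomputable def cubeAvg {α : Type*} [Fintype α] (f : α → ℝ) : ℝ :=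
  (Fintype.card α : ℝ)⁻¹ * ∑ x, f x

lemma cubeAvg_mono {α : Type*} [Fintype α] {f g : α → ℝ} (h : ∀ x, f x ≤ g x) :
    cubeAvg f ≤ cubeAvg g := by
  unfold cubeAvg
  gcongr
  exact h _

lemma cubeAvg_nonneg {α : Type*} [Fintype α] {f : α → ℝ} (h : ∀ x, 0 ≤ f x) :
    0 ≤ cubeAvg f := by
  unfold cubeAvg
  have := Finset.sum_nonneg (s := Finset.univ) (fun x _ => h x)
  positivity

lemma cubeAvg_succ (k : ℕ) (f : (Fin (k + 1) → Bool) → ℝ) :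
    cubeAvg f = cubeAvg (fun x : Fin k → Bool =>
      (f (Fin.cons true x : Fin (k + 1) → Bool) + f (Fin.cons false x : Fin (k + 1) → Bool)) / 2) := by
  unfold cubeAvg
  have h := (Fin.consEquiv (fun _ : Fin (k + 1) => Bool)).sum_comp f
  rw [← h, Fintype.sum_prod_type, Fintype.sum_bool, ← Finset.sum_add_distrib, ← Finset.sum_div]
  have hc : ∀ (b : Bool) (x : Fin k → Bool), (Fin.consEquiv (fun _ : Fin (k + 1) => Bool)) (b, x) =
      (Fin.cons b x : Fin (k + 1) → Bool) := fun _ _ => rfl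
  simp only [hc, Fintype.card_pi, Fintype.card_bool, Finset.prod_const,
    Finset.card_univ, Fintype.card_fin]
  push_cast
  field_simp
  ring

lemma cubeAvg_minkowski {α : Type*} [Fintype α] (r a b : ℝ) (hr : 1 ≤ r)
    (ha : 0 ≤ a) (hb : 0 ≤ b) (u v : α → ℝ) (hu : ∀ x, 0 ≤ u x) (hv : ∀ x, 0 ≤ v x)
    (h1 : cubeAvg (fun x => u x ^ r) ≤ a ^ r) (h2 : cubeAvg (fun x => v x ^ r) ≤ b ^ r) :
    cubeAvg (fun x => (u x + v x) ^ r) ≤ (a + b) ^ r := by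
  have hM := Real.Lp_add_le_of_nonneg (s := Finset.univ) hr (fun i _ => hu i) (fun i _ => hv i)
  have hr0 : 0 < r := by linarith
  have aux : ∀ w : α → ℝ, (∀ x, 0 ≤ w x) → (cubeAvg (fun x => w x ^ r)) ^ (1 / r) =
      ((Fintype.card α : ℝ)⁻¹) ^ (1 / r) * (∑ x, w x ^ r) ^ (1 / r) := by
    intro w hw
    unfold cubeAvg
    rw [Real.mul_rpow (by positivity)]
    exact Finset.sum_nonneg fun x _ => Real.rpow_nonneg (hw x) _
  have h3 : (cubeAvg (fun x => u x ^ r)) ^ (1 / r) ≤ a := by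
    rw [one_div, Real.rpow_inv_le_iff_of_pos _ ha hr0]
    · exact h1
    · exact cubeAvg_nonneg fun x => Real.rpow_nonneg (hu x) _
  have h4 : (cubeAvg (fun x => v x ^ r)) ^ (1 / r) ≤ b := by
    rw [one_div, Real.rpow_inv_le_iff_of_pos _ hb hr0]
    · exact h2
    · exact cubeAvg_nonneg fun x => Real.rpow_nonneg (hv x) _
  have h5 : (cubeAvg (fun x => (u x + v x) ^ r)) ^ (1 / r) ≤ a + b := by
    have hc : 0 ≤ ((Fintype.card α : ℝ)⁻¹) ^ (1 / r) := by positivity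
    have := mul_le_mul_of_nonneg_left hM hc
    rw [mul_add, ← aux u hu, ← aux v hv] at this
    rw [aux (fun x => u x + v x) (fun x => add_nonneg (hu x) (hv x))]
    linarith
  rw [one_div, Real.rpow_inv_le_iff_of_pos _ (by positivity) hr0] at h5
  · exact h5
  · exact cubeAvg_nonneg fun x => Real.rpow_nonneg (add_nonneg (hu x) (hv x)) _

lemma poly_split (k d : ℕ) (p : MvPolynomial (Fin (k + 1)) ℝ) (hp : p.totalDegree ≤ d) :
    ∃ A B : MvPolynomial (Fin k) ℝ, A.totalDegree ≤ d ∧ B.totalDegree ≤ d - 1 ∧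
      (d = 0 → B = 0) ∧ ∀ (s : ℝ) (x : Fin k → ℝ), s ^ 2 = 1 →
        MvPolynomial.eval (Fin.cons s x : Fin (k + 1) → ℝ) p =
          MvPolynomial.eval x A + s * MvPolynomial.eval x B := by
  classical
  set P := MvPolynomial.finSuccEquiv ℝ k p with hP
  have hdeg : ∀ i, P.coeff i ≠ 0 → (P.coeff i).totalDegree + i ≤ d := fun i hi =>
    (MvPolynomial.totalDegree_coeff_finSuccEquiv_add_le p i hi).trans hp
  refine ⟨∑ i ∈ (Finset.range (P.natDegree + 1)).filter Even, P.coeff i,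
    ∑ i ∈ (Finset.range (P.natDegree + 1)).filter (fun i => ¬ Even i), P.coeff i, ?_, ?_, ?_, ?_⟩
  · apply MvPolynomial.totalDegree_finsetSum_le
    intro i _
    by_cases h : P.coeff i = 0
    · simp [h]
    · have := hdeg i h; omega
  · apply MvPolynomial.totalDegree_finsetSum_le
    intro i hi
    have h1 : i ≠ 0 := by rintro rfl; simp at hi
    by_cases h : P.coeff i = 0
    · simp [h]
    · have := hdeg i h; omega
  · intro hd
    apply Finset.sum_eq_zero
    intro i hi
    have h1 : i ≠ 0 := by rintro rfl; simp at hi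
    by_contra h
    have := hdeg i h; omega
  · intro s x hs
    rw [MvPolynomial.eval_eq_eval_mv_eval', ← hP, Polynomial.eval_map,
      Polynomial.eval₂_eq_sum_range,
      ← Finset.sum_filter_add_sum_filter_not _ (Even : ℕ → Prop), map_sum, map_sum, Finset.mul_sum]
    congr 1
    · apply Finset.sum_congr rfl
      intro i hi
      obtain ⟨j, hj⟩ := (Finset.mem_filter.1 hi).2
      rw [hj, ← two_mul, pow_mul, hs, one_pow, mul_one]
    · apply Finset.sum_congr rfl
      intro i hi
      obtain ⟨j, hj⟩ := Nat.not_even_iff_odd.1 (Finset.mem_filter.1 hi).2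
      rw [hj, pow_succ, pow_mul, hs, one_pow, one_mul, mul_comm]

/-- Bonami's inequality on the cube. -/
lemma bonami (q : ℝ) (hq : 2 < q) (k : ℕ) : ∀ (d : ℕ) (p : MvPolynomial (Fin k) ℝ),
    p.totalDegree ≤ d →
    cubeAvg (fun x : Fin k → Bool => |MvPolynomial.eval (fun i => sg (x i)) p| ^ q) ≤
      ((q - 1) ^ d * cubeAvg (fun x : Fin k → Bool =>
        (MvPolynomial.eval (fun i => sg (x i)) p) ^ 2)) ^ (q / 2) := by
  have hsq : ∀ a : ℝ, (a ^ 2) ^ (q / 2) = |a| ^ q := by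
    intro a
    rw [← sq_abs, ← Real.rpow_natCast, ← Real.rpow_mul (abs_nonneg a)]; congr 1; push_cast; ring
  have hq1 : 1 ≤ q - 1 := by linarith
  induction k with
  | zero =>
    intro d p _
    simp only [cubeAvg, Finset.univ_unique, Finset.sum_singleton, Fintype.card_unique]
    norm_num
    rw [← hsq]
    apply Real.rpow_le_rpow (by positivity) _ (by linarith)
    exact le_mul_of_one_le_left (by positivity) (one_le_pow₀ hq1)
  | succ k ih =>
    intro d p hp
    obtain ⟨A, B, hA, hB, hB0, hAB⟩ := poly_split k d p hp
    have hcons : ∀ (b : Bool) (x : Fin k → Bool),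
        MvPolynomial.eval (fun i => sg ((Fin.cons b x : Fin (k + 1) → Bool) i)) p =
          MvPolynomial.eval (fun i => sg (x i)) A + sg b * MvPolynomial.eval (fun i => sg (x i)) B := by
      intro b x
      rw [← hAB]
      · congr 2
        funext i
        refine Fin.cases ?_ (fun j => ?_) i <;> simp
      · cases b <;> simp [sg]
    rw [cubeAvg_succ, cubeAvg_succ]
    simp only [hcons]
    set a : (Fin k → Bool) → ℝ := fun x => MvPolynomial.eval (fun i => sg (x i)) A with ha
    set b : (Fin k → Bool) → ℝ := fun x => MvPolynomial.eval (fun i => sg (x i)) B with hb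
    have e1 : cubeAvg (fun x : Fin k → Bool => ((a x + sg true * b x) ^ 2 + (a x + sg false * b x) ^ 2) / 2)
        = cubeAvg (fun x => a x ^ 2) + cubeAvg (fun x => b x ^ 2) := by
      unfold cubeAvg
      rw [← mul_add, ← Finset.sum_add_distrib]
      congr 1
      apply Finset.sum_congr rfl
      intro x _
      simp [sg]
      ring
    change cubeAvg (fun x : Fin k → Bool => (|a x + sg true * b x| ^ q + |a x + sg false * b x| ^ q) / 2)
      ≤ ((q - 1) ^ d * cubeAvg (fun x : Fin k → Bool => ((a x + sg true * b x) ^ 2 + (a x + sg false * b x) ^ 2) / 2)) ^ (q / 2)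
    rw [e1, mul_add]
    have hposA : 0 ≤ cubeAvg (fun x => a x ^ 2) := cubeAvg_nonneg fun x => sq_nonneg _
    have hposB : 0 ≤ cubeAvg (fun x => b x ^ 2) := cubeAvg_nonneg fun x => sq_nonneg _
    have hq0 : 0 ≤ q - 1 := by linarith
    refine le_trans (cubeAvg_mono (g := fun x => (a x ^ 2 + (q - 1) * b x ^ 2) ^ (q / 2)) ?_) ?_
    · intro x
      have := two_point q (a x) (b x) hq
      simpa [sg, ← sub_eq_add_neg] using this
    · apply cubeAvg_minkowski (q / 2) _ _ (by linarith) (by positivity) (by positivity)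
        (fun x => a x ^ 2) (fun x => (q - 1) * b x ^ 2) (fun x => sq_nonneg _)
        (fun x => by positivity)
      · simp only [hsq]
        exact ih d A hA
      · have e2 : cubeAvg (fun x => ((q - 1) * b x ^ 2) ^ (q / 2)) =
            (q - 1) ^ (q / 2) * cubeAvg (fun x => |b x| ^ q) := by
          unfold cubeAvg
          rw [mul_left_comm, Finset.mul_sum _ _ ((q - 1) ^ (q / 2))]
          congr 1
          apply Finset.sum_congr rfl
          intro x _
          change ((q - 1) * b x ^ 2) ^ (q / 2) = _
          rw [Real.mul_rpow hq0 (sq_nonneg _), hsq]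
        rw [e2]
        rcases Nat.eq_zero_or_pos d with h0 | h0
        · have hb0 : ∀ x, b x = 0 := by intro x; simp [hb, hB0 h0]
          simp only [hb0, cubeAvg]
          have : (0:ℝ) ^ q = 0 := Real.zero_rpow (by linarith)
          simp [this]
          positivity
        · have := ih (d - 1) B hB
          have e3 : (q - 1) ^ d = (q - 1) * (q - 1) ^ (d - 1) := by
            rw [← pow_succ']; congr 1; omega
          rw [e3, mul_assoc, Real.mul_rpow hq0 (by positivity)]
          gcongr

lemma totalDegree_aeval_linear {σ τ : Type*} (p : MvPolynomial σ ℝ) (f : σ → MvPolynomial τ ℝ)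
    (hf : ∀ i, (f i).totalDegree ≤ 1) :
    (MvPolynomial.aeval f p).totalDegree ≤ p.totalDegree := by
  rw [MvPolynomial.aeval_def, MvPolynomial.eval₂_eq]
  apply MvPolynomial.totalDegree_finsetSum_le
  intro m hm
  refine (MvPolynomial.totalDegree_mul _ _).trans ?_
  have h1 : (algebraMap ℝ (MvPolynomial τ ℝ) (MvPolynomial.coeff m p)).totalDegree = 0 :=
    MvPolynomial.totalDegree_C _
  rw [h1, zero_add]
  refine (MvPolynomial.totalDegree_finsetProd _ _).trans ?_
  refine le_trans ?_ (MvPolynomial.le_totalDegree hm)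
  apply Finset.sum_le_sum
  intro i _
  refine (MvPolynomial.totalDegree_pow _ _).trans ?_
  exact (Nat.mul_le_mul_left _ (hf i)).trans (by simp)

/-- Bonami's inequality for normalized sums of signs. -/
lemma bonami_sums (q : ℝ) (hq : 2 < q) (n m d : ℕ) (c : ℝ) (p : MvPolynomial (Fin n) ℝ)
    (hp : p.totalDegree ≤ d) :
    cubeAvg (fun x : Fin n → Fin m → Bool => |MvPolynomial.eval (fun i => c * ∑ j, sg (x i j)) p| ^ q) ≤
      ((q - 1) ^ d * cubeAvg (fun x : Fin n → Fin m → Bool =>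
        (MvPolynomial.eval (fun i => c * ∑ j, sg (x i j)) p) ^ 2)) ^ (q / 2) := by
  let f : Fin n → MvPolynomial (Fin (n * m)) ℝ := fun i =>
    ∑ j, MvPolynomial.C c * MvPolynomial.X (finProdFinEquiv (i, j))
  have hf : ∀ i, (f i).totalDegree ≤ 1 := by
    intro i
    apply MvPolynomial.totalDegree_finsetSum_le
    intro j _
    refine (MvPolynomial.totalDegree_mul _ _).trans ?_
    simp
  have h := bonami q hq (n * m) d (MvPolynomial.aeval f p) ((totalDegree_aeval_linear p f hf).trans hp)
  let e : (Fin (n * m) → Bool) ≃ (Fin n → Fin m → Bool) :=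
    (Equiv.arrowCongr finProdFinEquiv.symm (Equiv.refl Bool)).trans (Equiv.curry _ _ _)
  have he : ∀ x i j, e x i j = x (finProdFinEquiv (i, j)) := fun x i j => rfl
  have hev : ∀ x : Fin (n * m) → Bool,
      MvPolynomial.eval (fun i => sg (x i)) (MvPolynomial.aeval f p) =
      MvPolynomial.eval (fun i => c * ∑ j, sg (e x i j)) p := by
    intro x
    have := MvPolynomial.eval₂Hom_bind₁ (RingHom.id ℝ) (fun i => sg (x i)) f p
    have h2 : (MvPolynomial.bind₁ f) p = MvPolynomial.aeval f p := rfl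
    rw [← h2]
    unfold MvPolynomial.eval
    rw [this]
    congr 2
    funext i
    simp [f, he, Finset.mul_sum]
  have hav : ∀ F : (Fin n → Fin m → Bool) → ℝ, cubeAvg (fun x => F (e x)) = cubeAvg F := by
    intro F
    unfold cubeAvg
    rw [e.sum_comp, Fintype.card_congr e]
  simp only [hev] at h
  rw [hav (fun y => |MvPolynomial.eval (fun i => c * ∑ j, sg (y i j)) p| ^ q),
    hav (fun y => (MvPolynomial.eval (fun i => c * ∑ j, sg (y i j)) p) ^ 2)] at h
  exact h

/-- Fair coin. -/
noncomputable def coin : Measure Bool := (2⁻¹ : ENNReal) • Measure.dirac true + (2⁻¹ : ENNReal) • Measure.dirac false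

instance coin_prob : IsProbabilityMeasure coin := by
  constructor
  simp [coin, ENNReal.inv_two_add_inv_two]

lemma coin_singleton (b : Bool) : coin {b} = 2⁻¹ := by
  cases b <;> simp [coin]

lemma integral_coin {E : Type*} [NormedAddCommGroup E] [NormedSpace ℝ E] [CompleteSpace E]
    (f : Bool → E) : ∫ b, f b ∂coin = (2⁻¹ : ℝ) • (f true + f false) := by
  rw [integral_fintype Integrable.of_finite, Fintype.sum_bool]
  simp [Measure.real, coin_singleton]

/-- law of normalized sum of `m` signs -/
noncomputable def signLaw (m : ℕ) : Measure ℝ :=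
  (Measure.pi fun _ : Fin m => coin).map (fun x => (√m)⁻¹ * ∑ j, sg (x j))

instance signLaw_prob (m : ℕ) : IsProbabilityMeasure (signLaw m) :=
  Measure.isProbabilityMeasure_map (Measurable.of_discrete).aemeasurable

lemma integral_pi_signLaw (n m : ℕ) (F : (Fin n → ℝ) → ℝ) (hF : Measurable F) :
    ∫ y, F y ∂(Measure.pi fun _ : Fin n => signLaw m) =
      cubeAvg (fun x : Fin n → Fin m → Bool => F (fun i => (√m)⁻¹ * ∑ j, sg (x i j))) := by
  have h : (Measure.pi fun _ : Fin n => signLaw m) =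
      (Measure.pi fun _ : Fin n => Measure.pi fun _ : Fin m => coin).map
        (fun x i => (√m)⁻¹ * ∑ j, sg (x i j)) := by
    unfold signLaw
    exact (Measure.pi_map_pi (μ := fun _ : Fin n => Measure.pi fun _ : Fin m => coin)
      (f := fun _ : Fin n => fun x : Fin m → Bool => (√m)⁻¹ * ∑ j, sg (x j))
      (fun _ => (Measurable.of_discrete).aemeasurable)).symm
  rw [h, integral_map (Measurable.of_discrete).aemeasurable hF.aestronglyMeasurable,
    integral_fintype Integrable.of_finite]
  unfold cubeAvg
  rw [Finset.mul_sum]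
  apply Finset.sum_congr rfl
  intro x _
  rw [smul_eq_mul]
  congr 1
  simp only [Measure.real, Measure.pi_singleton, coin_singleton, Finset.prod_const]
  simp

lemma integrable_pi_signLaw (n m : ℕ) (F : (Fin n → ℝ) → ℝ) (hF : Measurable F) :
    Integrable F (Measure.pi fun _ : Fin n => signLaw m) := by
  have h : (Measure.pi fun _ : Fin n => signLaw m) =
      (Measure.pi fun _ : Fin n => Measure.pi fun _ : Fin m => coin).map
        (fun x i => (√m)⁻¹ * ∑ j, sg (x i j)) := by
    unfold signLaw
    exact (Measure.pi_map_pi (μ := fun _ : Fin n => Measure.pi fun _ : Fin m => coin)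
      (f := fun _ : Fin n => fun x : Fin m → Bool => (√m)⁻¹ * ∑ j, sg (x j))
      (fun _ => (Measurable.of_discrete).aemeasurable)).symm
  rw [h, integrable_map_measure hF.aestronglyMeasurable (Measurable.of_discrete).aemeasurable]
  exact Integrable.of_finite

lemma charFun_signLaw (m : ℕ) (t : ℝ) :
    charFun (signLaw m) t = (charFun (coin.map sg) ((√m)⁻¹ * t)) ^ m := by
  rw [charFun_apply_real, charFun_apply_real, signLaw,
    integral_map (Measurable.of_discrete).aemeasurable (by fun_prop),
    integral_map (Measurable.of_discrete).aemeasurable (by fun_prop)]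
  have := integral_fintype_prod_eq_pow (ι := Fin m) (μ := coin) (fun b : Bool => Complex.exp (((√m)⁻¹ * t : ℝ) * sg b * Complex.I))
  rw [Fintype.card_fin] at this
  rw [← this]
  congr 1
  funext x
  rw [← Complex.exp_sum]
  congr 1
  push_cast
  rw [Finset.mul_sum, Finset.mul_sum, Finset.sum_mul]
  apply Finset.sum_congr rfl
  intro j _
  ring

noncomputable def signLawP (m : ℕ) : ProbabilityMeasure ℝ := ⟨signLaw m, inferInstance⟩

noncomputable def gaussP : ProbabilityMeasure ℝ := ⟨gaussianReal 0 1, inferInstance⟩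

lemma tendsto_signLaw : Filter.Tendsto signLawP Filter.atTop (nhds gaussP) := by
  refine ProbabilityMeasure.tendsto_iff_tendsto_charFun.2 fun t => ?_
  have := tendsto_charFun_inv_sqrt_mul_pow (P := coin) (X := sg)
    (Measurable.of_discrete).aemeasurable (by simp [integral_coin, sg])
    (by rw [integral_coin]; simp [sg]; norm_num) t
  simpa [signLawP, gaussP, charFun_signLaw, charFun_gaussianReal, neg_div] using this

lemma tendsto_pi_signLaw (n : ℕ) (F : BoundedContinuousFunction (Fin n → ℝ) ℝ) :
    Filter.Tendsto (fun m : ℕ => ∫ y, F y ∂(Measure.pi fun _ : Fin n => signLaw m)) Filter.atTop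
      (nhds (∫ y, F y ∂(Measure.pi fun _ : Fin n => gaussianReal 0 1))) := by
  have h := (ProbabilityMeasure.continuous_pi (α := fun _ : Fin n => ℝ)).tendsto
    (fun _ => gaussP)
  have h2 := h.comp (tendsto_pi_nhds.2 fun _ : Fin n => tendsto_signLaw)
  exact (ProbabilityMeasure.tendsto_iff_forall_integral_tendsto.1 h2) F

lemma integral_exp_signLaw (m : ℕ) (s : ℝ) (hs : s ^ 2 = 1) :
    ∫ x, Real.exp (s * x) ∂(signLaw m) ≤ Real.exp 1 := by
  rw [signLaw, integral_map (Measurable.of_discrete).aemeasurable (by fun_prop)]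
  have := integral_fintype_prod_eq_pow (ι := Fin m) (μ := coin) (fun b : Bool => Real.exp (s * ((√m)⁻¹ * sg b)))
  have e : ∀ x : Fin m → Bool, Real.exp (s * ((√m)⁻¹ * ∑ j, sg (x j))) =
      ∏ j, Real.exp (s * ((√m)⁻¹ * sg (x j))) := by
    intro x
    rw [← Real.exp_sum, Finset.mul_sum, Finset.mul_sum]
  simp only [e]
  rw [this, integral_coin, Fintype.card_fin]
  have h1 : (2⁻¹ : ℝ) • (Real.exp (s * ((√m)⁻¹ * sg true)) + Real.exp (s * ((√m)⁻¹ * sg false))) =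
      Real.cosh (s * (√m)⁻¹) := by
    rw [Real.cosh_eq]; simp [sg]; ring
  rw [h1]
  refine (pow_le_pow_left₀ (Real.cosh_pos _).le (Real.cosh_le_exp_half_sq _) m).trans ?_
  rw [← Real.exp_nat_mul]
  apply Real.exp_le_exp.2
  rw [mul_pow, hs, inv_pow, Real.sq_sqrt (by positivity)]
  rcases Nat.eq_zero_or_pos m with h | h
  · subst h; simp
  · have : (0:ℝ) < m := by exact_mod_cast h
    field_simp
    norm_num

lemma integral_weight_le (n m : ℕ) :
    ∫ y, ∏ i, (Real.exp (y i) + Real.exp (-y i)) ∂(Measure.pi fun _ : Fin n => signLaw m)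
      ≤ (2 * Real.exp 1) ^ n := by
  have := integral_fintype_prod_eq_pow (ι := Fin n) (μ := signLaw m) (fun x : ℝ => Real.exp x + Real.exp (-x))
  rw [this, Fintype.card_fin]
  have hi : ∀ s : ℝ, Integrable (fun x : ℝ => Real.exp (s * x)) (signLaw m) := by
    intro s
    rw [signLaw, integrable_map_measure (by fun_prop) (Measurable.of_discrete).aemeasurable]
    exact Integrable.of_finite
  apply pow_le_pow_left₀
  · apply integral_nonneg; intro x; positivity
  · have h1 := integral_exp_signLaw m 1 (by norm_num)
    have h2 := integral_exp_signLaw m (-1) (by norm_num)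
    have h3 := hi 1
    have h4 := hi (-1)
    simp only [one_mul, neg_one_mul] at h1 h2 h3 h4
    rw [integral_add h3 h4]
    linarith

lemma integrable_weight (n : ℕ) :
    Integrable (fun y : Fin n → ℝ => ∏ i, (Real.exp (y i) + Real.exp (-y i)))
      (Measure.pi fun _ : Fin n => gaussianReal 0 1) := by
  apply Integrable.fintype_prod (f := fun (_ : Fin n) (x : ℝ) => Real.exp x + Real.exp (-x))
  intro i
  have h3 := integrable_exp_mul_gaussianReal (μ := 0) (v := 1) 1
  have h4 := integrable_exp_mul_gaussianReal (μ := 0) (v := 1) (-1)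
  simp only [one_mul, neg_one_mul] at h3 h4
  exact h3.add h4

lemma poly_bound (n : ℕ) (p : MvPolynomial (Fin n) ℝ) : ∃ C : ℝ, 0 ≤ C ∧ ∀ y : Fin n → ℝ,
    |MvPolynomial.eval y p| ≤ C * ∏ i, (Real.exp (y i) + Real.exp (-y i)) := by
  refine ⟨∑ a ∈ p.support, |p.coeff a| * ∏ i, ((a i).factorial : ℝ), by positivity, fun y => ?_⟩
  rw [MvPolynomial.eval_eq', Finset.sum_mul]
  refine (Finset.abs_sum_le_sum_abs _ _).trans (Finset.sum_le_sum fun a _ => ?_)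
  rw [abs_mul, mul_assoc, ← Finset.prod_mul_distrib, Finset.abs_prod]
  gcongr with i _
  rw [abs_pow]
  have h := Real.pow_div_factorial_le_exp |y i| (abs_nonneg _) (a i)
  rw [div_le_iff₀ (by positivity), mul_comm] at h
  refine h.trans ?_
  gcongr
  rcases abs_cases (y i) with ⟨h, _⟩ | ⟨h, _⟩ <;> rw [h]
  · linarith [Real.exp_pos (-y i)]
  · linarith [Real.exp_pos (y i)]

lemma signLaw_bonami (n m d : ℕ) (p : MvPolynomial (Fin n) ℝ) (hp : p.totalDegree ≤ d)
    (t : ℝ) (ht : 2 < t) :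
    ∫ y, |MvPolynomial.eval y p| ^ t ∂(Measure.pi fun _ : Fin n => signLaw m) ≤
      ((t - 1) ^ d * ∫ y, (MvPolynomial.eval y p) ^ 2
        ∂(Measure.pi fun _ : Fin n => signLaw m)) ^ (t / 2) := by
  have hc : Measurable (fun y : Fin n → ℝ => MvPolynomial.eval y p) :=
    (MvPolynomial.continuous_eval p).measurable
  rw [integral_pi_signLaw n m _ (by fun_prop), integral_pi_signLaw n m _ (by fun_prop)]
  exact bonami_sums t ht n m d _ p hp

lemma integrable_poly (n : ℕ) (p : MvPolynomial (Fin n) ℝ) :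
    Integrable (fun y : Fin n → ℝ => MvPolynomial.eval y p)
      (Measure.pi fun _ : Fin n => gaussianReal 0 1) := by
  obtain ⟨C, hC, h⟩ := poly_bound n p
  refine ((integrable_weight n).const_mul C).mono'
    (MvPolynomial.continuous_eval p).aestronglyMeasurable (Filter.Eventually.of_forall fun y => ?_)
  rw [Real.norm_eq_abs]
  exact h y

lemma signLaw_moment (n : ℕ) (p : MvPolynomial (Fin n) ℝ) : ∃ C : ℝ, ∀ m,
    ∫ y, MvPolynomial.eval y p ∂(Measure.pi fun _ : Fin n => signLaw m) ≤ C := by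
  obtain ⟨C, hC, h⟩ := poly_bound n p
  refine ⟨C * (2 * Real.exp 1) ^ n, fun m => ?_⟩
  have hc : Measurable (fun y : Fin n → ℝ => MvPolynomial.eval y p) :=
    (MvPolynomial.continuous_eval p).measurable
  calc _ ≤ ∫ y, C * ∏ i, (Real.exp (y i) + Real.exp (-y i))
          ∂(Measure.pi fun _ : Fin n => signLaw m) := by
        apply integral_mono (integrable_pi_signLaw n m _ hc)
          (integrable_pi_signLaw n m _ (by fun_prop))
        exact fun y => (le_abs_self _).trans (h y)
    _ ≤ _ := by
        rw [integral_const_mul]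
        exact mul_le_mul_of_nonneg_left (integral_weight_le n m) hC

/-- truncation of a nonnegative continuous function -/
noncomputable def truncFn {n : ℕ} (F : (Fin n → ℝ) → ℝ) (hF : Continuous F) (h0 : ∀ y, 0 ≤ F y)
    (M : ℝ) (hM : 0 ≤ M) : BoundedContinuousFunction (Fin n → ℝ) ℝ :=
  BoundedContinuousFunction.ofNormedAddCommGroup (fun y => min (F y) M) (by fun_prop) M
    (fun y => by
      rw [Real.norm_eq_abs, abs_of_nonneg (le_min (h0 y) hM)]
      exact min_le_right _ _)

lemma gauss_trunc (n d : ℕ) (p : MvPolynomial (Fin n) ℝ) (hp : p.totalDegree ≤ d)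
    (t : ℝ) (ht : 2 < t) (M : ℝ) (hM : 0 ≤ M) :
    ∫ y, min (|MvPolynomial.eval y p| ^ t) M ∂(Measure.pi fun _ : Fin n => gaussianReal 0 1) ≤
      ((t - 1) ^ d * ∫ y, (MvPolynomial.eval y p) ^ 2
        ∂(Measure.pi fun _ : Fin n => gaussianReal 0 1)) ^ (t / 2) := by
  have hcont : Continuous (fun y : Fin n → ℝ => MvPolynomial.eval y p) :=
    MvPolynomial.continuous_eval p
  have hct : Continuous (fun y : Fin n → ℝ => |MvPolynomial.eval y p| ^ t) :=
    hcont.abs.rpow_const (fun _ => Or.inr (by linarith))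
  have hc2 : Continuous (fun y : Fin n → ℝ => (MvPolynomial.eval y p) ^ 2) := hcont.pow 2
  have ht1 : 0 ≤ t - 1 := by linarith
  obtain ⟨C, hC⟩ := signLaw_moment n (p ^ 4)
  simp only [map_pow] at hC
  -- first fix the second truncation level
  have key : ∀ K : ℝ, 0 < K →
      ∫ y, min (|MvPolynomial.eval y p| ^ t) M ∂(Measure.pi fun _ : Fin n => gaussianReal 0 1) ≤
      ((t - 1) ^ d * (∫ y, (MvPolynomial.eval y p) ^ 2
        ∂(Measure.pi fun _ : Fin n => gaussianReal 0 1) + C * K⁻¹)) ^ (t / 2) := by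
    intro K hK
    have l1 := tendsto_pi_signLaw n (truncFn _ hct (fun y => by positivity) M hM)
    have l2 := tendsto_pi_signLaw n (truncFn _ hc2 (fun y => by positivity) K hK.le)
    simp only [truncFn, BoundedContinuousFunction.coe_ofNormedAddCommGroup] at l1 l2
    have l3 := ((l2.add_const (C * K⁻¹)).const_mul ((t - 1) ^ d)).rpow_const
      (p := t / 2) (Or.inr (by linarith))
    have l4 := le_of_tendsto_of_tendsto' l1 l3 (fun m => ?_)
    · refine l4.trans ?_
      have hI := integrable_poly n (p ^ 2)
      simp only [map_pow] at hI
      have hC0 : 0 ≤ C := le_trans (integral_nonneg fun y => by positivity) (hC 0)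
      have hm0 : 0 ≤ ∫ y, min ((MvPolynomial.eval y p) ^ 2) K
          ∂(Measure.pi fun _ : Fin n => gaussianReal 0 1) :=
        integral_nonneg fun y => le_min (sq_nonneg _) hK.le
      apply Real.rpow_le_rpow (by positivity) _ (by linarith)
      refine mul_le_mul_of_nonneg_left (add_le_add_left ?_ _) (by positivity)
      refine integral_mono_of_nonneg (Filter.Eventually.of_forall fun y => le_min (sq_nonneg _) hK.le)
        hI (Filter.Eventually.of_forall fun y => min_le_left _ _)
    · have b1 := signLaw_bonami n m d p hp t ht
      have b2 : ∫ y, min (|MvPolynomial.eval y p| ^ t) M ∂(Measure.pi fun _ : Fin n => signLaw m) ≤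
          ∫ y, |MvPolynomial.eval y p| ^ t ∂(Measure.pi fun _ : Fin n => signLaw m) := by
        apply integral_mono (integrable_pi_signLaw n m _ (by fun_prop))
          (integrable_pi_signLaw n m _ (by fun_prop))
        exact fun y => min_le_left _ _
      refine (b2.trans b1).trans ?_
      have b3 : ∫ y, (MvPolynomial.eval y p) ^ 2 ∂(Measure.pi fun _ : Fin n => signLaw m) ≤
          ∫ y, min ((MvPolynomial.eval y p) ^ 2) K ∂(Measure.pi fun _ : Fin n => signLaw m)
            + C * K⁻¹ := by
        calc _ ≤ ∫ y, (min ((MvPolynomial.eval y p) ^ 2) K + (MvPolynomial.eval y p) ^ 4 * K⁻¹)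
              ∂(Measure.pi fun _ : Fin n => signLaw m) := by
              apply integral_mono (integrable_pi_signLaw n m _ (by fun_prop))
                (integrable_pi_signLaw n m _ (by fun_prop))
              intro y
              simp only
              set u := MvPolynomial.eval y p
              rcases le_total (u ^ 2) K with h | h
              · rw [min_eq_left h]
                have : 0 ≤ u ^ 4 * K⁻¹ := by positivity
                linarith
              · rw [min_eq_right h]
                have : u ^ 2 ≤ u ^ 4 * K⁻¹ := by
                  rw [← div_eq_mul_inv, le_div_iff₀ hK]
                  nlinarith [sq_nonneg u]
                linarith
          _ = _ + (∫ y, (MvPolynomial.eval y p) ^ 4 ∂(Measure.pi fun _ : Fin n => signLaw m)) * K⁻¹ := by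
              rw [integral_add (integrable_pi_signLaw n m _ (by fun_prop))
                (integrable_pi_signLaw n m _ (by fun_prop)), integral_mul_const]
          _ ≤ _ := by
              have := mul_le_mul_of_nonneg_right (hC m) (inv_nonneg.2 hK.le)
              linarith
      have b4 : 0 ≤ ∫ y, (MvPolynomial.eval y p) ^ 2 ∂(Measure.pi fun _ : Fin n => signLaw m) :=
        integral_nonneg fun y => sq_nonneg _
      apply Real.rpow_le_rpow (by positivity) _ (by linarith)
      gcongr
  have l5 : Filter.Tendsto (fun K : ℝ => ((t - 1) ^ d * (∫ y, (MvPolynomial.eval y p) ^ 2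
        ∂(Measure.pi fun _ : Fin n => gaussianReal 0 1) + C * K⁻¹)) ^ (t / 2)) Filter.atTop
      (nhds (((t - 1) ^ d * (∫ y, (MvPolynomial.eval y p) ^ 2
        ∂(Measure.pi fun _ : Fin n => gaussianReal 0 1) + C * 0)) ^ (t / 2))) :=
    (((tendsto_inv_atTop_zero.const_mul C).const_add _).const_mul _).rpow_const
      (Or.inr (by linarith))
  rw [mul_zero, add_zero] at l5
  refine ge_of_tendsto l5 ?_
  filter_upwards [Filter.eventually_gt_atTop 0] with K hK using key K hK

lemma gauss_hyper (n d : ℕ) (p : MvPolynomial (Fin n) ℝ) (hp : p.totalDegree ≤ d)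
    (t : ℝ) (ht : 2 < t) :
    ∫ y, |MvPolynomial.eval y p| ^ t ∂(Measure.pi fun _ : Fin n => gaussianReal 0 1) ≤
      ((t - 1) ^ d * ∫ y, (MvPolynomial.eval y p) ^ 2
        ∂(Measure.pi fun _ : Fin n => gaussianReal 0 1)) ^ (t / 2) := by
  have ht1 : 0 ≤ t - 1 := by linarith
  have h2 : 0 ≤ ∫ y, (MvPolynomial.eval y p) ^ 2
        ∂(Measure.pi fun _ : Fin n => gaussianReal 0 1) := integral_nonneg fun y => sq_nonneg _
  by_cases hI : Integrable (fun y : Fin n → ℝ => |MvPolynomial.eval y p| ^ t)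
      (Measure.pi fun _ : Fin n => gaussianReal 0 1)
  · have hcont : Continuous (fun y : Fin n → ℝ => MvPolynomial.eval y p) :=
      MvPolynomial.continuous_eval p
    have hct : Continuous (fun y : Fin n → ℝ => |MvPolynomial.eval y p| ^ t) :=
      hcont.abs.rpow_const (fun _ => Or.inr (by linarith))
    have l : Filter.Tendsto (fun M : ℕ => ∫ y, min (|MvPolynomial.eval y p| ^ t) (M : ℝ)
        ∂(Measure.pi fun _ : Fin n => gaussianReal 0 1)) Filter.atTop
        (nhds (∫ y, |MvPolynomial.eval y p| ^ t ∂(Measure.pi fun _ : Fin n => gaussianReal 0 1))) := by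
      apply tendsto_integral_of_dominated_convergence _ _ hI
      · intro M
        refine Filter.Eventually.of_forall fun y => ?_
        rw [Real.norm_eq_abs, abs_of_nonneg (le_min (by positivity) (by positivity))]
        exact min_le_left _ _
      · refine Filter.Eventually.of_forall fun y => ?_
        apply tendsto_const_nhds.congr'
        obtain ⟨N, hN⟩ := exists_nat_ge (|MvPolynomial.eval y p| ^ t)
        filter_upwards [Filter.eventually_ge_atTop N] with M hM
        rw [min_eq_left]
        exact hN.trans (by exact_mod_cast hM)
      · intro M
        exact (hct.min continuous_const).aestronglyMeasurable
    exact le_of_tendsto' l fun M => gauss_trunc n d p hp t ht M (by positivity)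
  · rw [integral_undef hI]
    positivity

/-- Hypercontractivity: `|p|_t ≤ (t-1)^{d/2} |p|_2` for degree-`d` polynomials. -/
theorem stmt2 (n d : ℕ) (p : MvPolynomial (Fin n) ℝ) (hp : p.totalDegree ≤ d)
    (t : ℝ) (ht : 2 < t) :
    gaussNorm n t (fun X => MvPolynomial.eval X p) ≤
      (t - 1) ^ ((d : ℝ) / 2) * gaussNorm n 2 (fun X => MvPolynomial.eval X p) := by
  have h := gauss_hyper n d p hp t ht
  have ht1 : 0 ≤ t - 1 := by linarith
  have e : gaussNorm n 2 (fun X => MvPolynomial.eval X p) =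
      (∫ y, (MvPolynomial.eval y p) ^ 2
        ∂(Measure.pi fun _ : Fin n => gaussianReal 0 1)) ^ (1 / 2 : ℝ) := by
    simp only [gaussNorm, _root_.stdGaussian, Real.rpow_two, sq_abs]
  rw [e]
  unfold gaussNorm _root_.stdGaussian
  set I := ∫ y, (MvPolynomial.eval y p) ^ 2 ∂(Measure.pi fun _ : Fin n => gaussianReal 0 1) with hI
  have h2 : 0 ≤ I := integral_nonneg fun y => sq_nonneg _
  refine (Real.rpow_le_rpow (integral_nonneg fun y => by positivity) h (by positivity)).trans ?_
  rw [← Real.rpow_mul (by positivity), Real.mul_rpow (by positivity) h2, ← Real.rpow_natCast,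
    ← Real.rpow_mul ht1]
  have e2 : t / 2 * (1 / t) = 1 / 2 := by field_simp
  rw [e2]
  apply le_of_eq
  congr 2
  ring
end

section
/- Let p be a polynomial of degree at most d in n variables and let X be a standard n-dimensional Gaussian vector. Then Pr(|p(X)| ≥ |p|_2 / 2) ≥ 9^{−d} / 2. -/
open MeasureTheory ProbabilityTheory

open MvPolynomial

namespace Hyper

lemma integrable_pow_gaussian (k : ℕ) :
    Integrable (fun x : ℝ => x ^ k) (gaussianReal 0 1) := by
  have h := (memLp_id_gaussianReal (μ := 0) (v := 1) (k : NNReal)).integrable_norm_pow'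
  refine h.mono' (by fun_prop) ?_
  filter_upwards with x
  simp

/-- Gaussian moments. -/
noncomputable def mom (k : ℕ) : ℝ := ∫ x, x ^ k ∂(gaussianReal 0 1)

lemma mom_zero : mom 0 = 1 := by simp [mom]

lemma integrable_pow_pdf (k : ℕ) :
    Integrable (fun x : ℝ => x ^ k * gaussianPDFReal 0 1 x) := by
  have h := integrable_pow_gaussian k
  rw [gaussianReal_of_var_ne_zero _ one_ne_zero] at h
  unfold gaussianPDF at h
  rw [integrable_withDensity_iff (by fun_prop) (by simp)] at h
  refine h.congr ?_
  filter_upwards with x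
  rw [ENNReal.toReal_ofReal (gaussianPDFReal_nonneg _ _ _)]

lemma mom_eq (k : ℕ) : mom k = ∫ x, x ^ k * gaussianPDFReal 0 1 x := by
  rw [mom, integral_gaussianReal_eq_integral_smul one_ne_zero]
  simp [mul_comm]

lemma hasDerivAt_pdf (x : ℝ) :
    HasDerivAt (gaussianPDFReal 0 1) (-(x * gaussianPDFReal 0 1 x)) x := by
  have h : gaussianPDFReal 0 1 = fun x =>
      (√(2 * Real.pi * (1 : NNReal)))⁻¹ * Real.exp (-(x - 0) ^ 2 / (2 * (1 : NNReal))) := by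
    ext; simp [gaussianPDFReal]
  rw [h]
  have h1 : HasDerivAt (fun x : ℝ => -(x - 0) ^ 2 / (2 * ((1 : NNReal) : ℝ))) (-x) x := by
    have := (((hasDerivAt_id x).sub_const 0).pow 2).neg.div_const (2 * ((1 : NNReal) : ℝ))
    refine this.congr_deriv ?_
    simp
    ring
  refine (h1.exp.const_mul _).congr_deriv ?_
  ring

lemma mom_succ (k : ℕ) : mom (k + 1) = k * mom (k - 1) := by
  have h := integral_mul_deriv_eq_deriv_mul_of_integrable (u := fun x : ℝ => x ^ k)
    (u' := fun x => k * x ^ (k - 1)) (v := gaussianPDFReal 0 1)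
    (v' := fun x => -(x * gaussianPDFReal 0 1 x))
    (fun x _ => hasDerivAt_pow k x) (fun x _ => hasDerivAt_pdf x) ?_ ?_ ?_
  · rw [mom_eq, mom_eq, ← integral_const_mul]
    have e1 : (∫ x : ℝ, x ^ k * -(x * gaussianPDFReal 0 1 x)) =
      - ∫ x : ℝ, x ^ (k + 1) * gaussianPDFReal 0 1 x := by
      rw [← integral_neg]; congr 1; ext x; ring
    rw [e1, neg_inj] at h
    rw [h]; congr 1; ext x; ring
  · convert (integrable_pow_pdf (k + 1)).neg using 1
    ext x; simp; ring
  · convert (integrable_pow_pdf (k - 1)).const_mul (k : ℝ) using 1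
    ext x; simp; ring
  · exact integrable_pow_pdf k

variable {n : ℕ}

/-- The product Gaussian measure. -/
noncomputable abbrev γ (n : ℕ) : Measure (Fin n → ℝ) := Measure.pi fun _ => gaussianReal 0 1

lemma eval_monomial' (m : Fin n →₀ ℕ) (c : ℝ) (x : Fin n → ℝ) :
    eval x (monomial m c) = c * ∏ i, x i ^ m i := by
  rw [eval_monomial, Finsupp.prod_fintype]; simp

lemma integrable_eval (p : MvPolynomial (Fin n) ℝ) :
    Integrable (fun x => eval x p) (γ n) := by
  induction p using MvPolynomial.induction_on' with
  | add p q hp hq => simp only [map_add]; exact hp.add hq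
  | monomial m c =>
    simp_rw [eval_monomial']
    exact (Integrable.fintype_prod (f := fun i (x : ℝ) => x ^ m i)
      (fun i => integrable_pow_gaussian (m i))).const_mul c

/-- Expectation of a polynomial. -/
noncomputable def E : MvPolynomial (Fin n) ℝ →ₗ[ℝ] ℝ where
  toFun p := ∫ x, eval x p ∂(γ n)
  map_add' p q := by
    simp only [map_add]
    exact integral_add (integrable_eval p) (integrable_eval q)
  map_smul' c p := by
    simp only [smul_eval, RingHom.id_apply, smul_eq_mul]
    exact integral_const_mul c _

lemma E_apply (p : MvPolynomial (Fin n) ℝ) : E p = ∫ x, eval x p ∂(γ n) := rfl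

lemma E_monomial (m : Fin n →₀ ℕ) (c : ℝ) : E (monomial m c) = c * ∏ i, mom (m i) := by
  rw [E_apply]
  simp_rw [eval_monomial']
  rw [integral_const_mul]
  congr 1
  exact integral_fintype_prod_eq_prod (fun i (x : ℝ) => x ^ m i)

lemma E_C (c : ℝ) : E (C c : MvPolynomial (Fin n) ℝ) = c := by
  simp [E_apply]

lemma E_C_mul (c : ℝ) (p : MvPolynomial (Fin n) ℝ) : E (C c * p) = c * E p := by
  rw [C_mul', map_smul, smul_eq_mul]

lemma E_ibp (i : Fin n) (p : MvPolynomial (Fin n) ℝ) : E (X i * p) = E (pderiv i p) := by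
  induction p using MvPolynomial.induction_on' with
  | add p q hp hq => rw [mul_add, map_add, map_add, map_add, hp, hq]
  | monomial m c =>
    rw [pderiv_monomial, X, monomial_mul, E_monomial, E_monomial, one_mul, mul_assoc]
    congr 1
    rw [← Finset.mul_prod_erase _ _ (Finset.mem_univ i),
      ← Finset.mul_prod_erase _ _ (Finset.mem_univ i), ← mul_assoc]
    congr 1
    · simp only [Finsupp.add_apply, Finsupp.single_eq_same, Finsupp.tsub_apply]
      rw [add_comm, mom_succ]
    · refine Finset.prod_congr rfl fun j hj => ?_
      have : j ≠ i := Finset.ne_of_mem_erase hj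
      simp [this.symm]

lemma E_sq_nonneg (p : MvPolynomial (Fin n) ℝ) : 0 ≤ E (p ^ 2) := by
  rw [E_apply]
  exact integral_nonneg fun x => by simp only [map_pow]; positivity

lemma E_cs (p q : MvPolynomial (Fin n) ℝ) : E (p * q) ≤ √(E (p ^ 2)) * √(E (q ^ 2)) := by
  rw [← Real.sqrt_mul (E_sq_nonneg _)]
  refine Real.le_sqrt_of_sq_le ?_
  have h : ∀ t : ℝ, 0 ≤ E (q ^ 2) * (t * t) + 2 * E (p * q) * t + E (p ^ 2) := by
    intro t
    have h1 := E_sq_nonneg (p + C t * q)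
    have h2 : (p + C t * q) ^ 2 = p ^ 2 + C (2 * t) * (p * q) + C (t * t) * q ^ 2 := by
      simp only [map_mul, map_ofNat]; ring
    rw [h2, map_add, map_add, E_C_mul, E_C_mul] at h1
    linarith
  have := discrim_le_zero h
  rw [discrim] at this
  nlinarith

/-- The number operator. -/
noncomputable def Lop (p : MvPolynomial (Fin n) ℝ) : MvPolynomial (Fin n) ℝ :=
  ∑ i, (X i * pderiv i p - pderiv i (pderiv i p))

lemma Lop_add (p q : MvPolynomial (Fin n) ℝ) : Lop (p + q) = Lop p + Lop q := by
  simp only [Lop, map_add, ← Finset.sum_add_distrib]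
  exact Finset.sum_congr rfl fun i _ => by ring

lemma Lop_C_mul (c : ℝ) (p : MvPolynomial (Fin n) ℝ) : Lop (C c * p) = C c * Lop p := by
  simp only [Lop, pderiv_C_mul, Finset.mul_sum]
  exact Finset.sum_congr rfl fun i _ => by ring

lemma Lop_zero : Lop (0 : MvPolynomial (Fin n) ℝ) = 0 := by simp [Lop]

lemma Lop_sum {ι : Type*} (s : Finset ι) (f : ι → MvPolynomial (Fin n) ℝ) :
    Lop (∑ k ∈ s, f k) = ∑ k ∈ s, Lop (f k) := by
  classical
  induction s using Finset.induction_on with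
  | empty => simp [Lop_zero]
  | insert a s ha ih => rw [Finset.sum_insert ha, Finset.sum_insert ha, Lop_add, ih]

lemma E_mul_Lop (f g : MvPolynomial (Fin n) ℝ) :
    E (f * Lop g) = ∑ i, E (pderiv i f * pderiv i g) := by
  rw [Lop, Finset.mul_sum, map_sum]
  refine Finset.sum_congr rfl fun i _ => ?_
  have h := E_ibp i (f * pderiv i g)
  rw [pderiv_mul, map_add] at h
  rw [mul_sub, map_sub, mul_left_comm, h]
  ring

lemma pderiv_comm' (i j : Fin n) (p : MvPolynomial (Fin n) ℝ) :
    pderiv i (pderiv j p) = pderiv j (pderiv i p) := by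
  ext m
  simp only [coeff_pderiv, Finsupp.add_apply]
  by_cases h : i = j
  · subst h; ring
  · rw [add_right_comm]
    simp [h, Ne.symm h]
    ring

lemma pderiv_Lop (j : Fin n) (p : MvPolynomial (Fin n) ℝ) :
    pderiv j (Lop p) = Lop (pderiv j p) + pderiv j p := by
  have h : Lop (pderiv j p) + pderiv j p =
      Lop (pderiv j p) + ∑ i, (if i = j then pderiv i p else 0) := by simp
  rw [h, Lop, Lop, map_sum, ← Finset.sum_add_distrib]
  refine Finset.sum_congr rfl fun i _ => ?_
  rw [map_sub, pderiv_mul, pderiv_comm' j i p, pderiv_comm' j i (pderiv i p), pderiv_comm' j i p]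
  by_cases hij : i = j
  · subst hij; simp; ring
  · simp [pderiv_X_of_ne hij, hij]

lemma totalDegree_pderiv_le (i : Fin n) (p : MvPolynomial (Fin n) ℝ) (k : ℕ)
    (hp : p.totalDegree ≤ k + 1) : (pderiv i p).totalDegree ≤ k := by
  rw [totalDegree, Finset.sup_le_iff]
  intro m hm
  have h1 : m + Finsupp.single i 1 ∈ p.support := by
    rw [mem_support_iff] at hm ⊢
    intro h
    exact hm (by rw [coeff_pderiv, h, zero_mul])
  have h2 := (le_totalDegree h1).trans hp
  rw [Finsupp.sum_add_index' (by simp) (by simp), Finsupp.sum_single_index rfl] at h2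
  omega

lemma coeff_X_mul_pderiv (i : Fin n) (p : MvPolynomial (Fin n) ℝ) (m : Fin n →₀ ℕ) :
    coeff m (X i * pderiv i p) = m i * coeff m p := by
  induction p using MvPolynomial.induction_on' with
  | add p q hp hq => rw [map_add, mul_add, coeff_add, coeff_add, hp, hq]; ring
  | monomial s c =>
    rw [X_mul_pderiv_monomial, coeff_smul, coeff_monomial]
    by_cases h : s = m
    · subst h; simp
    · simp [h]

lemma pderiv_eq_zero_of_totalDegree (i : Fin n) (p : MvPolynomial (Fin n) ℝ)
    (hp : p.totalDegree ≤ 0) : pderiv i p = 0 := by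
  rw [totalDegree_eq_zero_iff_eq_C.mp (Nat.le_zero.mp hp), pderiv_C]

/-- Chaos components. -/
def IsChaos (q : ℕ → MvPolynomial (Fin n) ℝ) : Prop :=
  ∀ k, Lop (q k) = C (k : ℝ) * q k ∧ (q k).totalDegree ≤ k

lemma IsChaos.scale {q : ℕ → MvPolynomial (Fin n) ℝ} (h : IsChaos q) (c : ℕ → ℝ) :
    IsChaos (fun k => C (c k) * q k) := by
  intro k
  refine ⟨?_, ?_⟩
  · rw [Lop_C_mul, (h k).1]; ring
  · simp only [C_mul']
    exact (totalDegree_smul_le _ _).trans (h k).2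

lemma IsChaos.add {q r : ℕ → MvPolynomial (Fin n) ℝ} (h : IsChaos q) (h' : IsChaos r) :
    IsChaos (fun k => q k + r k) := by
  intro k
  refine ⟨?_, ?_⟩
  · rw [Lop_add, (h k).1, (h' k).1]; ring
  · exact (totalDegree_add _ _).trans (max_le (h k).2 (h' k).2)

lemma isChaos_zero : IsChaos (fun _ => (0 : MvPolynomial (Fin n) ℝ)) := by
  intro k; simp [Lop_zero]

lemma IsChaos.pderiv {q : ℕ → MvPolynomial (Fin n) ℝ} (h : IsChaos q) (i : Fin n) :
    IsChaos (fun k => pderiv i (q (k + 1))) := by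
  intro k
  refine ⟨?_, totalDegree_pderiv_le i _ k (h (k + 1)).2⟩
  have h1 := congrArg (MvPolynomial.pderiv i) (h (k + 1)).1
  rw [pderiv_Lop, pderiv_C_mul] at h1
  rw [eq_sub_of_add_eq h1]
  push_cast
  rw [map_add, map_one]; ring

lemma Lop_sub_totalDegree (p : MvPolynomial (Fin n) ℝ) (d : ℕ) (hp : p.totalDegree ≤ d + 1) :
    (Lop p - C ((d + 1 : ℕ) : ℝ) * p).totalDegree ≤ d := by
  have hz : ∀ (r : MvPolynomial (Fin n) ℝ) (k : ℕ) (m : Fin n →₀ ℕ), r.totalDegree ≤ k →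
      k < (m.sum fun _ e => e) → coeff m r = 0 := by
    intro r k m hr hk
    by_contra h
    exact absurd ((le_totalDegree (mem_support_iff.mpr h)).trans hr) (by omega)
  rw [totalDegree, Finset.sup_le_iff]
  intro m hm
  by_contra hlt
  push Not at hlt
  rw [mem_support_iff] at hm
  apply hm
  have hd : ((m.sum fun _ e => e : ℕ) : ℝ) = ∑ i, (m i : ℝ) := by
    rw [Finsupp.sum_fintype _ _ (by simp)]; push_cast; rfl
  rw [Lop, Finset.sum_sub_distrib, coeff_sub, coeff_sub, coeff_sum, coeff_sum, coeff_C_mul]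
  have h0 : ∑ i, coeff m (pderiv i (pderiv i p)) = 0 := by
    refine Finset.sum_eq_zero fun i _ => hz _ d m ?_ hlt
    exact totalDegree_pderiv_le i _ d ((totalDegree_pderiv_le i p d hp).trans (by omega))
  rw [h0]
  simp_rw [coeff_X_mul_pderiv]
  rw [← Finset.sum_mul, ← hd]
  rcases eq_or_lt_of_le (Nat.succ_le_of_lt hlt) with h | h
  · rw [← h]; simp
  · rw [hz p (d + 1) m hp h]; simp

/-- Decomposition into chaos components. -/
lemma exists_chaos (d : ℕ) : ∀ (p : MvPolynomial (Fin n) ℝ), p.totalDegree ≤ d →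
    ∃ q, IsChaos q ∧ p = ∑ k ∈ Finset.range (d + 1), q k := by
  induction d with
  | zero =>
    intro p hp
    refine ⟨fun k => if k = 0 then p else 0, ?_, by simp⟩
    intro k
    by_cases hk : k = 0
    · subst hk
      simp only [if_true]
      refine ⟨?_, hp⟩
      simp [Lop, pderiv_eq_zero_of_totalDegree _ p hp]
    · simp [hk, Lop_zero]
  | succ d ih =>
    intro p hp
    obtain ⟨r, hr, hr2⟩ := ih _ (Lop_sub_totalDegree p d hp)
    let s : ℕ → MvPolynomial (Fin n) ℝ := fun k => C (((k : ℝ) - (d + 1 : ℕ))⁻¹) * r k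
    have hs : IsChaos s := hr.scale _
    let t := p - ∑ k ∈ Finset.range (d + 1), s k
    refine ⟨fun k => if k = d + 1 then t else s k, ?_, ?_⟩
    · intro k
      by_cases hk : k = d + 1
      · subst hk
        simp only [if_true]
        constructor
        · have e1 : Lop p = Lop t + ∑ k ∈ Finset.range (d + 1), Lop (s k) := by
            rw [← Lop_sum, ← Lop_add]; simp [t]
          have e2 : ∀ k ∈ Finset.range (d + 1), Lop (s k) = C ((d + 1 : ℕ) : ℝ) * s k + r k := by
            intro k hk
            rw [(hs k).1]
            have hne : (k : ℝ) - (d + 1 : ℕ) ≠ 0 := by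
              rw [sub_ne_zero]
              exact_mod_cast (Finset.mem_range.mp hk).ne
            have : r k = C ((k : ℝ) - (d + 1 : ℕ)) * s k := by
              simp only [s]
              rw [← mul_assoc, ← C_mul, mul_inv_cancel₀ hne, C_1, one_mul]
            rw [this, C_sub]; ring
          rw [Finset.sum_congr rfl e2, Finset.sum_add_distrib, ← hr2, ← Finset.mul_sum] at e1
          have e3 : t = p - ∑ k ∈ Finset.range (d + 1), s k := rfl
          rw [e3, mul_sub]
          rw [e3] at e1
          linear_combination -e1
        · refine (totalDegree_sub _ _).trans (max_le hp ?_)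
          refine totalDegree_finsetSum_le fun k hk => (hs k).2.trans ?_
          exact (Finset.mem_range.mp hk).le
      · simp only [hk, if_false]; exact hs k
    · rw [Finset.sum_range_succ]
      simp only [if_true]
      rw [Finset.sum_congr rfl (g := s)]
      · simp [t]
      · intro k hk
        rw [if_neg (Finset.mem_range.mp hk).ne]

/-! Paths -/

lemma hasDerivAt_path (P : Polynomial (MvPolynomial (Fin n) ℝ)) (s : ℝ) :
    HasDerivAt (fun s : ℝ => E (P.eval (C s))) (E (P.derivative.eval (C s))) s := by
  induction P using Polynomial.induction_on' with
  | add p q hp hq =>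
    simp only [Polynomial.eval_add, map_add]
    exact hp.add hq
  | monomial k r =>
    have h : ∀ (k : ℕ) (r : MvPolynomial (Fin n) ℝ) (s : ℝ), E (r * C s ^ k) = s ^ k * E r := by
      intro k r s
      rw [← C_pow, mul_comm, E_C_mul]
    simp only [Polynomial.derivative_monomial, Polynomial.eval_monomial, h]
    have h2 : E (r * (k : MvPolynomial (Fin n) ℝ)) = k * E r := by
      have : (k : MvPolynomial (Fin n) ℝ) = C (k : ℝ) := by simp
      rw [this, mul_comm, E_C_mul]
    rw [h2]
    refine ((hasDerivAt_pow k s).mul_const (E r)).congr_deriv ?_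
    ring

/-- comparison lemma -/
lemma compare (M a M' a' : ℝ → ℝ) (hM : ∀ s, HasDerivAt M (M' s) s)
    (ha : ∀ s, HasDerivAt a (a' s) s) (hM0 : ∀ s, 0 ≤ M s)
    (ha' : ∀ s, 0 < s → 0 ≤ a' s) (h : ∀ s, 0 < s → M' s ≤ 2 * √(M s) * a' s)
    (h0 : √(M 0) ≤ a 0) : √(M 1) ≤ a 1 := by
  have key : ∀ ε : ℝ, 0 < ε → √(M 1 + ε) ≤ a 1 + (√(M 0 + ε) - a 0) := by
    intro ε hε
    have hpos : ∀ s, 0 < M s + ε := fun s => by linarith [hM0 s]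
    have hd : ∀ s, HasDerivAt (fun s => √(M s + ε) - a s)
        (M' s / (2 * √(M s + ε)) - a' s) s := fun s =>
      (((hM s).add_const ε).sqrt (hpos s).ne').sub (ha s)
    have hanti : AntitoneOn (fun s => √(M s + ε) - a s) (Set.Icc 0 1) := by
      apply antitoneOn_of_deriv_nonpos (convex_Icc 0 1)
      · exact fun s _ => (hd s).continuousAt.continuousWithinAt
      · exact fun s _ => (hd s).differentiableAt.differentiableWithinAt
      · intro s hs
        rw [interior_Icc] at hs
        rw [(hd s).deriv, sub_nonpos, div_le_iff₀ (by have := hpos s; positivity)]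
        refine (h s hs.1).trans ?_
        have h1 : √(M s) ≤ √(M s + ε) := Real.sqrt_le_sqrt (by linarith)
        nlinarith [mul_le_mul_of_nonneg_right h1 (ha' s hs.1)]
    have := hanti (Set.left_mem_Icc.mpr zero_le_one) (Set.right_mem_Icc.mpr zero_le_one)
      zero_le_one
    simp only at this
    linarith
  refine le_of_forall_pos_le_add fun δ hδ => ?_
  have h1 := key (δ ^ 2) (by positivity)
  have h2 : √(M 1) ≤ √(M 1 + δ ^ 2) := Real.sqrt_le_sqrt (by linarith [sq_nonneg δ])
  have h3 : √(M 0 + δ ^ 2) ≤ √(M 0) + δ := by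
    rw [Real.sqrt_le_left (by positivity)]
    nlinarith [Real.sq_sqrt (hM0 0), Real.sqrt_nonneg (M 0)]
  linarith

lemma E_chaos_grad {q : ℕ → MvPolynomial (Fin n) ℝ} (h : IsChaos q) (k : ℕ) :
    ∑ i, E ((pderiv i (q k)) ^ 2) = k * E (q k ^ 2) := by
  have h1 := E_mul_Lop (q k) (q k)
  rw [(h k).1] at h1
  rw [← E_C_mul]
  simp_rw [sq]
  rw [← h1]; congr 1; ring

set_option maxHeartbeats 400000 in
lemma hyper (N : ℕ) : ∀ q : ℕ → MvPolynomial (Fin n) ℝ, IsChaos q →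
    √(E ((∑ k ∈ Finset.range N, q k) ^ 4)) ≤
      ∑ k ∈ Finset.range N, 3 ^ k * E (q k ^ 2) := by
  induction N with
  | zero => intro q _; simp
  | succ N ih =>
    intro q hq
    let P : Polynomial (MvPolynomial (Fin n) ℝ) :=
      ∑ k ∈ Finset.range (N + 1), Polynomial.monomial k (q k)
    have hPe : ∀ s : ℝ, P.eval (C s) = ∑ k ∈ Finset.range (N + 1), C (s ^ k) * q k := by
      intro s
      simp only [P, Polynomial.eval_finsetSum, Polynomial.eval_monomial]
      exact Finset.sum_congr rfl fun k _ => by rw [C_pow, mul_comm]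
    have hPd : ∀ s : ℝ, C s * P.derivative.eval (C s) = Lop (P.eval (C s)) := by
      intro s
      rw [hPe, Lop_sum]
      simp only [P, Polynomial.derivative_sum, Polynomial.derivative_monomial,
        Polynomial.eval_finsetSum, Polynomial.eval_monomial, Finset.mul_sum]
      refine Finset.sum_congr rfl fun k _ => ?_
      rw [Lop_C_mul, (hq k).1]
      rcases k with _ | k
      · simp
      · simp only [Nat.add_sub_cancel, C_pow, map_natCast]
        ring
    clear_value P
    have hda : ∀ s : ℝ, HasDerivAt
        (fun s : ℝ => ∑ k ∈ Finset.range (N + 1), s ^ (2 * k) * (3 ^ k * E (q k ^ 2)))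
        (∑ k ∈ Finset.range (N + 1),
          ((2 * k : ℕ) : ℝ) * s ^ (2 * k - 1) * (3 ^ k * E (q k ^ 2))) s :=
      fun s => HasDerivAt.fun_sum fun k _ => (hasDerivAt_pow (2 * k) s).mul_const _
    have hM0 : ∀ s : ℝ, 0 ≤ E ((P ^ 4).eval (C s)) := by
      intro s
      have := E_sq_nonneg ((P.eval (C s)) ^ 2)
      rw [← pow_mul] at this
      rwa [Polynomial.eval_pow]
    have key := compare (fun s => E ((P ^ 4).eval (C s)))
      (fun s => ∑ k ∈ Finset.range (N + 1), s ^ (2 * k) * (3 ^ k * E (q k ^ 2)))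
      (fun s => E ((P ^ 4).derivative.eval (C s)))
      (fun s => ∑ k ∈ Finset.range (N + 1),
        ((2 * k : ℕ) : ℝ) * s ^ (2 * k - 1) * (3 ^ k * E (q k ^ 2)))
      (fun s => hasDerivAt_path _ s)
      hda hM0 ?_ ?_ ?_
    · have hP1 : P.eval (C 1) = ∑ k ∈ Finset.range (N + 1), q k := by
        rw [hPe]; simp only [one_pow, C_1, one_mul]
      simp only [Polynomial.eval_pow, hP1, one_pow, one_mul] at key
      exact key
    · intro s hs
      exact Finset.sum_nonneg fun k _ => by have := E_sq_nonneg (q k); positivity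
    · intro s hs
      rw [← mul_le_mul_iff_right₀ hs]
      simp only [Polynomial.eval_pow]
      set p := P.eval (C s) with hp
      have e1 : s * E ((P ^ 4).derivative.eval (C s)) =
          ∑ i, 12 * E (p ^ 2 * (pderiv i p) ^ 2) := by
        rw [← E_C_mul, Polynomial.derivative_pow]
        have : C s * Polynomial.eval (C s)
            (Polynomial.C ((4 : ℕ) : MvPolynomial (Fin n) ℝ) * P ^ (4 - 1) *
              Polynomial.derivative P) =
            (C 4 * p ^ 3) * Lop p := by
          rw [← hPd, Polynomial.eval_mul, Polynomial.eval_mul, Polynomial.eval_C,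
            Polynomial.eval_pow, ← hp]
          simp only [Nat.cast_ofNat, map_ofNat]
          ring
        rw [this, E_mul_Lop]
        refine Finset.sum_congr rfl fun i _ => ?_
        rw [← E_C_mul]
        congr 1
        rw [pderiv_C_mul, pderiv_pow]
        simp only [map_ofNat, Nat.cast_ofNat]
        ring
      have e2 : ∀ i, √(E ((pderiv i p) ^ 4)) ≤ ∑ k ∈ Finset.range N,
          3 ^ k * (s ^ (2 * (k + 1)) * E ((pderiv i (q (k + 1))) ^ 2)) := by
        intro i
        have h1 := ih _ ((hq.pderiv i).scale (fun k => s ^ (k + 1)))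
        have h2 : pderiv i p =
            ∑ k ∈ Finset.range N, C (s ^ (k + 1)) * pderiv i (q (k + 1)) := by
          rw [hp, hPe, map_sum, Finset.sum_range_succ']
          simp only [pderiv_C_mul]
          rw [pderiv_eq_zero_of_totalDegree i (q 0) (hq 0).2]
          simp
        rw [h2]
        refine h1.trans (le_of_eq ?_)
        refine Finset.sum_congr rfl fun k _ => ?_
        rw [mul_pow, ← C_pow, E_C_mul]
        ring
      have e3 : ∀ i, E (p ^ 2 * (pderiv i p) ^ 2) ≤ √(E (p ^ 4)) * √(E ((pderiv i p) ^ 4)) := by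
        intro i
        have := E_cs (p ^ 2) ((pderiv i p) ^ 2)
        rwa [← pow_mul, ← pow_mul] at this
      rw [e1]
      calc ∑ i, 12 * E (p ^ 2 * (pderiv i p) ^ 2)
          ≤ ∑ i, 12 * (√(E (p ^ 4)) * ∑ k ∈ Finset.range N,
            3 ^ k * (s ^ (2 * (k + 1)) * E ((pderiv i (q (k + 1))) ^ 2))) := by
            refine Finset.sum_le_sum fun i _ => ?_
            have := mul_le_mul_of_nonneg_left (e2 i) (Real.sqrt_nonneg (E (p ^ 4)))
            linarith [e3 i]
        _ = 12 * √(E (p ^ 4)) * ∑ k ∈ Finset.range N,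
            3 ^ k * (s ^ (2 * (k + 1)) * (((k + 1 : ℕ) : ℝ) * E (q (k + 1) ^ 2))) := by
            simp_rw [← E_chaos_grad hq, Finset.mul_sum]
            rw [Finset.sum_comm]
            refine Finset.sum_congr rfl fun k _ => Finset.sum_congr rfl fun i _ => ?_
            ring
        _ = _ := by
            rw [Finset.sum_range_succ']
            simp only [Finset.mul_sum, mul_add]
            simp only [mul_zero, Nat.cast_zero, zero_mul, add_zero]
            refine Finset.sum_congr rfl fun k _ => ?_
            rw [show 2 * k + 2 * 1 - 1 = 2 * k + 1 by omega]
            push_cast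
            ring
    · simp only [Polynomial.eval_pow, hPe, Finset.sum_range_succ']
      obtain ⟨c, hc⟩ : ∃ c, q 0 = C c :=
        ⟨_, totalDegree_eq_zero_iff_eq_C.mp (Nat.le_zero.mp (hq 0).2)⟩
      simp only [hc, ← C_pow, E_C]
      simp
      rw [← C_pow, E_C, show c ^ 4 = (c ^ 2) ^ 2 by ring, Real.sqrt_sq (sq_nonneg c)]

lemma chaos_orth {q : ℕ → MvPolynomial (Fin n) ℝ} (h : IsChaos q) {j k : ℕ} (hjk : j ≠ k) :
    E (q j * q k) = 0 := by
  have h1 := E_mul_Lop (q j) (q k)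
  have h2 := E_mul_Lop (q k) (q j)
  rw [(h _).1, mul_left_comm, E_C_mul] at h1 h2
  have h3 : (k : ℝ) * E (q j * q k) = j * E (q j * q k) := by
    rw [h1, mul_comm (q j), h2]
    exact Finset.sum_congr rfl fun i _ => by rw [mul_comm]
  have h4 : (k : ℝ) - j ≠ 0 := by
    rw [sub_ne_zero]; exact_mod_cast hjk.symm
  have h5 : ((k : ℝ) - j) * E (q j * q k) = 0 := by linarith
  exact (mul_eq_zero.mp h5).resolve_left h4

theorem fourth_moment (d : ℕ) (p : MvPolynomial (Fin n) ℝ) (hp : p.totalDegree ≤ d) :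
    E (p ^ 4) ≤ 9 ^ d * E (p ^ 2) ^ 2 := by
  obtain ⟨q, hq, hpq⟩ := exists_chaos d p hp
  have h1 := hyper (d + 1) q hq
  rw [← hpq] at h1
  have h2 : E (p ^ 2) = ∑ k ∈ Finset.range (d + 1), E (q k ^ 2) := by
    rw [hpq, sq, Finset.sum_mul_sum, map_sum]
    refine Finset.sum_congr rfl fun j hj => ?_
    rw [map_sum, Finset.sum_eq_single j]
    · rw [sq]
    · exact fun k _ hk => chaos_orth hq hk.symm
    · exact fun h => absurd hj h
  have h3 : √(E (p ^ 4)) ≤ 3 ^ d * E (p ^ 2) := by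
    refine h1.trans ?_
    rw [h2, Finset.mul_sum]
    refine Finset.sum_le_sum fun k hk => ?_
    refine mul_le_mul_of_nonneg_right ?_ (E_sq_nonneg _)
    exact pow_le_pow_right₀ (by norm_num) (Nat.lt_succ_iff.mp (Finset.mem_range.mp hk))
  have h4 : 0 ≤ 3 ^ d * E (p ^ 2) := mul_nonneg (by positivity) (E_sq_nonneg _)
  rw [Real.sqrt_le_left h4] at h3
  refine h3.trans (le_of_eq ?_)
  rw [mul_pow, ← pow_mul, mul_comm d 2, pow_mul]; norm_num

theorem anti (d : ℕ) (p : MvPolynomial (Fin n) ℝ) (hp : p.totalDegree ≤ d) :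
    ((9:ℝ) ^ d)⁻¹ / 2 ≤ (γ n).real {x | √(E (p ^ 2)) / 2 ≤ |eval x p|} := by
  set m := E (p ^ 2) with hm
  set A : Set (Fin n → ℝ) := {x | √m / 2 ≤ |eval x p|} with hA
  have hm0 : 0 ≤ m := E_sq_nonneg p
  have hK : (1:ℝ) ≤ 9 ^ d := one_le_pow₀ (by norm_num)
  have hKi : ((9:ℝ) ^ d)⁻¹ ≤ 1 := inv_le_one_of_one_le₀ hK
  rcases hm0.eq_or_lt with h0 | hpos
  · have : A = Set.univ := by
      ext x; simp [hA, ← h0]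
    rw [this]
    simp
    linarith
  · have hcont : Continuous fun x : Fin n → ℝ => eval x p := MvPolynomial.continuous_eval p
    have hAm : MeasurableSet A :=
      (isClosed_le continuous_const hcont.abs).measurableSet
    have h4 := fourth_moment d p hp
    rw [← hm] at h4
    set K : ℝ := 9 ^ d with hKdef
    have hKpos : 0 < K := by positivity
    set l : ℝ := 3 / (4 * K * m) with hl
    have hlpos : 0 < l := by positivity
    have hint : E (p ^ 2) ≤ ∫ x, (eval x (C (m / 4) + C (l / 2) * p ^ 4)
        + A.indicator (fun _ => 1 / (2 * l)) x) ∂(γ n) := by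
      rw [E_apply]
      refine integral_mono (integrable_eval _) ((integrable_eval _).add
        ((integrable_const _).indicator hAm)) fun x => ?_
      simp only [map_add, map_mul, map_pow, eval_C]
      by_cases hx : x ∈ A
      · rw [Set.indicator_of_mem hx]
        have : 0 ≤ (l * (eval x p) ^ 2 - 1) ^ 2 / (2 * l) := by positivity
        have e : (l * (eval x p) ^ 2 - 1) ^ 2 / (2 * l) =
          l / 2 * (eval x p) ^ 4 + 1 / (2 * l) - (eval x p) ^ 2 := by field_simp; ring
        linarith
      · rw [Set.indicator_of_notMem hx]
        simp only [hA, Set.mem_ofPred_eq, not_le] at hx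
        have h1 : (eval x p) ^ 2 ≤ m / 4 := by
          rw [← sq_abs]
          have := Real.sq_sqrt hm0
          nlinarith [abs_nonneg (eval x p), Real.sqrt_nonneg m]
        have : 0 ≤ l / 2 * (eval x p) ^ 4 := by positivity
        linarith
    rw [integral_add (integrable_eval _) ((integrable_const _).indicator hAm), ← E_apply,
      integral_indicator_const _ hAm, map_add, E_C, E_C_mul, ← hm, smul_eq_mul] at hint
    have h5 : l / 2 * E (p ^ 4) ≤ 3 / 8 * m := by
      have : l / 2 * (K * m ^ 2) = 3 / 8 * m := by rw [hl]; field_simp; norm_num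
      rw [← this]
      exact mul_le_mul_of_nonneg_left h4 (by positivity)
    have h6 : 3 / 8 * m ≤ (γ n).real A * (1 / (2 * l)) := by linarith
    have h7 : 1 / (2 * l) = 2 / 3 * K * m := by rw [hl]; field_simp; norm_num
    rw [h7] at h6
    have h8 : 9 / 16 ≤ (γ n).real A * K := by
      have : 0 ≤ m * ((γ n).real A * K - 9 / 16) := by nlinarith
      have := nonneg_of_mul_nonneg_right this hpos
      linarith
    rw [inv_eq_one_div, div_div, div_le_iff₀ (by positivity)]
    linarith

end Hyper

/-- Anti-concentration from hypercontractivity: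
`Pr(|p(X)| ≥ |p|₂ / 2) ≥ 9^{-d}/2`. -/
theorem stmt3 (n d : ℕ) (p : MvPolynomial (Fin n) ℝ) (hp : p.totalDegree ≤ d) :
    ((9:ℝ) ^ d)⁻¹ / 2 ≤
      ((stdGaussian n)
        {X | gaussNorm n 2 (fun W => MvPolynomial.eval W p) / 2 ≤
              |MvPolynomial.eval X p|}).toReal := by
  have h := Hyper.anti d p hp
  have e : gaussNorm n 2 (fun W => MvPolynomial.eval W p) = √(Hyper.E (p ^ 2)) := by
    rw [gaussNorm, Real.sqrt_eq_rpow, Hyper.E_apply]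
    congr 1
    refine integral_congr_ae (Filter.Eventually.of_forall fun x => ?_)
    simp
  rw [e]
  exact h
end

section
/- For every real t ≥ 1 there exists a constant C(t) > 0 such that every polynomial p of degree at most d on ℝ^n satisfies |p|_t ≤ C(t)^d · |p|_1. -/
open MeasureTheory ProbabilityTheory

/-- Average over independent signs along the coordinate directions in the list. -/
noncomputable def bitE {n : ℕ} : List (Fin n) → ((Fin n → ℝ) → ℝ) → ℝ
  | [], f => f 0
  | i :: l, f => (bitE l (fun x => f (x + Pi.single i 1)) +
      bitE l (fun x => f (x - Pi.single i 1))) / 2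

lemma bitE_add {n : ℕ} (l : List (Fin n)) : ∀ f g : (Fin n → ℝ) → ℝ,
    bitE l (fun x => f x + g x) = bitE l f + bitE l g := by
  induction l with
  | nil => intro f g; simp [bitE]
  | cons i l ih => intro f g; simp only [bitE, ih]; ring

lemma bitE_smul {n : ℕ} (l : List (Fin n)) (c : ℝ) : ∀ f : (Fin n → ℝ) → ℝ,
    bitE l (fun x => c * f x) = c * bitE l f := by
  induction l with
  | nil => intro f; simp [bitE]
  | cons i l ih => intro f; simp only [bitE, ih]; ring

lemma bitE_nonneg {n : ℕ} (l : List (Fin n)) : ∀ f : (Fin n → ℝ) → ℝ, (∀ x, 0 ≤ f x) →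
    0 ≤ bitE l f := by
  induction l with
  | nil => intro f h; exact h 0
  | cons i l ih =>
    intro f h
    have h1 := ih (fun x => f (x + Pi.single i 1)) (fun x => h _)
    have h2 := ih (fun x => f (x - Pi.single i 1)) (fun x => h _)
    simp only [bitE]; linarith

lemma bitE_sum {n : ℕ} (l : List (Fin n)) {ι : Type*} (s : Finset ι)
    (f : ι → (Fin n → ℝ) → ℝ) :
    bitE l (fun x => ∑ i ∈ s, f i x) = ∑ i ∈ s, bitE l (f i) := by
  classical
  induction s using Finset.induction_on with
  | empty =>
    have := bitE_smul l 0 (fun _ => 0)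
    simpa using this
  | insert a s ha ih =>
    simp only [Finset.sum_insert ha]
    rw [bitE_add, ih]

lemma quad_cs {A B C : ℝ} (h : ∀ t : ℝ, 0 ≤ t ^ 2 * A - 2 * t * C + B) : C ^ 2 ≤ A * B := by
  have := discrim_le_zero (a := A) (b := -2 * C) (c := B) (fun t => by
    have := h t; linarith)
  unfold discrim at this
  linarith

lemma bitE_cs {n : ℕ} (l : List (Fin n)) (u w : (Fin n → ℝ) → ℝ) :
    (bitE l (fun x => u x * w x)) ^ 2 ≤ bitE l (fun x => u x ^ 2) * bitE l (fun x => w x ^ 2) := by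
  apply quad_cs
  intro t
  have h := bitE_nonneg l (fun x => (t * u x - w x) ^ 2) (fun x => sq_nonneg _)
  have e : (fun x => (t * u x - w x) ^ 2) =
      fun x => (t ^ 2 * u x ^ 2 + (-2 * t) * (u x * w x)) + w x ^ 2 := by
    funext x; ring
  rw [e, bitE_add, bitE_add, bitE_smul, bitE_smul] at h
  linarith

/-- Functions killed by `k` finite differences (degree less than `k`). -/
def DegLT {n : ℕ} : ℕ → ((Fin n → ℝ) → ℝ) → Prop
  | 0, f => ∀ x, f x = 0
  | k + 1, f => ∀ v, DegLT k (fun x => f (x + v) - f x)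

lemma DegLT.shift {n : ℕ} {k : ℕ} : ∀ {f : (Fin n → ℝ) → ℝ}, DegLT k f → ∀ w,
    DegLT k (fun x => f (x + w)) := by
  induction k with
  | zero => intro f h w x; exact h _
  | succ k ih =>
    intro f h w v
    have := ih (h v) w
    have e : ∀ x : Fin n → ℝ, x + v + w = x + w + v := fun x => by abel
    simpa only [e] using this

lemma DegLT.add {n : ℕ} {k : ℕ} : ∀ {f g : (Fin n → ℝ) → ℝ}, DegLT k f → DegLT k g →
    DegLT k (fun x => f x + g x) := by
  induction k with
  | zero => intro f g h h' x; simp [h x, h' x]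
  | succ k ih =>
    intro f g h h' v
    have := ih (h v) (h' v)
    convert this using 2
    ring

lemma DegLT.smul {n : ℕ} {k : ℕ} (c : ℝ) : ∀ {f : (Fin n → ℝ) → ℝ}, DegLT k f →
    DegLT k (fun x => c * f x) := by
  induction k with
  | zero => intro f h x; simp [h x]
  | succ k ih =>
    intro f h v
    have := ih (h v)
    convert this using 2
    ring

lemma DegLT.scale {n : ℕ} {k : ℕ} (c : ℝ) : ∀ {f : (Fin n → ℝ) → ℝ}, DegLT k f →
    DegLT k (fun x => f (c • x)) := by
  induction k with
  | zero => intro f h x; exact h _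
  | succ k ih =>
    intro f h v
    have := ih (h (c • v))
    simpa only [smul_add] using this

lemma DegLT.succ {n : ℕ} {k : ℕ} : ∀ {f : (Fin n → ℝ) → ℝ}, DegLT k f → DegLT (k + 1) f := by
  induction k with
  | zero => intro f h v x; simp [h x, h (x + v)]
  | succ k ih => intro f h v; exact ih (h v)

lemma DegLT.mono {n : ℕ} {k m : ℕ} (hkm : k ≤ m) {f : (Fin n → ℝ) → ℝ} (h : DegLT k f) :
    DegLT m f := by
  induction hkm with
  | refl => exact h
  | step _ ih => exact ih.succ

lemma DegLT.coord {n : ℕ} (i : Fin n) {k : ℕ} : ∀ {f : (Fin n → ℝ) → ℝ}, DegLT k f →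
    DegLT (k + 1) (fun x => x i * f x) := by
  induction k with
  | zero => intro f h v x; simp [h x, h (x + v)]
  | succ k ih =>
    intro f h v
    have := (ih (h v)).add ((h.shift v).smul (v i))
    convert this using 2
    simp only [Pi.add_apply]; ring

lemma DegLT.coord_pow {n : ℕ} (i : Fin n) (a : ℕ) {k : ℕ} {f : (Fin n → ℝ) → ℝ}
    (h : DegLT k f) : DegLT (k + a) (fun x => x i ^ a * f x) := by
  induction a with
  | zero => simpa using h
  | succ a ih =>
    have := ih.coord i
    have e : ∀ x : Fin n → ℝ, x i ^ (a + 1) * f x = x i * (x i ^ a * f x) := fun x => by ring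
    simp only [e]
    exact this

lemma DegLT.const {n : ℕ} (c : ℝ) : DegLT 1 (fun _ : Fin n → ℝ => c) := by
  intro v x; simp

lemma DegLT.monom {n : ℕ} (a : Fin n → ℕ) (s : Finset (Fin n)) :
    DegLT (∑ i ∈ s, a i + 1) (fun x : Fin n → ℝ => ∏ i ∈ s, x i ^ a i) := by
  classical
  induction s using Finset.induction_on with
  | empty => simpa using DegLT.const 1
  | insert j s hj ih =>
    have := ih.coord_pow j (a j)
    simp only [Finset.sum_insert hj, Finset.prod_insert hj]
    convert this using 1
    ring

lemma DegLT.zero {n k : ℕ} : DegLT k (fun _ : Fin n → ℝ => 0) :=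
  DegLT.mono (Nat.zero_le k) (fun _ => rfl)

lemma DegLT.sum {n k : ℕ} {ι : Type*} (s : Finset ι) (f : ι → (Fin n → ℝ) → ℝ)
    (h : ∀ i ∈ s, DegLT k (f i)) : DegLT k (fun x => ∑ i ∈ s, f i x) := by
  classical
  induction s using Finset.induction_on with
  | empty => simpa using DegLT.zero
  | insert j s hj ih =>
    simp only [Finset.sum_insert hj]
    exact (h j (by simp)).add (ih (fun i hi => h i (by simp [hi])))

lemma DegLT.eval {n d : ℕ} (p : MvPolynomial (Fin n) ℝ) (hp : p.totalDegree ≤ d) :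
    DegLT (d + 1) (fun x => MvPolynomial.eval x p) := by
  simp only [MvPolynomial.eval_eq']
  apply DegLT.sum
  intro a ha
  apply DegLT.smul
  refine (DegLT.monom a Finset.univ).mono ?_
  have := MvPolynomial.le_totalDegree ha
  rw [Finsupp.sum_fintype _ _ (by simp)] at this
  omega

lemma bit_hyper {n : ℕ} (l : List (Fin n)) : ∀ (d : ℕ) (f : (Fin n → ℝ) → ℝ), DegLT (d + 1) f →
    bitE l (fun x => f x ^ 4) ≤ 9 ^ d * (bitE l (fun x => f x ^ 2)) ^ 2 := by
  induction l with
  | nil =>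
    intro d f _
    simp only [bitE]
    have h1 : (1:ℝ) ≤ 9 ^ d := one_le_pow₀ (by norm_num)
    nlinarith [pow_nonneg (sq_nonneg (f 0)) 2]
  | cons i l ih =>
    intro d f hf
    set e : Fin n → ℝ := Pi.single i 1 with he
    set q : (Fin n → ℝ) → ℝ := fun x => (1/2) * (f (x + e) + f (x + -e)) with hq
    set r : (Fin n → ℝ) → ℝ := fun x => (1/2) * (f ((x + -e) + (e + e)) - f (x + -e)) with hr
    have hqd : DegLT (d + 1) q := ((hf.shift e).add (hf.shift (-e))).smul _
    have hrd : DegLT d r := ((hf (e + e)).shift (-e)).smul _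
    have e1 : ∀ x, f (x + e) = q x + r x := by
      intro x
      have : x + -e + (e + e) = x + e := by abel
      simp only [hq, hr, this]; ring
    have e2 : ∀ x, f (x - e) = q x - r x := by
      intro x
      have : x + -e + (e + e) = x + e := by abel
      simp only [hq, hr, this, sub_eq_add_neg]; ring
    have E4 : bitE (i :: l) (fun x => f x ^ 4) = bitE l (fun x => q x ^ 4) +
        6 * bitE l (fun x => q x ^ 2 * r x ^ 2) + bitE l (fun x => r x ^ 4) := by
      simp only [bitE, ← he, e1, e2]
      rw [← bitE_smul, ← bitE_add, ← bitE_add, ← bitE_add, div_eq_inv_mul, ← bitE_smul]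
      congr 1; funext x; ring
    have E2 : bitE (i :: l) (fun x => f x ^ 2) = bitE l (fun x => q x ^ 2) +
        bitE l (fun x => r x ^ 2) := by
      simp only [bitE, ← he, e1, e2]
      rw [← bitE_add, ← bitE_add, div_eq_inv_mul, ← bitE_smul]
      congr 1; funext x; ring
    have hQ0 := bitE_nonneg l (fun x => q x ^ 2) (fun x => sq_nonneg _)
    have hR0 := bitE_nonneg l (fun x => r x ^ 2) (fun x => sq_nonneg _)
    have hB0 := bitE_nonneg l (fun x => r x ^ 4) (fun x => by positivity)
    have hA := ih d q hqd
    have hC := bitE_cs l (fun x => q x ^ 2) (fun x => r x ^ 2)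
    simp only [← pow_mul] at hC
    norm_num at hC
    have hB : 9 * bitE l (fun x => r x ^ 4) ≤ 9 ^ d * (bitE l (fun x => r x ^ 2)) ^ 2 := by
      cases d with
      | zero =>
        have hz : ∀ x, r x = 0 := hrd
        have := bitE_smul l 0 (fun _ => 0)
        simp [hz]
        simp at this; simp [this]
      | succ d => have := ih d r hrd; rw [pow_succ]; linarith
    rw [E4, E2]
    generalize bitE l (fun x => q x ^ 4) = A at *
    generalize bitE l (fun x => r x ^ 4) = B at *
    generalize bitE l (fun x => q x ^ 2 * r x ^ 2) = C at *
    generalize bitE l (fun x => q x ^ 2) = Q at *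
    generalize bitE l (fun x => r x ^ 2) = R at *
    have hK : (0:ℝ) < 9 ^ d := by positivity
    generalize (9:ℝ) ^ d = K at *
    have h3 : 3 * C ≤ K * Q * R := by
      refine le_of_abs_le (abs_le_of_sq_le_sq ?_ (by positivity))
      calc (3 * C) ^ 2 = 9 * C ^ 2 := by ring
        _ ≤ 9 * (A * B) := by linarith
        _ = A * (9 * B) := by ring
        _ ≤ (K * Q ^ 2) * (K * R ^ 2) := by
          apply mul_le_mul hA hB (by linarith) (by positivity)
        _ = (K * Q * R) ^ 2 := by ring
    nlinarith

section Helpers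

open Filter Topology

/-- One-dimensional sign average. -/
noncomputable def bitA : ℕ → (ℝ → ℝ) → ℝ
  | 0, f => f 0
  | N + 1, f => (bitA N (fun x => f (x + 1)) + bitA N (fun x => f (x - 1))) / 2

lemma bitA_add (N : ℕ) : ∀ f g : ℝ → ℝ, bitA N (fun x => f x + g x) = bitA N f + bitA N g := by
  induction N with
  | zero => intro f g; simp [bitA]
  | succ N ih => intro f g; simp only [bitA, ih]; ring

lemma bitA_smul (N : ℕ) (c : ℝ) : ∀ f : ℝ → ℝ, bitA N (fun x => c * f x) = c * bitA N f := by
  induction N with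
  | zero => intro f; simp [bitA]
  | succ N ih => intro f; simp only [bitA, ih]; ring

lemma bitA_sum (N : ℕ) {ι : Type*} (s : Finset ι) (f : ι → ℝ → ℝ) :
    bitA N (fun x => ∑ i ∈ s, f i x) = ∑ i ∈ s, bitA N (f i) := by
  classical
  induction s using Finset.induction_on with
  | empty =>
    have := bitA_smul N 0 (fun _ => 0)
    simpa using this
  | insert a s ha ih =>
    simp only [Finset.sum_insert ha]
    rw [bitA_add, ih]

lemma bitA_neg (N : ℕ) : ∀ f : ℝ → ℝ, bitA N (fun x => f (-x)) = bitA N f := by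
  induction N with
  | zero => intro f; simp [bitA]
  | succ N ih =>
    intro f
    simp only [bitA]
    have h1 := ih (fun x => f (x + 1))
    have h2 := ih (fun x => f (x - 1))
    rw [← h1, ← h2]
    have e1 : ∀ x : ℝ, -(x + 1) = -x - 1 := fun x => by ring
    have e2 : ∀ x : ℝ, -(x - 1) = -x + 1 := fun x => by ring
    simp only [e1, e2]
    ring

lemma bitA_odd (N m : ℕ) : bitA N (fun x => x ^ (2 * m + 1)) = 0 := by
  have h := bitA_neg N (fun x => x ^ (2 * m + 1))
  have e : ∀ x : ℝ, (-x) ^ (2 * m + 1) = (-1) * x ^ (2 * m + 1) := fun x => by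
    rw [Odd.neg_pow ⟨m, rfl⟩]; ring
  simp only [e] at h
  rw [bitA_smul] at h
  linarith

lemma even_sum (f : ℕ → ℝ) (m : ℕ) :
    ∑ j ∈ Finset.range (2 * m + 1), f j * ((1 + (-1) ^ j) / 2) =
      ∑ i ∈ Finset.range (m + 1), f (2 * i) := by
  induction m with
  | zero => simp
  | succ m ih =>
    rw [show 2 * (m + 1) + 1 = (2 * m + 1) + 1 + 1 by ring, Finset.sum_range_succ,
      Finset.sum_range_succ, ih, Finset.sum_range_succ _ (m + 1)]
    have h1 : (-1 : ℝ) ^ (2 * m + 1) = -1 := Odd.neg_one_pow ⟨m, rfl⟩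
    have h2 : (-1 : ℝ) ^ (2 * m + 1 + 1) = 1 := Even.neg_one_pow ⟨m + 1, by ring⟩
    rw [h1, h2, show 2 * (m + 1) = 2 * m + 1 + 1 by ring]
    ring

lemma bitA_even_succ (N m : ℕ) : bitA (N + 1) (fun x => x ^ (2 * m)) =
    ∑ i ∈ Finset.range (m + 1), ((2 * m).choose (2 * i) : ℝ) *
      bitA N (fun x => x ^ (2 * (m - i))) := by
  simp only [bitA]
  rw [← bitA_add, div_eq_inv_mul, ← bitA_smul]
  have e : ∀ x : ℝ, 2⁻¹ * ((x + 1) ^ (2 * m) + (x - 1) ^ (2 * m)) =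
      ∑ i ∈ Finset.range (m + 1), ((2 * m).choose (2 * i) : ℝ) * x ^ (2 * (m - i)) := by
    intro x
    have h := even_sum (fun j => ((2 * m).choose j : ℝ) * x ^ (2 * m - j)) m
    simp only [← Nat.mul_sub] at h
    rw [← h, add_comm x 1, sub_eq_add_neg, add_comm x (-1), add_pow, add_pow,
      ← Finset.sum_add_distrib, Finset.mul_sum]
    refine Finset.sum_congr rfl fun j _ => ?_
    simp only [one_pow]
    ring
  simp only [e]
  rw [bitA_sum]
  simp only [bitA_smul]

/-- Even Gaussian moments. -/
noncomputable def gm (m : ℕ) : ℝ := (2 * m).factorial / (2 ^ m * m.factorial)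

lemma gm_zero : gm 0 = 1 := by simp [gm]

lemma gm_succ (m : ℕ) : gm (m + 1) = (2 * m + 1) * gm m := by
  unfold gm
  rw [show 2 * (m + 1) = 2 * m + 1 + 1 by ring]
  simp only [Nat.factorial_succ]
  push_cast
  field_simp
  ring

lemma gm_pos (m : ℕ) : 0 < gm m := by unfold gm; positivity

lemma two_pow_fact (j : ℕ) : 2 ^ j * j.factorial ≤ (2 * j).factorial := by
  induction j with
  | zero => simp
  | succ j ih =>
    rw [show 2 * (j + 1) = 2 * j + 1 + 1 by ring]
    simp only [Nat.factorial_succ]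
    calc 2 ^ (j + 1) * ((j + 1) * j.factorial) = (2 * j + 1 + 1) * (2 ^ j * j.factorial) := by ring
      _ ≤ (2 * j + 1 + 1) * ((2 * j + 1) * (2 * j).factorial) := by
        refine Nat.mul_le_mul_left _ (ih.trans ?_)
        exact Nat.le_mul_of_pos_left _ (by omega)

lemma coef_le (m j : ℕ) (h : j ≤ m) :
    ((2 * m).choose (2 * j) : ℝ) * gm (m - j) ≤ gm m * (m.choose j : ℝ) := by
  obtain ⟨k, rfl⟩ := Nat.exists_eq_add_of_le h
  rw [Nat.cast_choose ℝ (show 2 * j ≤ 2 * (j + k) by omega), Nat.cast_choose ℝ h,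
    show 2 * (j + k) - 2 * j = 2 * k by omega, show j + k - j = k by omega]
  unfold gm
  have h2 : (2 ^ j * j.factorial : ℝ) ≤ (2 * j).factorial := by exact_mod_cast two_pow_fact j
  have e1 : ((2 * (j + k)).factorial : ℝ) / ((2 * j).factorial * (2 * k).factorial) *
      ((2 * k).factorial / (2 ^ k * k.factorial)) =
      ((2 * (j + k)).factorial : ℝ) / (2 ^ k * k.factorial) / (2 * j).factorial := by
    field_simp
  have e2 : ((2 * (j + k)).factorial : ℝ) / (2 ^ (j + k) * (j + k).factorial) *
      ((j + k).factorial / (j.factorial * k.factorial)) =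
      ((2 * (j + k)).factorial : ℝ) / (2 ^ k * k.factorial) / (2 ^ j * j.factorial) := by
    rw [pow_add]
    field_simp
  rw [e1, e2]
  gcongr

lemma bitA_upper (N : ℕ) : ∀ m : ℕ, bitA N (fun x => x ^ (2 * m)) ≤ gm m * (N : ℝ) ^ m := by
  induction N with
  | zero =>
    intro m
    rcases m with _ | m
    · simp [bitA, gm]
    · simp [bitA]
  | succ N ih =>
    intro m
    rw [bitA_even_succ]
    push_cast
    rw [add_comm (N : ℝ) 1, add_pow, Finset.mul_sum]
    refine Finset.sum_le_sum fun j hj => ?_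
    have hjm : j ≤ m := by simpa [Nat.lt_succ_iff] using hj
    calc ((2 * m).choose (2 * j) : ℝ) * bitA N (fun x => x ^ (2 * (m - j)))
        ≤ ((2 * m).choose (2 * j) : ℝ) * (gm (m - j) * (N : ℝ) ^ (m - j)) := by
          gcongr; exact ih _
      _ = (((2 * m).choose (2 * j) : ℝ) * gm (m - j)) * (N : ℝ) ^ (m - j) := by ring
      _ ≤ (gm m * (m.choose j : ℝ)) * (N : ℝ) ^ (m - j) := by
          exact mul_le_mul_of_nonneg_right (coef_le m j hjm) (by positivity)
      _ = _ := by simp only [one_pow]; ring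

lemma desc_rec (N m : ℕ) : (N + 1).descFactorial (m + 1) =
    N.descFactorial (m + 1) + (m + 1) * N.descFactorial m := by
  rw [Nat.succ_descFactorial_succ, Nat.descFactorial_succ, ← add_mul]
  rcases le_or_gt m N with h | h
  · congr 1; omega
  · simp [Nat.descFactorial_of_lt h]

lemma bitA_lower (N : ℕ) : ∀ m : ℕ,
    gm m * (N.descFactorial m : ℝ) ≤ bitA N (fun x => x ^ (2 * m)) := by
  induction N with
  | zero =>
    intro m
    rcases m with _ | m
    · simp [bitA, gm]
    · simp [bitA]
  | succ N ih =>
    intro m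
    rw [bitA_even_succ]
    have hpos : ∀ j, 0 ≤ bitA N (fun x => x ^ (2 * j)) := fun j =>
      le_trans (mul_nonneg (gm_pos j).le (by positivity)) (ih j)
    rcases m with _ | m
    · have := ih 0
      simpa using this
    · rw [Finset.sum_range_succ', Finset.sum_range_succ']
      have h0 : 0 ≤ ∑ k ∈ Finset.range m, ((2 * (m + 1)).choose (2 * (k + 1 + 1)) : ℝ) *
          bitA N (fun x => x ^ (2 * (m - (k + 1)))) :=
        Finset.sum_nonneg fun k _ => mul_nonneg (by positivity) (hpos _)
      have h1 := ih (m + 1)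
      have h2 := ih m
      have hc : ((2 * (m + 1)).choose (2 * (0 + 1)) : ℝ) = (m + 1) * (2 * m + 1) := by
        rw [show 2 * (0 + 1) = 2 by rfl, Nat.cast_choose_two]; push_cast; ring
      rw [hc, desc_rec]
      simp only [zero_add, Nat.add_sub_cancel, Nat.add_sub_add_right, mul_zero, Nat.choose_zero_right, Nat.sub_zero,
        Nat.cast_one, one_mul]
      push_cast
      have h3 : gm (m + 1) * ((m + 1) * (N.descFactorial m : ℝ)) ≤
          (m + 1) * (2 * m + 1) * bitA N (fun x => x ^ (2 * m)) := by
        rw [gm_succ]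
        calc _ = (m + 1) * (2 * m + 1) * (gm m * (N.descFactorial m : ℝ)) := by ring
          _ ≤ _ := by gcongr
      linarith

/-- All Gaussian moments. -/
noncomputable def gmom (k : ℕ) : ℝ := ∫ x, x ^ k ∂(gaussianReal 0 1)

lemma iter_rec (k : ℕ) : iteratedDeriv (k + 2) (fun t : ℝ => Real.exp (t ^ 2 / 2)) =
    fun t => t * iteratedDeriv (k + 1) (fun t : ℝ => Real.exp (t ^ 2 / 2)) t +
      (k + 1) * iteratedDeriv k (fun t : ℝ => Real.exp (t ^ 2 / 2)) t := by
  set F := (fun t : ℝ => Real.exp (t ^ 2 / 2)) with hF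
  have hc : ContDiff ℝ ⊤ F := by rw [hF]; fun_prop
  have hd : ∀ j, Differentiable ℝ (iteratedDeriv j F) := fun j =>
    hc.differentiable_iteratedDeriv j (by exact_mod_cast WithTop.coe_lt_top _)
  have hs : ∀ j t, HasDerivAt (iteratedDeriv j F) (iteratedDeriv (j + 1) F t) t := by
    intro j t
    rw [iteratedDeriv_succ]
    exact (hd j t).hasDerivAt
  have h1 : iteratedDeriv 1 F = fun t => t * iteratedDeriv 0 F t := by
    funext t
    rw [iteratedDeriv_one, iteratedDeriv_zero]
    have : HasDerivAt F (Real.exp (t ^ 2 / 2) * (2 * t / 2)) t := by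
      have := (((hasDerivAt_id t).pow 2).div_const 2).exp
      simpa using this
    rw [this.deriv]; simp only [hF]; ring
  induction k with
  | zero =>
    funext t
    have h := ((hasDerivAt_id t).mul (hs 0 t)).deriv
    rw [show 0 + 2 = 1 + 1 by rfl, iteratedDeriv_succ]
    conv_lhs => rw [h1]
    simp only [zero_add] at h ⊢
    refine Eq.trans ?_ (h.trans ?_)
    · rfl
    · simp; ring
  | succ k ih =>
    funext t
    have h := (((hasDerivAt_id t).mul (hs (k + 1) t)).add ((hs k t).const_mul (k + 1 : ℝ))).deriv
    rw [show k + 1 + 2 = (k + 2) + 1 by rfl, iteratedDeriv_succ]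
    conv_lhs => rw [ih]
    refine Eq.trans ?_ (h.trans ?_)
    · rfl
    · simp; ring

lemma gmom_eq (k : ℕ) : gmom k = iteratedDeriv k (fun t : ℝ => Real.exp (t ^ 2 / 2)) 0 := by
  have h := iteratedDeriv_mgf_zero (X := fun x : ℝ => x) (μ := gaussianReal 0 1)
    (by simp) k
  have e : mgf (fun x : ℝ => x) (gaussianReal 0 1) = fun t : ℝ => Real.exp (t ^ 2 / 2) := by
    rw [mgf_fun_id_gaussianReal]; simp
  rw [e] at h
  rw [h]
  rfl

lemma gmom_rec (k : ℕ) : gmom (k + 2) = (k + 1) * gmom k := by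
  rw [gmom_eq, gmom_eq, iter_rec]; simp

lemma gmom_even (m : ℕ) : gmom (2 * m) = gm m := by
  induction m with
  | zero => simp [gmom, gm]
  | succ m ih =>
    rw [show 2 * (m + 1) = 2 * m + 2 by ring, gmom_rec, ih, gm_succ]; push_cast; ring

lemma gmom_odd (m : ℕ) : gmom (2 * m + 1) = 0 := by
  induction m with
  | zero => simp [gmom]
  | succ m ih =>
    rw [show 2 * (m + 1) + 1 = (2 * m + 1) + 2 by ring, gmom_rec, ih]; simp

lemma bitA_tendsto (k : ℕ) :
    Tendsto (fun N : ℕ => bitA N (fun x => ((√(N : ℝ))⁻¹ * x) ^ k)) atTop (𝓝 (gmom k)) := by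
  simp only [mul_pow, bitA_smul]
  rcases Nat.even_or_odd' k with ⟨m, rfl | rfl⟩
  · rw [gmom_even]
    have hl : Tendsto (fun N : ℕ => gm m * ((N.descFactorial m : ℝ) / (N : ℝ) ^ m)) atTop
        (𝓝 (gm m)) := by
      have h := isEquivalent_descFactorial m
      rw [Asymptotics.isEquivalent_iff_tendsto_one] at h
      · simpa using h.const_mul (gm m)
      · filter_upwards [eventually_gt_atTop 0] with N hN
        positivity
    refine tendsto_of_tendsto_of_tendsto_of_le_of_le' hl tendsto_const_nhds ?_ ?_
    · filter_upwards [eventually_gt_atTop 0] with N hN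
      have hN' : (0:ℝ) < N := by exact_mod_cast hN
      rw [pow_mul, inv_pow, Real.sq_sqrt hN'.le, inv_pow, ← mul_div_assoc, ← div_eq_inv_mul]
      gcongr
      exact bitA_lower N m
    · filter_upwards [eventually_gt_atTop 0] with N hN
      have hN' : (0:ℝ) < N := by exact_mod_cast hN
      rw [pow_mul, inv_pow, Real.sq_sqrt hN'.le, inv_pow, ← div_eq_inv_mul, div_le_iff₀ (by positivity)]
      exact bitA_upper N m
  · rw [gmom_odd]
    simp [bitA_odd]

lemma bitE_prod {n : ℕ} (l : List (Fin n)) : ∀ f : Fin n → ℝ → ℝ,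
    bitE l (fun x => ∏ j, f j (x j)) = ∏ j, bitA (l.count j) (f j) := by
  induction l with
  | nil => intro f; simp [bitE, bitA]
  | cons i l ih =>
    intro f
    simp only [bitE]
    have key : ∀ c : ℝ, bitE l (fun x => ∏ j, f j ((x + (Pi.single i c : Fin n → ℝ)) j)) =
        bitA (l.count i) (fun x => f i (x + c)) *
          ∏ j ∈ Finset.univ.erase i, bitA (l.count j) (f j) := by
      intro c
      have h := ih (fun j y => f j (y + (Pi.single i c : Fin n → ℝ) j))
      simp only [Pi.add_apply]
      rw [h, ← Finset.mul_prod_erase Finset.univ _ (Finset.mem_univ i)]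
      congr 1
      · simp
      · refine Finset.prod_congr rfl fun j hj => ?_
        have hji : j ≠ i := (Finset.mem_erase.1 hj).1
        simp [hji]
    have hm : ∀ x : Fin n → ℝ, x - Pi.single i 1 = x + Pi.single i (-1) := fun x => by
      rw [Pi.single_neg, sub_eq_add_neg]
    simp only [hm]
    rw [key 1, key (-1), ← Finset.mul_prod_erase Finset.univ _ (Finset.mem_univ i)]
    have h2 : ∏ j ∈ Finset.univ.erase i, bitA ((i :: l).count j) (f j) =
        ∏ j ∈ Finset.univ.erase i, bitA (l.count j) (f j) := by
      refine Finset.prod_congr rfl fun j hj => ?_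
      have hji : j ≠ i := (Finset.mem_erase.1 hj).1
      rw [List.count_cons_of_ne hji.symm]
    rw [h2, List.count_cons_self]
    simp only [bitA, sub_eq_add_neg]
    ring

lemma exists_list (n N : ℕ) : ∃ l : List (Fin n), ∀ j, l.count j = N := by
  induction N with
  | zero => exact ⟨[], by simp⟩
  | succ N ih =>
    obtain ⟨l, hl⟩ := ih
    refine ⟨List.finRange n ++ l, fun j => ?_⟩
    rw [List.count_append, hl, List.count_eq_one_of_mem (List.nodup_finRange n) (by simp)]
    ring

lemma pow_integrable_gaussian (k : ℕ) : Integrable (fun x : ℝ => x ^ k) (gaussianReal 0 1) := by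
  have h := memLp_id_gaussianReal (μ := 0) (v := 1) (k : NNReal)
  rcases Nat.eq_zero_or_pos k with rfl | hk
  · simp
  · have := h.integrable_norm_pow (by omega)
    refine this.mono' (by fun_prop) (Filter.Eventually.of_forall fun x => ?_)
    simp

instance stdGaussian_prob (n : ℕ) : IsProbabilityMeasure (stdGaussian n) := by
  unfold _root_.stdGaussian; infer_instance

lemma eval_integrable {n : ℕ} (p : MvPolynomial (Fin n) ℝ) :
    Integrable (fun X => MvPolynomial.eval X p) (stdGaussian n) := by
  simp only [MvPolynomial.eval_eq']
  refine integrable_finsetSum _ fun a _ => Integrable.const_mul ?_ _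
  exact Integrable.fintype_prod (f := fun i (x : ℝ) => x ^ a i)
    (fun i => pow_integrable_gaussian (a i))

lemma eval_integral {n : ℕ} (p : MvPolynomial (Fin n) ℝ) :
    ∫ X, MvPolynomial.eval X p ∂(stdGaussian n) =
      ∑ a ∈ p.support, p.coeff a * ∏ i, gmom (a i) := by
  simp only [MvPolynomial.eval_eq']
  rw [integral_finsetSum]
  · refine Finset.sum_congr rfl fun a _ => ?_
    rw [integral_const_mul]
    congr 1
    exact integral_fintype_prod_eq_prod (fun i (x : ℝ) => x ^ a i)
  · intro a _
    refine Integrable.const_mul ?_ _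
    exact Integrable.fintype_prod (f := fun i (x : ℝ) => x ^ a i)
      (fun i => pow_integrable_gaussian (a i))

lemma bitE_tendsto {n : ℕ} (L : ℕ → List (Fin n)) (hL : ∀ N j, (L N).count j = N)
    (p : MvPolynomial (Fin n) ℝ) :
    Tendsto (fun N : ℕ => bitE (L N) (fun x => MvPolynomial.eval ((√(N : ℝ))⁻¹ • x) p)) atTop
      (𝓝 (∫ X, MvPolynomial.eval X p ∂(stdGaussian n))) := by
  rw [eval_integral]
  have e : ∀ N : ℕ, bitE (L N) (fun x => MvPolynomial.eval ((√(N : ℝ))⁻¹ • x) p) =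
      ∑ a ∈ p.support, p.coeff a * ∏ i, bitA N (fun x => ((√(N : ℝ))⁻¹ * x) ^ a i) := by
    intro N
    simp only [MvPolynomial.eval_eq']
    rw [bitE_sum]
    refine Finset.sum_congr rfl fun a _ => ?_
    rw [bitE_smul]
    congr 1
    have := bitE_prod (L N) (fun j x => ((√(N : ℝ))⁻¹ * x) ^ a j)
    simp only [hL] at this
    exact this
  simp only [e]
  refine tendsto_finsetSum _ fun a _ => Tendsto.const_mul _ ?_
  exact tendsto_finsetProd _ fun i _ => bitA_tendsto (a i)

lemma gauss_hyper_s4 {n d : ℕ} (p : MvPolynomial (Fin n) ℝ) (hp : p.totalDegree ≤ d) :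
    ∫ X, (MvPolynomial.eval X p) ^ 4 ∂(stdGaussian n) ≤
      9 ^ d * (∫ X, (MvPolynomial.eval X p) ^ 2 ∂(stdGaussian n)) ^ 2 := by
  choose L hL using exists_list n
  have h4 := bitE_tendsto L hL (p ^ 4)
  have h2 := bitE_tendsto L hL (p ^ 2)
  simp only [map_pow] at h4 h2
  refine le_of_tendsto_of_tendsto' h4 ((h2.pow 2).const_mul _) fun N => ?_
  exact bit_hyper (L N) d _ ((DegLT.eval p hp).scale _)

lemma integral_cs {n : ℕ} (u w : (Fin n → ℝ) → ℝ)
    (hu : Integrable (fun x => u x ^ 2) (stdGaussian n))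
    (hw : Integrable (fun x => w x ^ 2) (stdGaussian n))
    (huw : Integrable (fun x => u x * w x) (stdGaussian n)) :
    (∫ x, u x * w x ∂(stdGaussian n)) ^ 2 ≤
      (∫ x, u x ^ 2 ∂(stdGaussian n)) * ∫ x, w x ^ 2 ∂(stdGaussian n) := by
  apply quad_cs
  intro t
  have h : 0 ≤ ∫ x, (t * u x - w x) ^ 2 ∂(stdGaussian n) := integral_nonneg fun x => sq_nonneg _
  have e : (fun x => (t * u x - w x) ^ 2) =
      fun x => (t ^ 2 * u x ^ 2 + (-2 * t) * (u x * w x)) + w x ^ 2 := by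
    funext x; ring
  have ia : Integrable (fun x => t ^ 2 * u x ^ 2 + (-2 * t) * (u x * w x)) (stdGaussian n) :=
    (hu.const_mul _).add (huw.const_mul _)
  rw [e, integral_add ia hw,
    integral_add (hu.const_mul _) (huw.const_mul _), integral_const_mul, integral_const_mul] at h
  linarith

lemma abs_pow_integrable {n : ℕ} (p : MvPolynomial (Fin n) ℝ) (k : ℕ) :
    Integrable (fun X => |MvPolynomial.eval X p| ^ k) (stdGaussian n) := by
  have := (eval_integrable (p ^ k)).abs
  simpa [abs_pow] using this

lemma two_one {n d : ℕ} (p : MvPolynomial (Fin n) ℝ) (hp : p.totalDegree ≤ d) :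
    ∫ X, |MvPolynomial.eval X p| ^ 2 ∂(stdGaussian n) ≤
      9 ^ d * (∫ X, |MvPolynomial.eval X p| ∂(stdGaussian n)) ^ 2 := by
  have h4 := gauss_hyper_s4 p hp
  have i1 := abs_pow_integrable p 1
  have i2 := abs_pow_integrable p 2
  have i3 := abs_pow_integrable p 3
  have i4 := abs_pow_integrable p 4
  have e4 : ∀ X, (MvPolynomial.eval X p) ^ 4 = |MvPolynomial.eval X p| ^ 4 := fun X =>
    ((by decide : Even 4).pow_abs _).symm
  have e2 : ∀ X, (MvPolynomial.eval X p) ^ 2 = |MvPolynomial.eval X p| ^ 2 := fun X =>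
    (sq_abs _).symm
  simp only [e4, e2] at h4
  -- (E p²)² ≤ E|p| E|p|³
  have s1 : ∀ X, √|MvPolynomial.eval X p| ^ 2 = |MvPolynomial.eval X p| := fun X =>
    Real.sq_sqrt (abs_nonneg _)
  have c1 := integral_cs (fun X => √|MvPolynomial.eval X p|)
    (fun X => √|MvPolynomial.eval X p| * |MvPolynomial.eval X p|)
    (by simpa only [s1, pow_one] using i1)
    (by
      refine i3.congr (Filter.Eventually.of_forall fun X => ?_)
      simp only [mul_pow, s1]; ring)
    (by
      refine i2.congr (Filter.Eventually.of_forall fun X => ?_)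
      simp only [← mul_assoc, ← sq, s1])
  have c2 := integral_cs (fun X => |MvPolynomial.eval X p|)
    (fun X => |MvPolynomial.eval X p| ^ 2) i2
    (by simpa only [← pow_mul] using i4)
    (by
      refine i3.congr (Filter.Eventually.of_forall fun X => ?_)
      simp only; ring)
  have f1 : ∀ X, √|MvPolynomial.eval X p| * (√|MvPolynomial.eval X p| * |MvPolynomial.eval X p|)
      = |MvPolynomial.eval X p| ^ 2 := fun X => by rw [← mul_assoc, ← sq, s1, sq]
  have f2 : ∀ X, (√|MvPolynomial.eval X p| * |MvPolynomial.eval X p|) ^ 2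
      = |MvPolynomial.eval X p| ^ 3 := fun X => by rw [mul_pow, s1]; ring
  have f3 : ∀ X, |MvPolynomial.eval X p| * |MvPolynomial.eval X p| ^ 2
      = |MvPolynomial.eval X p| ^ 3 := fun X => by ring
  have f4 : ∀ X, (|MvPolynomial.eval X p| ^ 2) ^ 2
      = |MvPolynomial.eval X p| ^ 4 := fun X => by ring
  simp only [f1, f2, s1] at c1
  simp only [f3, f4] at c2
  have n1 : 0 ≤ ∫ X, |MvPolynomial.eval X p| ∂(stdGaussian n) :=
    integral_nonneg fun X => abs_nonneg _
  have n2 : 0 ≤ ∫ X, |MvPolynomial.eval X p| ^ 2 ∂(stdGaussian n) :=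
    integral_nonneg fun X => by positivity
  have n3 : 0 ≤ ∫ X, |MvPolynomial.eval X p| ^ 3 ∂(stdGaussian n) :=
    integral_nonneg fun X => by positivity
  generalize ∫ X, |MvPolynomial.eval X p| ∂(stdGaussian n) = a at *
  generalize ∫ X, |MvPolynomial.eval X p| ^ 2 ∂(stdGaussian n) = b at *
  generalize ∫ X, |MvPolynomial.eval X p| ^ 3 ∂(stdGaussian n) = c at *
  generalize ∫ X, |MvPolynomial.eval X p| ^ 4 ∂(stdGaussian n) = e at *
  have hK : (0:ℝ) < 9 ^ d := by positivity
  generalize (9:ℝ) ^ d = K at *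
  rcases n2.eq_or_lt with hb | hb
  · rw [← hb]; positivity
  · have h1 : (b ^ 2) ^ 2 ≤ (a * c) ^ 2 := pow_le_pow_left₀ (by positivity) c1 2
    have h2 : b ^ 4 ≤ a ^ 2 * (b * (K * b ^ 2)) := by
      calc b ^ 4 = (b ^ 2) ^ 2 := by ring
        _ ≤ a ^ 2 * c ^ 2 := by rw [← mul_pow]; exact h1
        _ ≤ a ^ 2 * (b * e) := by gcongr
        _ ≤ _ := by gcongr
    have h3 : b ^ 3 * b ≤ b ^ 3 * (K * a ^ 2) := by nlinarith
    exact le_of_mul_le_mul_left h3 (by positivity)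

lemma dyadic (j : ℕ) : ∃ K : ℝ, 0 < K ∧ ∀ (n d : ℕ) (p : MvPolynomial (Fin n) ℝ),
    p.totalDegree ≤ d →
    ∫ X, |MvPolynomial.eval X p| ^ (2 ^ j) ∂(stdGaussian n) ≤
      K ^ d * (∫ X, |MvPolynomial.eval X p| ∂(stdGaussian n)) ^ (2 ^ j) := by
  induction j with
  | zero => exact ⟨1, one_pos, fun n d p hp => by simp⟩
  | succ j ih =>
    obtain ⟨K, hK, h⟩ := ih
    refine ⟨9 ^ (2 ^ j) * K ^ 2, by positivity, fun n d p hp => ?_⟩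
    have h1 := h n d p hp
    have hdeg : (p ^ (2 ^ j)).totalDegree ≤ 2 ^ j * d :=
      (MvPolynomial.totalDegree_pow _ _).trans (Nat.mul_le_mul_left _ hp)
    have h2 := two_one (p ^ (2 ^ j)) hdeg
    simp only [map_pow, abs_pow, ← pow_mul] at h2
    rw [pow_succ 2 j]
    have n0 : 0 ≤ ∫ X, |MvPolynomial.eval X p| ^ (2 ^ j) ∂(stdGaussian n) :=
      integral_nonneg fun X => by positivity
    calc _ ≤ _ := h2
      _ ≤ 9 ^ (2 ^ j * d) *
          (K ^ d * (∫ X, |MvPolynomial.eval X p| ∂(stdGaussian n)) ^ (2 ^ j)) ^ 2 := by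
        gcongr
      _ = _ := by
        rw [mul_pow, mul_pow, ← pow_mul, ← pow_mul, ← pow_mul, ← pow_mul, mul_comm d 2]
        ring

lemma norm_mono {n : ℕ} (p : MvPolynomial (Fin n) ℝ) {t s : ℝ} (ht : 1 ≤ t) (hts : t ≤ s)
    (hs : Integrable (fun X => |MvPolynomial.eval X p| ^ s) (stdGaussian n)) :
    gaussNorm n t (fun X => MvPolynomial.eval X p) ≤
      gaussNorm n s (fun X => MvPolynomial.eval X p) := by
  have hm : AEStronglyMeasurable (fun X => MvPolynomial.eval X p) (stdGaussian n) :=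
    (eval_integrable p).1
  have t0 : 0 < t := by linarith
  have s0 : 0 < s := by linarith
  have Ls : MemLp (fun X => MvPolynomial.eval X p) (ENNReal.ofReal s) (stdGaussian n) := by
    rw [← integrable_norm_rpow_iff hm (by simpa using s0) (by simp)]
    simpa [ENNReal.toReal_ofReal s0.le] using hs
  have Lt := Ls.mono_exponent (ENNReal.ofReal_le_ofReal hts)
  have key := eLpNorm_le_eLpNorm_of_exponent_le (ENNReal.ofReal_le_ofReal hts) hm
  rw [Lt.eLpNorm_eq_integral_rpow_norm (by simpa using t0) (by simp),
    Ls.eLpNorm_eq_integral_rpow_norm (by simpa using s0) (by simp),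
    ENNReal.ofReal_le_ofReal_iff (by positivity)] at key
  simpa [gaussNorm, ENNReal.toReal_ofReal s0.le, ENNReal.toReal_ofReal t0.le] using key

end Helpers

/-- For every `t ≥ 1` there is `C(t) > 0` with `|p|_t ≤ C(t)^d |p|_1` for all
degree-`d` polynomials. -/
theorem stmt4 (t : ℝ) (ht : 1 ≤ t) :
    ∃ C > (0:ℝ),
      ∀ (n d : ℕ) (p : MvPolynomial (Fin n) ℝ), p.totalDegree ≤ d →
        gaussNorm n t (fun X => MvPolynomial.eval X p) ≤
          C ^ d * gaussNorm n 1 (fun X => MvPolynomial.eval X p) := by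
  obtain ⟨j, hj⟩ : ∃ j : ℕ, t ≤ 2 ^ j := by
    obtain ⟨j, hj⟩ := pow_unbounded_of_one_lt t (by norm_num : (1:ℝ) < 2)
    exact ⟨j, hj.le⟩
  obtain ⟨K, hK, h⟩ := dyadic j
  refine ⟨K ^ (1 / (2 ^ j : ℝ)), by positivity, fun n d p hp => ?_⟩
  have hcast : ((2 ^ j : ℕ) : ℝ) = 2 ^ j := by push_cast; rfl
  have hpow : ∀ y : ℝ, y ^ (2 ^ j : ℝ) = y ^ (2 ^ j : ℕ) := fun y => by
    rw [← hcast, Real.rpow_natCast]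
  have hi : Integrable (fun X => |MvPolynomial.eval X p| ^ (2 ^ j : ℝ)) (stdGaussian n) := by
    simpa only [hpow] using abs_pow_integrable p (2 ^ j)
  refine (norm_mono p ht hj hi).trans ?_
  have n1 : 0 ≤ ∫ X, |MvPolynomial.eval X p| ∂(stdGaussian n) :=
    integral_nonneg fun X => abs_nonneg _
  have n2 : 0 ≤ ∫ X, |MvPolynomial.eval X p| ^ (2 ^ j) ∂(stdGaussian n) :=
    integral_nonneg fun X => by positivity
  simp only [gaussNorm, hpow, Real.rpow_one, div_one]
  calc _ ≤ (K ^ d * (∫ X, |MvPolynomial.eval X p| ∂(stdGaussian n)) ^ (2 ^ j)) ^ (1 / (2 ^ j : ℝ)) :=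
        Real.rpow_le_rpow n2 (h n d p hp) (by positivity)
    _ = _ := by
      rw [Real.mul_rpow (by positivity) (by positivity)]
      congr 1
      · rw [← Real.rpow_natCast K d, ← Real.rpow_mul hK.le, mul_comm, Real.rpow_mul hK.le,
          Real.rpow_natCast]
      · rw [← hcast, one_div, Real.pow_rpow_inv_natCast n1 (by positivity)]
end

section
/- Let X and Y be independent standard Gaussian vectors (on ℝ^{n₁} and ℝ^{n₂} respectively), let p(X,Y) and q(X,Y) be polynomials of degree at most d in the coordinates of (X,Y), and let ε > 0. Then Pr_Y( |p(X,Y)|_{2,X} < ε · |q(X,Y)|_{2,X} ) ≤ 4 · 9^d · Pr_{X,Y}( |p(X,Y)| < 4 · 3^d · ε · |q(X,Y)| ). -/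
open MeasureTheory ProbabilityTheory

/-- Partial `L²` norm over `X` of a polynomial in `(X, Y)`. -/
noncomputable def partialL2 (n₁ n₂ : ℕ) (r : MvPolynomial (Fin n₁ ⊕ Fin n₂) ℝ)
    (Y : Fin n₂ → ℝ) : ℝ :=
  Real.sqrt (∫ X, (MvPolynomial.eval (Sum.elim X Y) r) ^ 2 ∂(stdGaussian n₁))

open scoped ENNReal

noncomputable abbrev gam (n : ℕ) : Measure (Fin n → ℝ) := stdGaussian n

instance gam_prob (n : ℕ) : IsProbabilityMeasure (stdGaussian n) := by
  unfold _root_.stdGaussian; infer_instance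

/-- quadratic form of the characteristic function -/
noncomputable def QF {n : ℕ} (L : StrongDual ℝ (Fin n → ℝ)) : ℝ :=
  ∑ i, (L (Pi.single i 1)) ^ 2

lemma gam_charFunDual {n : ℕ} (L : StrongDual ℝ (Fin n → ℝ)) :
    charFunDual (gam n) L = Complex.exp (-(QF L : ℝ) / 2) := by
  have h1 : ∀ x : Fin n → ℝ, L x = ∑ i, L (Pi.single i 1) * x i := by
    intro x
    conv_lhs => rw [← Finset.univ_sum_single x]
    rw [map_sum]
    refine Finset.sum_congr rfl fun i _ => ?_
    have : (Pi.single i (x i) : Fin n → ℝ) = x i • Pi.single i 1 := by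
      rw [← Pi.single_smul]; simp
    rw [this, map_smul]; simp [mul_comm]
  rw [charFunDual_apply]
  have h2 : ∀ x : Fin n → ℝ, Complex.exp (L x * Complex.I)
      = ∏ i, Complex.exp ((L (Pi.single i 1) : ℝ) * x i * Complex.I) := by
    intro x
    rw [← Complex.exp_sum, h1 x, ← Finset.sum_mul]; push_cast; rfl
  simp_rw [h2]
  unfold gam _root_.stdGaussian
  rw [integral_fintype_prod_eq_prod (𝕜 := ℂ) (fun i (t:ℝ) => Complex.exp ((L (Pi.single i 1) : ℝ) * t * Complex.I))]
  have h3 : ∀ c : ℝ, ∫ t, Complex.exp ((c:ℝ) * t * Complex.I) ∂(gaussianReal 0 1) = Complex.exp (-(c:ℂ)^2/2) := by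
    intro c
    have := charFun_gaussianReal (μ := 0) (v := 1) c
    rw [charFun_apply_real] at this
    rw [this]; congr 1; simp; ring
  simp_rw [h3]
  rw [← Complex.exp_sum, QF]
  congr 1
  push_cast
  rw [← Finset.sum_neg_distrib, Finset.sum_div]


lemma split2 {E F : Type*} [NormedAddCommGroup E] [NormedSpace ℝ E] [NormedAddCommGroup F]
    [NormedSpace ℝ F] (L : StrongDual ℝ (E × F)) (x : E) (y : F) :
    L (x, y) = L.comp (.inl ℝ E F) x + L.comp (.inr ℝ E F) y := by
  simp [← map_add]

lemma law_one {n : ℕ} (a : ℝ) (ha : a ^ 2 = 1 / 3) :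
    ((gam n).prod ((gam n).prod (gam n))).map
      (fun x : (Fin n → ℝ) × (Fin n → ℝ) × (Fin n → ℝ) => a • (x.1 + x.2.1 + x.2.2)) = gam n := by
  let A : (Fin n → ℝ) × (Fin n → ℝ) × (Fin n → ℝ) →L[ℝ] (Fin n → ℝ) :=
    a • (ContinuousLinearMap.fst ℝ (Fin n → ℝ) ((Fin n → ℝ) × (Fin n → ℝ))
      + ((ContinuousLinearMap.fst ℝ (Fin n → ℝ) (Fin n → ℝ)).comp (ContinuousLinearMap.snd ℝ (Fin n → ℝ) ((Fin n → ℝ) × (Fin n → ℝ))))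
      + ((ContinuousLinearMap.snd ℝ (Fin n → ℝ) (Fin n → ℝ)).comp (ContinuousLinearMap.snd ℝ (Fin n → ℝ) ((Fin n → ℝ) × (Fin n → ℝ)))))
  change Measure.map (A : (Fin n → ℝ) × (Fin n → ℝ) × (Fin n → ℝ) → (Fin n → ℝ)) ((gam n).prod ((gam n).prod (gam n))) = (gam n)
  apply Measure.ext_of_charFunDual
  ext L
  rw [charFunDual_map]
  simp_rw [charFunDual_prod, gam_charFunDual, ← Complex.exp_add]
  congr 1
  rw [← add_div, ← add_div]
  congr 1
  norm_cast
  simp only [QF, ← Finset.sum_add_distrib, ← Finset.sum_neg_distrib]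
  refine Finset.sum_congr rfl fun i _ => ?_
  simp [A]
  linear_combination (-3 * (L (Pi.single i 1)) ^ 2) * ha

lemma law_two {n : ℕ} (a b : ℝ) (ha : a ^ 2 = 1 / 3) (hb : b ^ 2 = 2 / 3) :
    ((gam n).prod (gam n)).map
      (fun x : (Fin n → ℝ) × (Fin n → ℝ) => (a • x.1 + b • x.2, x.1)) =
    ((gam n).prod (gam n)).map
      (fun x : (Fin n → ℝ) × (Fin n → ℝ) => (x.1, a • x.1 + b • x.2)) := by
  let E := Fin n → ℝ
  let A : E × E →L[ℝ] E := a • (.fst ℝ E E) + b • (.snd ℝ E E)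
  let B : E × E →L[ℝ] E := .fst ℝ E E
  change Measure.map (A.prod B) _ = Measure.map (B.prod A) _
  apply Measure.ext_of_charFunDual
  ext L
  rw [charFunDual_map, charFunDual_map]
  simp_rw [charFunDual_prod, gam_charFunDual, ← Complex.exp_add]
  congr 1
  rw [← add_div, ← add_div]
  congr 1
  norm_cast
  simp only [QF, ← Finset.sum_add_distrib, ← Finset.sum_neg_distrib]
  refine Finset.sum_congr rfl fun i _ => ?_
  simp [A, B]
  simp only [split2 L, map_smul, map_zero, add_zero, smul_eq_mul]
  set u := (L.comp (.inl ℝ E E)) (Pi.single i 1)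
  set v := (L.comp (.inr ℝ E E)) (Pi.single i 1)
  linear_combination (v ^ 2 - u ^ 2) * (ha + hb)

set_option maxHeartbeats 1000000 in
lemma law_quad {n : ℕ} (a b : ℝ) (ha : a ^ 2 = 1 / 3) (hb : b ^ 2 = 2 / 3) :
    ((gam n).prod ((gam n).prod ((gam n).prod ((gam n).prod (gam n))))).map
      (fun x : (Fin n → ℝ) × (Fin n → ℝ) × (Fin n → ℝ) × (Fin n → ℝ) × (Fin n → ℝ) =>
        (a • x.1 + b • x.2.1, a • x.1 + b • x.2.2.1, a • x.1 + b • x.2.2.2.1,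
          a • x.1 + b • x.2.2.2.2))
    = ((gam n).prod ((gam n).prod ((gam n).prod ((gam n).prod ((gam n).prod (gam n)))))).map
      (fun x : (Fin n → ℝ) × (Fin n → ℝ) × (Fin n → ℝ) × (Fin n → ℝ) × (Fin n → ℝ) × (Fin n → ℝ) =>
        (a • (x.1 + x.2.2.1 + x.2.2.2.2.1), a • (x.1 + x.2.2.2.1 + x.2.2.2.2.2),
         a • (x.2.1 + x.2.2.1 + x.2.2.2.2.2), a • (x.2.1 + x.2.2.2.1 + x.2.2.2.2.1))) := by
  let E := Fin n → ℝ
  let S2 : E × E →L[ℝ] E := .snd ℝ E E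
  let S3 : E × E × E →L[ℝ] E × E := .snd ℝ E (E × E)
  let S4 : E × E × E × E →L[ℝ] E × E × E := .snd ℝ E (E × E × E)
  let S5 : E × E × E × E × E →L[ℝ] E × E × E × E := .snd ℝ E (E × E × E × E)
  let S6 : E × E × E × E × E × E →L[ℝ] E × E × E × E × E := .snd ℝ E (E × E × E × E × E)
  let F2 : E × E →L[ℝ] E := .fst ℝ E E
  let F3 : E × E × E →L[ℝ] E := .fst ℝ E (E × E)
  let F4 : E × E × E × E →L[ℝ] E := .fst ℝ E (E × E × E)
  let F5 : E × E × E × E × E →L[ℝ] E := .fst ℝ E (E × E × E × E)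
  let F6 : E × E × E × E × E × E →L[ℝ] E := .fst ℝ E (E × E × E × E × E)
  let A : E × E × E × E × E →L[ℝ] E × E × E × E :=
    (a • F5 + b • (F4.comp S5)).prod ((a • F5 + b • (F3.comp (S4.comp S5))).prod
      ((a • F5 + b • (F2.comp (S3.comp (S4.comp S5)))).prod
      (a • F5 + b • (S2.comp (S3.comp (S4.comp S5))))))
  let x1 := F6
  let x2 := F5.comp S6
  let x3 := F4.comp (S5.comp S6)
  let x4 := F3.comp (S4.comp (S5.comp S6))
  let x5 := F2.comp (S3.comp (S4.comp (S5.comp S6)))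
  let x6 := S2.comp (S3.comp (S4.comp (S5.comp S6)))
  let B : E × E × E × E × E × E →L[ℝ] E × E × E × E :=
    (a • (x1 + x3 + x5)).prod ((a • (x1 + x4 + x6)).prod
      ((a • (x2 + x3 + x6)).prod (a • (x2 + x4 + x5))))
  change Measure.map A _ = Measure.map B _
  apply Measure.ext_of_charFunDual
  ext L
  rw [charFunDual_map, charFunDual_map]
  simp_rw [charFunDual_prod, gam_charFunDual, ← Complex.exp_add]
  congr 1
  simp only [← add_div]
  congr 1
  norm_cast
  simp only [QF, ← Finset.sum_add_distrib, ← Finset.sum_neg_distrib]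
  refine Finset.sum_congr rfl fun i _ => ?_
  simp [A, B, x1, x2, x3, x4, x5, x6, F2, F3, F4, F5, F6, S2, S3, S4, S5, S6]
  have hs : ∀ x y z w, L (x, y, z, w) = L (x, 0, 0, 0) + L (0, y, 0, 0) + L (0, 0, z, 0)
      + L (0, 0, 0, w) := by
    intro x y z w; simp [← map_add]
  have e1 : ∀ x, L (a • x, 0, 0, 0) = a * L (x, 0, 0, 0) := by
    intro x; rw [← smul_eq_mul, ← map_smul]; simp
  have e2 : ∀ x, L (0, a • x, 0, 0) = a * L (0, x, 0, 0) := by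
    intro x; rw [← smul_eq_mul, ← map_smul]; simp
  have e3 : ∀ x, L (0, 0, a • x, 0) = a * L (0, 0, x, 0) := by
    intro x; rw [← smul_eq_mul, ← map_smul]; simp
  have e4 : ∀ x, L (0, 0, 0, a • x) = a * L (0, 0, 0, x) := by
    intro x; rw [← smul_eq_mul, ← map_smul]; simp
  have f1 : ∀ x, L (b • x, 0, 0, 0) = b * L (x, 0, 0, 0) := by
    intro x; rw [← smul_eq_mul, ← map_smul]; simp
  have f2 : ∀ x, L (0, b • x, 0, 0) = b * L (0, x, 0, 0) := by
    intro x; rw [← smul_eq_mul, ← map_smul]; simp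
  have f3 : ∀ x, L (0, 0, b • x, 0) = b * L (0, 0, x, 0) := by
    intro x; rw [← smul_eq_mul, ← map_smul]; simp
  have f4 : ∀ x, L (0, 0, 0, b • x) = b * L (0, 0, 0, x) := by
    intro x; rw [← smul_eq_mul, ← map_smul]; simp
  have h0 : L (0, 0, 0, 0) = 0 := map_zero L
  rw [hs (a • _) (a • _) (a • _) (a • _), hs (a • _) (a • _) 0 0, hs 0 0 (a • _) (a • _),
    hs (a • _) 0 (a • _) 0, hs 0 (a • _) 0 (a • _), hs (a • _) 0 0 (a • _), hs 0 (a • _) (a • _) 0]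
  simp only [e1, e2, e3, e4, f1, f2, f3, f4, h0]
  generalize L (Pi.single i 1, 0, 0, 0) = p
  generalize L (0, Pi.single i 1, 0, 0) = q
  generalize L (0, 0, Pi.single i 1, 0) = r
  generalize L (0, 0, 0, Pi.single i 1) = s
  ring_nf
  simp only [ha, hb]
  ring

lemma lint_CS {α : Type*} [MeasurableSpace α] (μ : Measure α) {f g : α → ℝ≥0∞}
    (hf : Measurable f) (hg : Measurable g) :
    (∫⁻ x, f x * g x ∂μ) ^ 2 ≤ (∫⁻ x, f x ^ 2 ∂μ) * (∫⁻ x, g x ^ 2 ∂μ) := by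
  have h := ENNReal.lintegral_mul_le_Lp_mul_Lq μ Real.HolderConjugate.two_two
    hf.aemeasurable hg.aemeasurable
  have h2 := pow_le_pow_left' h 2
  refine h2.trans (le_of_eq ?_)
  rw [mul_pow, ← ENNReal.rpow_natCast, ← ENNReal.rpow_natCast (_ ^ _), ← ENNReal.rpow_mul,
    ← ENNReal.rpow_mul]
  norm_num

lemma ennreal_amgm (a b : ℝ≥0∞) : 2 * (a * b) ≤ a ^ 2 + b ^ 2 := by
  rcases eq_or_ne a ⊤ with rfl | ha
  · simp
  rcases eq_or_ne b ⊤ with rfl | hb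
  · simp
  lift a to NNReal using ha
  lift b to NNReal using hb
  norm_cast
  rw [← mul_assoc]
  exact two_mul_le_add_sq a b

lemma tetra {E : Type*} [MeasurableSpace E] (γ : Measure E) [SFinite γ] (F : E × E × E → ℝ≥0∞)
    (hF : Measurable F) :
    ∫⁻ x : E × E × E × E × E × E,
      F (x.1, x.2.2.1, x.2.2.2.2.1) * (F (x.1, x.2.2.2.1, x.2.2.2.2.2) *
       (F (x.2.1, x.2.2.1, x.2.2.2.2.2) * F (x.2.1, x.2.2.2.1, x.2.2.2.2.1)))
       ∂(γ.prod (γ.prod (γ.prod (γ.prod (γ.prod γ)))))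
    ≤ (∫⁻ x, F x ^ 2 ∂(γ.prod (γ.prod γ))) ^ 2 := by
  let K : E × E × E × E → ℝ≥0∞ := fun y => ∫⁻ u, F (y.1, y.2.1, u) * F (y.2.2.1, y.2.2.2, u) ∂γ
  have hK : Measurable K := by
    apply Measurable.lintegral_prod_right'
      (f := fun z : (E × E × E × E) × E => F (z.1.1, z.1.2.1, z.2) * F (z.1.2.2.1, z.1.2.2.2, z.2))
    fun_prop
  let D : E × E → ℝ≥0∞ := fun y => ∫⁻ u, F (y.1, y.2, u) ^ 2 ∂γ
  have hD : Measurable D := by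
    apply Measurable.lintegral_prod_right'
      (f := fun z : (E × E) × E => F (z.1.1, z.1.2, z.2) ^ 2)
    fun_prop
  have hKD : ∀ y, K y ^ 2 ≤ D (y.1, y.2.1) * D (y.2.2.1, y.2.2.2) := by
    intro y
    exact lint_CS γ (by fun_prop) (by fun_prop)
  have hDF : ∫⁻ x, F x ^ 2 ∂(γ.prod (γ.prod γ)) = ∫⁻ v, ∫⁻ w, D (v, w) ∂γ ∂γ := by
    rw [lintegral_prod _ (by fun_prop)]
    refine lintegral_congr fun v => ?_
    rw [lintegral_prod _ (by fun_prop)]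
  have hL : ∫⁻ x : E × E × E × E × E × E,
      F (x.1, x.2.2.1, x.2.2.2.2.1) * (F (x.1, x.2.2.2.1, x.2.2.2.2.2) *
       (F (x.2.1, x.2.2.1, x.2.2.2.2.2) * F (x.2.1, x.2.2.2.1, x.2.2.2.2.1)))
       ∂(γ.prod (γ.prod (γ.prod (γ.prod (γ.prod γ)))))
      = ∫⁻ v1, ∫⁻ v2, ∫⁻ w1, ∫⁻ w2, K (v1, w1, v2, w2) * K (v1, w2, v2, w1) ∂γ ∂γ ∂γ ∂γ := by
    rw [lintegral_prod _ (by fun_prop)]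
    refine lintegral_congr fun v1 => ?_
    rw [lintegral_prod _ (by fun_prop)]
    refine lintegral_congr fun v2 => ?_
    rw [lintegral_prod _ (by fun_prop)]
    refine lintegral_congr fun w1 => ?_
    rw [lintegral_prod _ (by fun_prop)]
    refine lintegral_congr fun w2 => ?_
    rw [← lintegral_prod_mul (by fun_prop) (by fun_prop)]
    refine lintegral_congr fun u => ?_
    ring
  have hI : ∫⁻ v1, ∫⁻ v2, ∫⁻ w1, ∫⁻ w2, K (v1, w1, v2, w2) ^ 2 ∂γ ∂γ ∂γ ∂γ
      ≤ (∫⁻ v, ∫⁻ w, D (v, w) ∂γ ∂γ) ^ 2 := by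
    have h1 : ∫⁻ v1, ∫⁻ v2, ∫⁻ w1, ∫⁻ w2, K (v1, w1, v2, w2) ^ 2 ∂γ ∂γ ∂γ ∂γ
      ≤ ∫⁻ v1, ∫⁻ v2, ∫⁻ w1, ∫⁻ w2, D (v1, w1) * D (v2, w2) ∂γ ∂γ ∂γ ∂γ := by
      gcongr
      exact hKD _
    refine h1.trans (le_of_eq ?_)
    have hm : Measurable fun v => ∫⁻ w, D (v, w) ∂γ := hD.lintegral_prod_right'
    have h2 : ∀ v1 v2, ∫⁻ w1, ∫⁻ w2, D (v1, w1) * D (v2, w2) ∂γ ∂γ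
        = (∫⁻ w, D (v1, w) ∂γ) * (∫⁻ w, D (v2, w) ∂γ) := by
      intro v1 v2
      rw [← lintegral_prod_mul (by fun_prop) (by fun_prop), lintegral_prod _ (by fun_prop)]
    simp_rw [h2]
    rw [sq, ← lintegral_prod_mul hm.aemeasurable hm.aemeasurable, lintegral_prod _ (by fun_prop)]
  have hI' : ∫⁻ v1, ∫⁻ v2, ∫⁻ w1, ∫⁻ w2, K (v1, w2, v2, w1) ^ 2 ∂γ ∂γ ∂γ ∂γ
      = ∫⁻ v1, ∫⁻ v2, ∫⁻ w1, ∫⁻ w2, K (v1, w1, v2, w2) ^ 2 ∂γ ∂γ ∂γ ∂γ := by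
    refine lintegral_congr fun v1 => lintegral_congr fun v2 => ?_
    rw [lintegral_lintegral_swap (by fun_prop)]
  rw [hL, hDF]
  set J := ∫⁻ v1, ∫⁻ v2, ∫⁻ w1, ∫⁻ w2, K (v1, w1, v2, w2) * K (v1, w2, v2, w1) ∂γ ∂γ ∂γ ∂γ
    with hJ
  set I := ∫⁻ v1, ∫⁻ v2, ∫⁻ w1, ∫⁻ w2, K (v1, w1, v2, w2) ^ 2 ∂γ ∂γ ∂γ ∂γ with hIdef
  refine le_trans ?_ hI
  have h2 : 2 * J ≤ 2 * I := by
    have e1 : 2 * J = ∫⁻ x : E × E × E × E, 2 * (K (x.1, x.2.2.1, x.2.1, x.2.2.2)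
        * K (x.1, x.2.2.2, x.2.1, x.2.2.1)) ∂(γ.prod (γ.prod (γ.prod γ))) := by
      rw [lintegral_const_mul _ (by fun_prop), hJ]
      congr 1
      rw [lintegral_prod _ (by fun_prop)]
      refine lintegral_congr fun v1 => ?_
      rw [lintegral_prod _ (by fun_prop)]
      refine lintegral_congr fun v2 => ?_
      rw [lintegral_prod _ (by fun_prop)]
    have e2 : 2 * I = ∫⁻ x : E × E × E × E, (K (x.1, x.2.2.1, x.2.1, x.2.2.2) ^ 2
        + K (x.1, x.2.2.2, x.2.1, x.2.2.1) ^ 2) ∂(γ.prod (γ.prod (γ.prod γ))) := by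
      rw [lintegral_add_left (by fun_prop), two_mul]
      congr 1
      · rw [lintegral_prod _ (by fun_prop)]
        refine lintegral_congr fun v1 => ?_
        rw [lintegral_prod _ (by fun_prop)]
        refine lintegral_congr fun v2 => ?_
        rw [lintegral_prod _ (by fun_prop)]
      · rw [← hI', lintegral_prod _ (by fun_prop)]
        refine lintegral_congr fun v1 => ?_
        rw [lintegral_prod _ (by fun_prop)]
        refine lintegral_congr fun v2 => ?_
        rw [lintegral_prod _ (by fun_prop)]
    rw [e1, e2]
    exact lintegral_mono fun x => ennreal_amgm _ _
  exact (ENNReal.mul_le_mul_iff_right (by simp) (by simp)).1 h2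

lemma hyper_lint {n : ℕ} (a b : ℝ) (ha : a ^ 2 = 1 / 3) (hb : b ^ 2 = 2 / 3)
    (f : (Fin n → ℝ) → ℝ≥0∞) (hf : Measurable f) :
    ∫⁻ z, (∫⁻ w, f (a • z + b • w) ∂(gam n)) ^ 4 ∂(gam n) ≤ (∫⁻ x, f x ^ 2 ∂(gam n)) ^ 2 := by
  have hG : Measurable fun y : (Fin n → ℝ) × (Fin n → ℝ) × (Fin n → ℝ) × (Fin n → ℝ) =>
      f y.1 * (f y.2.1 * (f y.2.2.1 * f y.2.2.2)) := by fun_prop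
  have h1 : ∫⁻ z, (∫⁻ w, f (a • z + b • w) ∂(gam n)) ^ 4 ∂(gam n) =
      ∫⁻ y, f y.1 * (f y.2.1 * (f y.2.2.1 * f y.2.2.2)) ∂(
        ((gam n).prod ((gam n).prod ((gam n).prod ((gam n).prod (gam n))))).map
      (fun x : (Fin n → ℝ) × (Fin n → ℝ) × (Fin n → ℝ) × (Fin n → ℝ) × (Fin n → ℝ) =>
        (a • x.1 + b • x.2.1, a • x.1 + b • x.2.2.1, a • x.1 + b • x.2.2.2.1,
          a • x.1 + b • x.2.2.2.2))) := by
    rw [lintegral_map hG (by fun_prop), lintegral_prod _ (by fun_prop)]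
    refine lintegral_congr fun z => ?_
    set g : (Fin n → ℝ) → ℝ≥0∞ := fun w => f (a • z + b • w) with hg
    have hgm : Measurable g := by fun_prop
    change (∫⁻ w, g w ∂(gam n)) ^ 4 =
      ∫⁻ x : (Fin n → ℝ) × (Fin n → ℝ) × (Fin n → ℝ) × (Fin n → ℝ),
        g x.1 * (g x.2.1 * (g x.2.2.1 * g x.2.2.2))
        ∂((gam n).prod ((gam n).prod ((gam n).prod (gam n))))
    have m1 := lintegral_prod_mul (μ := gam n) (ν := gam n) hgm.aemeasurable hgm.aemeasurable
    have hg2 : Measurable fun x : (Fin n → ℝ) × (Fin n → ℝ) => g x.1 * g x.2 := by fun_prop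
    have m2 := lintegral_prod_mul (μ := gam n) (ν := (gam n).prod (gam n))
      hgm.aemeasurable hg2.aemeasurable
    have hg3 : Measurable fun x : (Fin n → ℝ) × (Fin n → ℝ) × (Fin n → ℝ) =>
      g x.1 * (g x.2.1 * g x.2.2) := by fun_prop
    have m3 := lintegral_prod_mul (μ := gam n) (ν := (gam n).prod ((gam n).prod (gam n)))
      hgm.aemeasurable hg3.aemeasurable
    rw [m3, m2, m1]
    ring
  rw [h1, law_quad a b ha hb, lintegral_map hG (by fun_prop)]
  refine (tetra (gam n) (fun x => f (a • (x.1 + x.2.1 + x.2.2))) (by fun_prop)).trans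
    (le_of_eq ?_)
  congr 1
  conv_rhs => rw [← law_one a ha]
  rw [lintegral_map (by fun_prop) (by fun_prop)]

open MvPolynomial in
lemma poly_integrable {n : ℕ} (p : MvPolynomial (Fin n) ℝ) :
    Integrable (fun x => eval x p) (gam n) := by
  induction p using MvPolynomial.induction_on' with
  | monomial s c =>
    simp only [eval_monomial]
    refine Integrable.const_mul ?_ c
    have : ∀ x : Fin n → ℝ, (s.prod fun i e => x i ^ e) = ∏ i, x i ^ s i := by
      intro x
      rw [Finsupp.prod_fintype]; simp
    simp_rw [this]
    unfold gam _root_.stdGaussian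
    refine Integrable.fintype_prod (f := fun i (t : ℝ) => t ^ s i) fun i => ?_
    have h := (memLp_id_gaussianReal (μ := 0) (v := 1) (s i : NNReal))
    have h2 := MemLp.integrable_norm_pow' (p := s i) (by simpa using h)
    refine (integrable_norm_iff (by fun_prop)).1 ?_
    simpa using h2
  | add p q hp hq =>
    simp only [map_add]
    exact hp.add hq

lemma poly_meas {σ : Type*} [Finite σ] (p : MvPolynomial σ ℝ) :
    Measurable (fun x : σ → ℝ => MvPolynomial.eval x p) := by
  induction p using MvPolynomial.induction_on with
  | C a => simp
  | add p q hp hq =>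
    simp only [map_add]
    exact hp.add hq
  | mul_X p i hp =>
    simp only [map_mul, MvPolynomial.eval_X]
    exact hp.mul (measurable_pi_apply i)

lemma poly_memLp {n : ℕ} (p : MvPolynomial (Fin n) ℝ) :
    MemLp (fun x => MvPolynomial.eval x p) 2 (gam n) := by
  rw [memLp_two_iff_integrable_sq (poly_meas p).aestronglyMeasurable]
  simp only [sq]
  simpa only [map_mul] using poly_integrable (p * p)

lemma poly_mul_integrable {n : ℕ} (p q : MvPolynomial (Fin n) ℝ) :
    Integrable (fun x => MvPolynomial.eval x p * MvPolynomial.eval x q) (gam n) := by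
  simpa only [map_mul] using poly_integrable (p * q)

/-- The Mehler averaging of a polynomial. -/
noncomputable def Tp {n : ℕ} (a b : ℝ) (p : MvPolynomial (Fin n) ℝ) (z : Fin n → ℝ) : ℝ :=
  ∫ w, MvPolynomial.eval (a • z + b • w) p ∂(gam n)

lemma Tp_integrable {n : ℕ} (a b : ℝ) (p : MvPolynomial (Fin n) ℝ) (z : Fin n → ℝ) :
    Integrable (fun w => MvPolynomial.eval (a • z + b • w) p) (gam n) := by
  have := poly_integrable (MvPolynomial.aeval
    (fun i => MvPolynomial.C (a * z i) + MvPolynomial.C b * MvPolynomial.X i) p :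
      MvPolynomial (Fin n) ℝ)
  refine this.congr (Filter.Eventually.of_forall fun w => ?_)
  simp only
  rw [MvPolynomial.aeval_def, MvPolynomial.eval_eval₂, MvPolynomial.eval, MvPolynomial.coe_eval₂Hom]
  congr 1
  · ext; simp
  · ext i; simp

lemma Tp_add {n : ℕ} (a b : ℝ) (p q : MvPolynomial (Fin n) ℝ) (z : Fin n → ℝ) :
    Tp a b (p + q) z = Tp a b p z + Tp a b q z := by
  simp only [Tp, map_add]
  exact integral_add (Tp_integrable a b p z) (Tp_integrable a b q z)

lemma Tp_C_mul {n : ℕ} (a b c : ℝ) (p : MvPolynomial (Fin n) ℝ) (z : Fin n → ℝ) :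
    Tp a b (MvPolynomial.C c * p) z = c * Tp a b p z := by
  simp only [Tp, map_mul, MvPolynomial.eval_C]
  exact integral_const_mul _ _

lemma law_snd {n : ℕ} (a b : ℝ) (ha : a ^ 2 = 1 / 3) (hb : b ^ 2 = 2 / 3) :
    ((gam n).prod (gam n)).map
      (fun x : (Fin n → ℝ) × (Fin n → ℝ) => a • x.1 + b • x.2) = gam n := by
  have h := congrArg (Measure.map Prod.fst) (law_two (n := n) a b ha hb)
  rw [Measure.map_map (by fun_prop) (by fun_prop), Measure.map_map (by fun_prop) (by fun_prop)] at h
  refine Eq.trans h ?_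
  change Measure.map Prod.fst _ = _
  rw [Measure.map_fst_prod]; simp

lemma joint_integrable {n : ℕ} (a b : ℝ) (ha : a ^ 2 = 1 / 3) (hb : b ^ 2 = 2 / 3)
    (p q : MvPolynomial (Fin n) ℝ) :
    Integrable (fun x : (Fin n → ℝ) × (Fin n → ℝ) =>
      MvPolynomial.eval (a • x.1 + b • x.2) p * MvPolynomial.eval x.1 q)
      ((gam n).prod (gam n)) := by
  have h1 : MemLp (fun x : (Fin n → ℝ) × (Fin n → ℝ) => MvPolynomial.eval (a • x.1 + b • x.2) p) 2
      ((gam n).prod (gam n)) := by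
    have h := poly_memLp p
    rw [← law_snd a b ha hb] at h
    exact h.comp_of_map (by fun_prop)
  have h2 : MemLp (fun x : (Fin n → ℝ) × (Fin n → ℝ) => MvPolynomial.eval x.1 q) 2
      ((gam n).prod (gam n)) := (poly_memLp q).comp_fst _
  exact h1.integrable_mul h2

lemma Tp_symm {n : ℕ} (a b : ℝ) (ha : a ^ 2 = 1 / 3) (hb : b ^ 2 = 2 / 3)
    (p q : MvPolynomial (Fin n) ℝ) :
    ∫ z, Tp a b p z * MvPolynomial.eval z q ∂(gam n)
      = ∫ z, MvPolynomial.eval z p * Tp a b q z ∂(gam n) := by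
  have h1 : ∀ p q : MvPolynomial (Fin n) ℝ, ∫ z, Tp a b p z * MvPolynomial.eval z q ∂(gam n)
      = ∫ x : (Fin n → ℝ) × (Fin n → ℝ),
      MvPolynomial.eval (a • x.1 + b • x.2) p * MvPolynomial.eval x.1 q
      ∂((gam n).prod (gam n)) := by
    intro p q
    rw [integral_prod _ (joint_integrable a b ha hb p q)]
    refine integral_congr_ae (Filter.Eventually.of_forall fun z => ?_)
    simp only [Tp]
    rw [integral_mul_const]
  simp_rw [mul_comm (MvPolynomial.eval _ p) (Tp a b q _)]
  rw [h1, h1]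
  have hm : Measurable (fun y : (Fin n → ℝ) × (Fin n → ℝ) =>
      MvPolynomial.eval y.1 p * MvPolynomial.eval y.2 q) :=
    ((poly_meas p).comp measurable_fst).mul ((poly_meas q).comp measurable_snd)
  have e1 := integral_map (μ := (gam n).prod (gam n)) (φ := fun x : (Fin n → ℝ) × (Fin n → ℝ) =>
    (a • x.1 + b • x.2, x.1)) (by fun_prop) hm.aestronglyMeasurable
  have e2 := integral_map (μ := (gam n).prod (gam n)) (φ := fun x : (Fin n → ℝ) × (Fin n → ℝ) =>
    (x.1, a • x.1 + b • x.2)) (by fun_prop) hm.aestronglyMeasurable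
  rw [law_two a b ha hb] at e1
  rw [← e1, e2]
  simp_rw [mul_comm]

/-- Separated functions with small degree in the first variable. -/
def SepSub (n k : ℕ) : Submodule ℝ ((Fin n → ℝ) × (Fin n → ℝ) → ℝ) :=
  Submodule.span ℝ {F | ∃ m r : MvPolynomial (Fin n) ℝ, r.totalDegree < k ∧
    F = fun x => MvPolynomial.eval x.2 m * MvPolynomial.eval x.1 r}

lemma SepSub_mono {n k l : ℕ} (h : k ≤ l) : SepSub n k ≤ SepSub n l := by
  refine Submodule.span_mono ?_
  rintro F ⟨m, r, hr, rfl⟩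
  exact ⟨m, r, hr.trans_le h, rfl⟩

lemma SepSub_mul {n k : ℕ} (a b : ℝ) (i : Fin n) {F} (hF : F ∈ SepSub n k) :
    (fun x : (Fin n → ℝ) × (Fin n → ℝ) => (a * x.1 i + b * x.2 i) * F x) ∈ SepSub n (k + 1) := by
  refine Submodule.span_induction (p := fun F _ =>
    (fun x : (Fin n → ℝ) × (Fin n → ℝ) => (a * x.1 i + b * x.2 i) * F x) ∈ SepSub n (k + 1))
    ?_ ?_ ?_ ?_ hF
  · rintro F ⟨m, r, hr, rfl⟩
    have h1 : (fun x : (Fin n → ℝ) × (Fin n → ℝ) =>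
        MvPolynomial.eval x.2 (MvPolynomial.C a * m) * MvPolynomial.eval x.1 (MvPolynomial.X i * r))
        ∈ SepSub n (k + 1) := by
      refine Submodule.subset_span ⟨_, _, ?_, rfl⟩
      refine (MvPolynomial.totalDegree_mul _ _).trans_lt ?_
      rw [MvPolynomial.totalDegree_X]; omega
    have h2 : (fun x : (Fin n → ℝ) × (Fin n → ℝ) =>
        MvPolynomial.eval x.2 (MvPolynomial.C b * MvPolynomial.X i * m) * MvPolynomial.eval x.1 r)
        ∈ SepSub n (k + 1) :=
      Submodule.subset_span ⟨_, _, by omega, rfl⟩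
    convert! Submodule.add_mem _ h1 h2 using 1
    ext x
    simp
    ring
  · convert! Submodule.zero_mem _ using 1
    ext x; simp
  · intro F G _ _ hF hG
    convert! Submodule.add_mem _ hF hG using 1
    ext x; simp; ring
  · intro c F _ hF
    convert! Submodule.smul_mem _ c hF using 1
    ext x; simp; ring

lemma mono_top {n : ℕ} (a b : ℝ) : ∀ (m : ℕ) (s : Fin n →₀ ℕ), s.degree = m →
    (fun x : (Fin n → ℝ) × (Fin n → ℝ) =>
      MvPolynomial.eval (a • x.1 + b • x.2) (MvPolynomial.monomial s (1 : ℝ))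
        - a ^ m * MvPolynomial.eval x.1 (MvPolynomial.monomial s 1)) ∈ SepSub n m := by
  intro m
  induction m with
  | zero =>
    intro s hs
    have : s = 0 := (Finsupp.degree_eq_zero_iff s).1 hs
    subst this
    convert! Submodule.zero_mem _ using 1
    ext x; simp
  | succ m ih =>
    intro s hs
    have hs0 : s ≠ 0 := by rintro rfl; simp at hs
    obtain ⟨i, hi⟩ := Finsupp.ne_iff.1 hs0
    have hi' : Finsupp.single i 1 ≤ s := by
      simp only [Finsupp.coe_zero, Pi.zero_apply] at hi
      simpa using Nat.one_le_iff_ne_zero.2 hi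
    obtain ⟨t, rfl⟩ : ∃ t, s = t + Finsupp.single i 1 :=
      ⟨s - Finsupp.single i 1, (tsub_add_cancel_of_le hi').symm⟩
    have ht : t.degree = m := by simpa using hs
    have h1 := SepSub_mul a b i (ih t ht)
    have h2 : (fun x : (Fin n → ℝ) × (Fin n → ℝ) =>
        MvPolynomial.eval x.2 (MvPolynomial.C (a ^ m * b) * MvPolynomial.X i)
          * MvPolynomial.eval x.1 (MvPolynomial.monomial t 1)) ∈ SepSub n (m + 1) := by
      refine Submodule.subset_span ⟨_, _, ?_, rfl⟩
      rw [MvPolynomial.totalDegree_monomial _ one_ne_zero]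
      have : (t.sum fun _ e => e) = m := by rw [← ht]; rfl
      omega
    have hmon : MvPolynomial.monomial (t + Finsupp.single i 1) (1 : ℝ)
      = MvPolynomial.monomial t 1 * MvPolynomial.X i := by
      rw [MvPolynomial.X, MvPolynomial.monomial_mul, one_mul]
    rw [hmon]
    convert! Submodule.add_mem _ h1 h2 using 1
    ext x
    simp
    ring

lemma poly_top {n : ℕ} (a b : ℝ) (k : ℕ) (p : MvPolynomial (Fin n) ℝ) (hp : p.totalDegree ≤ k) :
    (fun x : (Fin n → ℝ) × (Fin n → ℝ) =>
      MvPolynomial.eval (a • x.1 + b • x.2) p - a ^ k * MvPolynomial.eval x.1 p) ∈ SepSub n k := by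
  have key : ∀ s ∈ p.support, (fun x : (Fin n → ℝ) × (Fin n → ℝ) =>
      MvPolynomial.eval (a • x.1 + b • x.2) (MvPolynomial.monomial s (1 : ℝ))
        - a ^ k * MvPolynomial.eval x.1 (MvPolynomial.monomial s 1)) ∈ SepSub n k := by
    intro s hs
    have hsk : s.degree ≤ k := (MvPolynomial.le_totalDegree hs).trans hp
    rcases hsk.eq_or_lt with h | h
    · exact mono_top a b k s h
    · have h1 := SepSub_mono hsk (mono_top a b _ s rfl)
      have h2 : (fun x : (Fin n → ℝ) × (Fin n → ℝ) =>
          MvPolynomial.eval x.2 (MvPolynomial.C (a ^ s.degree - a ^ k))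
          * MvPolynomial.eval x.1 (MvPolynomial.monomial s 1)) ∈ SepSub n k := by
        refine Submodule.subset_span ⟨_, _, ?_, rfl⟩
        rw [MvPolynomial.totalDegree_monomial _ one_ne_zero]
        exact h
      convert! Submodule.add_mem _ h1 h2 using 1
      ext x
      simp only [MvPolynomial.eval_C, Pi.add_apply]
      ring
  have : (fun x : (Fin n → ℝ) × (Fin n → ℝ) =>
      MvPolynomial.eval (a • x.1 + b • x.2) p - a ^ k * MvPolynomial.eval x.1 p)
      = ∑ s ∈ p.support, p.coeff s • (fun x : (Fin n → ℝ) × (Fin n → ℝ) =>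
      MvPolynomial.eval (a • x.1 + b • x.2) (MvPolynomial.monomial s (1 : ℝ))
        - a ^ k * MvPolynomial.eval x.1 (MvPolynomial.monomial s 1)) := by
    ext x
    simp only [Finset.sum_apply, Pi.smul_apply, smul_eq_mul, mul_sub, Finset.sum_sub_distrib]
    have e : ∀ y : Fin n → ℝ, MvPolynomial.eval y p
        = ∑ s ∈ p.support, p.coeff s * MvPolynomial.eval y (MvPolynomial.monomial s (1 : ℝ)) := by
      intro y
      conv_lhs => rw [p.as_sum]
      rw [map_sum]
      refine Finset.sum_congr rfl fun s _ => ?_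
      simp [MvPolynomial.eval_monomial]
    rw [e, e x.1, Finset.mul_sum]
    congr 1
    refine Finset.sum_congr rfl fun s _ => ?_
    ring
  rw [this]
  exact Submodule.sum_mem _ fun s hs => Submodule.smul_mem _ _ (key s hs)

lemma SepSub_int {n k : ℕ} {F} (hF : F ∈ SepSub n k) :
    (∀ z, Integrable (fun w => F (z, w)) (gam n)) ∧
    ∃ r : MvPolynomial (Fin n) ℝ, (r = 0 ∨ r.totalDegree < k) ∧
      ∀ z, ∫ w, F (z, w) ∂(gam n) = MvPolynomial.eval z r := by
  refine Submodule.span_induction (p := fun F _ =>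
    (∀ z, Integrable (fun w => F (z, w)) (gam n)) ∧
    ∃ r : MvPolynomial (Fin n) ℝ, (r = 0 ∨ r.totalDegree < k) ∧
      ∀ z, ∫ w, F (z, w) ∂(gam n) = MvPolynomial.eval z r)
    ?_ ?_ ?_ ?_ hF
  · rintro F ⟨m, r, hr, rfl⟩
    refine ⟨fun z => (poly_integrable m).mul_const (MvPolynomial.eval z r),
      MvPolynomial.C (∫ w, MvPolynomial.eval w m ∂(gam n)) * r, Or.inr ?_, fun z => ?_⟩
    · refine (MvPolynomial.totalDegree_mul _ _).trans_lt ?_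
      simpa using hr
    · simp [integral_mul_const]
  · exact ⟨fun z => by simp, 0, Or.inl rfl, fun z => by simp⟩
  · rintro F G _ _ ⟨hF, r, hr, er⟩ ⟨hG, s, hs, es⟩
    refine ⟨fun z => (hF z).add (hG z), r + s, ?_, fun z => ?_⟩
    · rcases hr with rfl | hr
      · simpa using hs
      rcases hs with rfl | hs
      · simpa using Or.inr hr
      exact Or.inr ((MvPolynomial.totalDegree_add _ _).trans_lt (max_lt hr hs))
    · simp only [Pi.add_apply, map_add]
      rw [integral_add (hF z) (hG z), er, es]
  · rintro c F _ ⟨hF, r, hr, er⟩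
    refine ⟨fun z => (hF z).const_mul c, MvPolynomial.C c * r, ?_, fun z => ?_⟩
    · rcases hr with rfl | hr
      · left; simp
      · right
        refine (MvPolynomial.totalDegree_mul _ _).trans_lt ?_
        simpa using hr
    · simp only [Pi.smul_apply, smul_eq_mul, map_mul, MvPolynomial.eval_C]
      rw [integral_const_mul, er]

lemma Tp_exp {n : ℕ} (a b : ℝ) (k : ℕ) (p : MvPolynomial (Fin n) ℝ) (hp : p.totalDegree ≤ k) :
    ∃ r : MvPolynomial (Fin n) ℝ, (r = 0 ∨ r.totalDegree < k) ∧
      ∀ z, Tp a b p z = a ^ k * MvPolynomial.eval z p + MvPolynomial.eval z r := by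
  obtain ⟨_, r, hr, er⟩ := SepSub_int (poly_top a b k p hp)
  refine ⟨r, hr, fun z => ?_⟩
  rw [← er z]
  simp only
  rw [integral_sub (Tp_integrable a b p z) (integrable_const _)]
  simp [Tp]

lemma proj_exists {n : ℕ} (d : ℕ) (p : MvPolynomial (Fin n) ℝ) :
    ∃ α : MvPolynomial (Fin n) ℝ, α.totalDegree ≤ d ∧
      ∀ c : MvPolynomial (Fin n) ℝ, c.totalDegree ≤ d →
        ∫ x, MvPolynomial.eval x (p - α) * MvPolynomial.eval x c ∂(gam n) = 0 := by
  let ι : MvPolynomial (Fin n) ℝ →ₗ[ℝ] Lp ℝ 2 (gam n) :=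
    { toFun := fun q => (poly_memLp q).toLp
      map_add' := by
        intro q r
        rw [← MemLp.toLp_add]
        congr 1
        ext x; simp
      map_smul' := by
        intro c q
        rw [RingHom.id_apply, ← MemLp.toLp_const_smul]
        congr 1
        ext x; simp }
  let V : Submodule ℝ (Lp ℝ 2 (gam n)) := (MvPolynomial.restrictTotalDegree (Fin n) ℝ d).map ι
  have : FiniteDimensional ℝ V := by
    change Module.Finite ℝ ((MvPolynomial.restrictTotalDegree (Fin n) ℝ d).map ι)
    infer_instance
  obtain ⟨y, hy, z, hz, hyz⟩ := V.exists_add_mem_mem_orthogonal (ι p)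
  obtain ⟨α, hα, rfl⟩ := hy
  refine ⟨α, (MvPolynomial.mem_restrictTotalDegree _ _ _).1 hα, fun c hc => ?_⟩
  have hcV : ι c ∈ V := ⟨c, (MvPolynomial.mem_restrictTotalDegree _ _ _).2 hc, rfl⟩
  have h1 : inner ℝ (ι c) (ι (p - α)) = 0 := by
    have : ι (p - α) = z := by rw [map_sub, hyz]; simp
    rw [this]
    exact hz _ hcV
  rw [L2.inner_def] at h1
  rw [← h1]
  refine integral_congr_ae ?_
  filter_upwards [(poly_memLp c).coeFn_toLp, (poly_memLp (p - α)).coeFn_toLp] with x h2 h3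
  change _ = inner ℝ (((poly_memLp c).toLp) x) (((poly_memLp (p - α)).toLp) x)
  rw [h2, h3]
  simp

lemma sq_int {n : ℕ} (p q : MvPolynomial (Fin n) ℝ)
    (h : ∫ x, MvPolynomial.eval x p * MvPolynomial.eval x q ∂(gam n) = 0) :
    ∫ x, MvPolynomial.eval x (p + q) ^ 2 ∂(gam n)
      = ∫ x, MvPolynomial.eval x p ^ 2 ∂(gam n) + ∫ x, MvPolynomial.eval x q ^ 2 ∂(gam n) := by
  have h1 : ∀ x, MvPolynomial.eval x (p + q) ^ 2 = MvPolynomial.eval x p * MvPolynomial.eval x p +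
      (2 * (MvPolynomial.eval x p * MvPolynomial.eval x q)
        + MvPolynomial.eval x q * MvPolynomial.eval x q) := by
    intro x; simp only [map_add]; ring
  simp_rw [h1]
  have h2 : Integrable (fun x => 2 * (MvPolynomial.eval x p * MvPolynomial.eval x q)
      + MvPolynomial.eval x q * MvPolynomial.eval x q) (gam n) :=
    ((poly_mul_integrable p q).const_mul 2).add (poly_mul_integrable q q)
  rw [integral_add (poly_mul_integrable p p) h2,
    integral_add ((poly_mul_integrable p q).const_mul 2) (poly_mul_integrable q q),
    integral_const_mul, h]
  simp [sq]

lemma Tp_inv {n : ℕ} (a b : ℝ) (ha : a ^ 2 = 1 / 3) (hb : b ^ 2 = 2 / 3) :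
    ∀ (d : ℕ) (p : MvPolynomial (Fin n) ℝ), p.totalDegree ≤ d →
    ∃ g : MvPolynomial (Fin n) ℝ, g.totalDegree ≤ d ∧
      (∀ᵐ z ∂(gam n), Tp a b g z = MvPolynomial.eval z p) ∧
      ∫ x, MvPolynomial.eval x g ^ 2 ∂(gam n)
        ≤ 3 ^ d * ∫ x, MvPolynomial.eval x p ^ 2 ∂(gam n) := by
  have ha0 : a ≠ 0 := by rintro rfl; norm_num at ha
  intro d
  induction d with
  | zero =>
    intro p hp
    obtain ⟨r, hr, er⟩ := Tp_exp a b 0 p hp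
    refine ⟨p, hp, Filter.Eventually.of_forall fun z => ?_, by simp⟩
    rcases hr with rfl | hr
    · simp [er]
    · omega
  | succ d ih =>
    intro p hp
    obtain ⟨α, hα, horth⟩ := proj_exists d p
    set β := p - α with hβ
    have hβd : β.totalDegree ≤ d + 1 :=
      (MvPolynomial.totalDegree_sub _ _).trans (max_le hp (by omega))
    obtain ⟨g, hg, eg, ig⟩ := ih α hα
    obtain ⟨r, hr, er⟩ := Tp_exp a b (d + 1) β hβd
    have hrd : r.totalDegree ≤ d := by
      rcases hr with rfl | hr
      · simp
      · omega
    obtain ⟨s, hs, es⟩ := Tp_exp a b d r hrd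
    have hsd : (MvPolynomial.C (a ^ d) * r + s).totalDegree ≤ d := by
      refine (MvPolynomial.totalDegree_add _ _).trans (max_le ?_ ?_)
      · refine (MvPolynomial.totalDegree_mul _ _).trans ?_
        rw [MvPolynomial.totalDegree_C, zero_add]
        exact hrd
      · rcases hs with rfl | hs
        · simp
        · omega
    have hr0 : ∫ x, MvPolynomial.eval x r ^ 2 ∂(gam n) = 0 := by
      have h1 := Tp_symm a b ha hb β r
      have h2 : ∫ z, MvPolynomial.eval z β * Tp a b r z ∂(gam n) = 0 := by
        rw [← horth _ hsd]
        refine integral_congr_ae (Filter.Eventually.of_forall fun z => ?_)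
        simp [es]
      rw [h2] at h1
      simp_rw [er] at h1
      have h3 : ∀ z, (a ^ (d + 1) * MvPolynomial.eval z β + MvPolynomial.eval z r)
          * MvPolynomial.eval z r = a ^ (d + 1) * (MvPolynomial.eval z β * MvPolynomial.eval z r)
          + MvPolynomial.eval z r * MvPolynomial.eval z r := by intro z; ring
      simp_rw [h3] at h1
      rw [integral_add ((poly_mul_integrable β r).const_mul _) (poly_mul_integrable r r),
        integral_const_mul, horth r hrd] at h1
      simpa [sq] using h1
    have hrae : ∀ᵐ z ∂(gam n), MvPolynomial.eval z r = 0 := by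
      have := (integral_eq_zero_iff_of_nonneg (fun x => sq_nonneg _)
        (by simpa [sq] using poly_mul_integrable r r)).1 hr0
      filter_upwards [this] with z hz
      simpa using hz
    have hCβ : (MvPolynomial.C ((a ^ (d + 1))⁻¹) * β).totalDegree ≤ d + 1 := by
      refine (MvPolynomial.totalDegree_mul _ _).trans ?_
      rw [MvPolynomial.totalDegree_C, zero_add]
      exact hβd
    refine ⟨g + MvPolynomial.C ((a ^ (d + 1))⁻¹) * β, ?_, ?_, ?_⟩
    · exact (MvPolynomial.totalDegree_add _ _).trans (max_le (by omega) hCβ)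
    · filter_upwards [eg, hrae] with z h1 h2
      rw [Tp_add, Tp_C_mul, h1, er, h2, hβ]
      have : a ^ (d + 1) ≠ 0 := pow_ne_zero _ ha0
      simp only [map_sub]
      field_simp
      ring
    · have e1 : ∫ x, MvPolynomial.eval x p ^ 2 ∂(gam n)
          = ∫ x, MvPolynomial.eval x β ^ 2 ∂(gam n) + ∫ x, MvPolynomial.eval x α ^ 2 ∂(gam n) := by
        rw [← sq_int β α (horth α hα), hβ]
        simp
      have e2 : ∫ x, MvPolynomial.eval x (g + MvPolynomial.C ((a ^ (d + 1))⁻¹) * β) ^ 2 ∂(gam n)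
          = ∫ x, MvPolynomial.eval x g ^ 2 ∂(gam n)
            + 3 ^ (d + 1) * ∫ x, MvPolynomial.eval x β ^ 2 ∂(gam n) := by
        rw [sq_int, ← integral_const_mul]
        · congr 1
          refine integral_congr_ae (Filter.Eventually.of_forall fun z => ?_)
          simp only [map_mul, MvPolynomial.eval_C, mul_pow, inv_pow]
          rw [← pow_mul, mul_comm (d + 1) 2, pow_mul, ha]
          simp
        · rw [← mul_zero ((a ^ (d + 1))⁻¹), ← horth g hg, ← integral_const_mul]
          refine integral_congr_ae (Filter.Eventually.of_forall fun z => ?_)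
          simp only [map_mul, MvPolynomial.eval_C]
          ring
      rw [e1, e2]
      have hα0 : 0 ≤ ∫ x, MvPolynomial.eval x α ^ 2 ∂(gam n) := integral_nonneg fun x => sq_nonneg _
      have : (3 : ℝ) ^ d * ∫ x, MvPolynomial.eval x α ^ 2 ∂(gam n)
          ≤ 3 ^ (d + 1) * ∫ x, MvPolynomial.eval x α ^ 2 ∂(gam n) := by
        gcongr
        · norm_num
        · omega
      linarith

lemma lint_pow {n : ℕ} (p : MvPolynomial (Fin n) ℝ) (k : ℕ) :
    ∫⁻ x, ‖MvPolynomial.eval x p‖ₑ ^ (2 * k) ∂(gam n)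
      = ENNReal.ofReal (∫ x, MvPolynomial.eval x p ^ (2 * k) ∂(gam n)) := by
  rw [ofReal_integral_eq_lintegral_ofReal]
  · refine lintegral_congr fun x => ?_
    rw [Real.enorm_eq_ofReal_abs, ← ENNReal.ofReal_pow (abs_nonneg _), pow_mul, sq_abs, ← pow_mul]
  · have := poly_integrable (p ^ (2 * k))
    refine this.congr (Filter.Eventually.of_forall fun x => ?_)
    simp
  · exact Filter.Eventually.of_forall fun x => by
      simp only [pow_mul, Pi.zero_apply]
      positivity

/-- Gaussian `(2,4)`-hypercontractivity for polynomials. -/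
lemma hyper {n : ℕ} (d : ℕ) (p : MvPolynomial (Fin n) ℝ) (hp : p.totalDegree ≤ d) :
    ∫ x, MvPolynomial.eval x p ^ 4 ∂(gam n)
      ≤ 9 ^ d * (∫ x, MvPolynomial.eval x p ^ 2 ∂(gam n)) ^ 2 := by
  have ha : (√(1 / 3)) ^ 2 = (1 : ℝ) / 3 := Real.sq_sqrt (by norm_num)
  have hb : (√(2 / 3)) ^ 2 = (2 : ℝ) / 3 := Real.sq_sqrt (by norm_num)
  generalize (√(1 / 3) : ℝ) = a at ha
  generalize (√(2 / 3) : ℝ) = b at hb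
  obtain ⟨g, _, eg, ig⟩ := Tp_inv a b ha hb d p hp
  have h1 := hyper_lint a b ha hb (fun x : Fin n → ℝ => ‖MvPolynomial.eval x g‖ₑ)
    (poly_meas g).enorm
  have h2 : ∫⁻ x, ‖MvPolynomial.eval x p‖ₑ ^ (2 * 2) ∂(gam n) ≤
      ∫⁻ z, (∫⁻ w, ‖MvPolynomial.eval (a • z + b • w) g‖ₑ ∂(gam n)) ^ 4 ∂(gam n) := by
    refine lintegral_mono_ae ?_
    filter_upwards [eg] with z hz
    rw [← hz]
    exact pow_le_pow_left' (enorm_integral_le_lintegral_enorm _) 4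
  have h3 := h2.trans h1
  have e2 := lint_pow g 1
  simp only [mul_one] at e2
  have hg0 : 0 ≤ ∫ x, MvPolynomial.eval x g ^ 2 ∂(gam n) := integral_nonneg fun x => sq_nonneg _
  rw [lint_pow, e2, ← ENNReal.ofReal_pow hg0, ENNReal.ofReal_le_ofReal_iff (by positivity)] at h3
  refine h3.trans ?_
  calc (∫ x, MvPolynomial.eval x g ^ 2 ∂(gam n)) ^ 2
      ≤ (3 ^ d * ∫ x, MvPolynomial.eval x p ^ 2 ∂(gam n)) ^ 2 := by gcongr
    _ = _ := by rw [mul_pow, ← pow_mul, mul_comm d 2, pow_mul]; norm_num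

lemma pt_on (u v c S ε : ℝ) (hc0 : 0 < c) (hS : 0 < S) (hε : 0 < ε) :
    u ^ 2 ≤ (2 * c * S)⁻¹ * u ^ 4 + (c * S / 2) * 1 + (16 * c * ε ^ 2)⁻¹ * v ^ 2 := by
  have hP : 0 ≤ (16 * c * ε ^ 2)⁻¹ * v ^ 2 := by positivity
  have e : (2 * c * S)⁻¹ * u ^ 4 + c * S / 2 - u ^ 2 = (2 * c * S)⁻¹ * (u ^ 2 - c * S) ^ 2 := by
    field_simp; ring
  have : 0 ≤ (2 * c * S)⁻¹ * (u ^ 2 - c * S) ^ 2 := by positivity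
  linarith

lemma pt_off (u v c S ε t : ℝ) (hc0 : 0 < c) (hS : 0 < S) (hε : 0 < ε) (ht : 0 < t)
    (h3c : t ^ 2 = c) (hx' : 4 * t * ε * |u| ≤ |v|) :
    u ^ 2 ≤ (2 * c * S)⁻¹ * u ^ 4 + (c * S / 2) * 0 + (16 * c * ε ^ 2)⁻¹ * v ^ 2 := by
  have h2 := pow_le_pow_left₀ (by positivity) hx' 2
  rw [mul_pow, mul_pow, mul_pow, h3c, sq_abs, sq_abs] at h2
  have h5 : u ^ 2 ≤ (16 * c * ε ^ 2)⁻¹ * v ^ 2 := by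
    rw [inv_mul_eq_div, le_div_iff₀ (by positivity)]
    linarith
  have : 0 ≤ (2 * c * S)⁻¹ * u ^ 4 := by positivity
  linarith

set_option maxHeartbeats 1000000 in
lemma fiber_bound {n : ℕ} (d : ℕ) (P Q : MvPolynomial (Fin n) ℝ) (hQ : Q.totalDegree ≤ d)
    (ε : ℝ) (hε : 0 < ε)
    (h : √(∫ x, MvPolynomial.eval x P ^ 2 ∂(gam n)) < ε * √(∫ x, MvPolynomial.eval x Q ^ 2 ∂(gam n))) :
    1 / (4 * 9 ^ d) ≤ (gam n).real
      {x | |MvPolynomial.eval x P| < 4 * 3 ^ d * ε * |MvPolynomial.eval x Q|} := by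
  set A := {x : Fin n → ℝ | |MvPolynomial.eval x P| < 4 * 3 ^ d * ε * |MvPolynomial.eval x Q|}
    with hA
  have hAm : MeasurableSet A :=
    measurableSet_lt (poly_meas P).abs ((poly_meas Q).abs.const_mul _)
  have h4 := hyper d Q hQ
  set R := ∫ x, MvPolynomial.eval x P ^ 2 ∂(gam n) with hR
  set S := ∫ x, MvPolynomial.eval x Q ^ 2 ∂(gam n) with hS
  have hR0 : 0 ≤ R := integral_nonneg fun x => sq_nonneg _
  have hS0 : 0 ≤ S := integral_nonneg fun x => sq_nonneg _
  have hRS : R < ε ^ 2 * S := by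
    have := pow_lt_pow_left₀ h (Real.sqrt_nonneg _) two_ne_zero
    rwa [mul_pow, Real.sq_sqrt hR0, Real.sq_sqrt hS0] at this
  have hSpos : 0 < S := by
    rcases hS0.eq_or_lt with h0 | h0
    · rw [← h0] at hRS; simp at hRS; linarith
    · exact h0
  set c : ℝ := 9 ^ d with hc
  have hc1 : 1 ≤ c := one_le_pow₀ (by norm_num)
  have hc0 : 0 < c := by linarith
  have h3c : ((3 : ℝ) ^ d) ^ 2 = c := by rw [← pow_mul, mul_comm, pow_mul]; norm_num [hc]
  have hpt : ∀ x, MvPolynomial.eval x Q ^ 2 ≤ (2 * c * S)⁻¹ * MvPolynomial.eval x Q ^ 4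
      + (c * S / 2) * A.indicator (fun _ => (1 : ℝ)) x
      + (16 * c * ε ^ 2)⁻¹ * MvPolynomial.eval x P ^ 2 := by
    intro x
    by_cases hx : x ∈ A
    · rw [Set.indicator_of_mem hx]
      exact pt_on _ _ c S ε hc0 hSpos hε
    · rw [Set.indicator_of_notMem hx]
      exact pt_off _ _ c S ε (3 ^ d) hc0 hSpos hε (by positivity) h3c (not_lt.1 hx)
  have i4 : Integrable (fun x => (2 * c * S)⁻¹ * MvPolynomial.eval x Q ^ 4) (gam n) := by
    refine Integrable.const_mul ?_ _
    refine (poly_integrable (Q ^ 4)).congr (Filter.Eventually.of_forall fun x => ?_)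
    simp
  have i2 : ∀ P : MvPolynomial (Fin n) ℝ, Integrable (fun x => MvPolynomial.eval x P ^ 2) (gam n) := by
    intro P
    refine (poly_integrable (P ^ 2)).congr (Filter.Eventually.of_forall fun x => ?_)
    simp
  have iA : Integrable (fun x => (c * S / 2) * A.indicator (fun _ => (1 : ℝ)) x) (gam n) :=
    ((integrable_const 1).indicator hAm).const_mul _
  have i4A : Integrable (fun x => (2 * c * S)⁻¹ * MvPolynomial.eval x Q ^ 4
      + (c * S / 2) * A.indicator (fun _ => (1 : ℝ)) x) (gam n) := i4.add iA
  have iP := (i2 P).const_mul (16 * c * ε ^ 2)⁻¹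
  have hintg := integral_mono (i2 Q) (i4A.add iP) hpt
  simp only [Pi.add_apply] at hintg
  rw [integral_add i4A iP, integral_add i4 iA, integral_const_mul, integral_const_mul,
    integral_const_mul, integral_indicator_const _ hAm, ← hR, ← hS] at hintg
  simp only [smul_eq_mul, mul_one] at hintg
  have b1 : (2 * c * S)⁻¹ * ∫ x, MvPolynomial.eval x Q ^ 4 ∂(gam n) ≤ S / 2 := by
    rw [inv_mul_eq_div, div_le_iff₀ (by positivity)]
    linarith
  have b2 : (16 * c * ε ^ 2)⁻¹ * R ≤ S / 16 := by
    rw [inv_mul_eq_div, div_le_iff₀ (by positivity)]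
    have : ε ^ 2 * S ≤ c * (ε ^ 2 * S) := le_mul_of_one_le_left (by positivity) hc1
    linarith
  have hfin : S * (7 / 16) ≤ S * (c / 2 * (gam n).real A) := by linarith
  have hfin' := le_of_mul_le_mul_left hfin hSpos
  rw [div_le_iff₀ (by positivity)]
  linarith

/-- Freezing the second group of variables. -/
noncomputable def freeze {n₁ n₂ : ℕ} (Y : Fin n₂ → ℝ) (r : MvPolynomial (Fin n₁ ⊕ Fin n₂) ℝ) :
    MvPolynomial (Fin n₁) ℝ :=
  MvPolynomial.aeval (Sum.elim MvPolynomial.X (fun j => MvPolynomial.C (Y j))) r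

lemma eval_freeze {n₁ n₂ : ℕ} (Y : Fin n₂ → ℝ) (r : MvPolynomial (Fin n₁ ⊕ Fin n₂) ℝ)
    (X : Fin n₁ → ℝ) :
    MvPolynomial.eval X (freeze Y r) = MvPolynomial.eval (Sum.elim X Y) r := by
  rw [freeze, MvPolynomial.aeval_def, MvPolynomial.eval_eval₂, MvPolynomial.eval,
    MvPolynomial.coe_eval₂Hom, MvPolynomial.eval, MvPolynomial.coe_eval₂Hom]
  congr 1
  · ext; simp
  · ext i; cases i <;> simp

lemma freeze_degree {n₁ n₂ : ℕ} (Y : Fin n₂ → ℝ) (r : MvPolynomial (Fin n₁ ⊕ Fin n₂) ℝ) (d : ℕ)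
    (hr : r.totalDegree ≤ d) : (freeze Y r).totalDegree ≤ d := by
  rw [freeze, MvPolynomial.aeval_def, MvPolynomial.eval₂_eq]
  refine MvPolynomial.totalDegree_finsetSum_le fun s hs => ?_
  refine (MvPolynomial.totalDegree_mul _ _).trans ?_
  rw [MvPolynomial.algebraMap_eq, MvPolynomial.totalDegree_C, zero_add]
  refine (MvPolynomial.totalDegree_finsetProd _ _).trans ?_
  refine le_trans ?_ ((MvPolynomial.le_totalDegree hs).trans hr)
  refine Finset.sum_le_sum fun i _ => ?_
  refine (MvPolynomial.totalDegree_pow _ _).trans ?_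
  have : (Sum.elim MvPolynomial.X (fun j => MvPolynomial.C (Y j)) i :
      MvPolynomial (Fin n₁) ℝ).totalDegree ≤ 1 := by
    cases i <;> simp
  simpa using Nat.mul_le_mul_left (s i) this

/-- Comparing anticoncentration of partial `L²` norms with pointwise values. -/
theorem stmt5 (n₁ n₂ d : ℕ) (p q : MvPolynomial (Fin n₁ ⊕ Fin n₂) ℝ)
    (hp : p.totalDegree ≤ d) (hq : q.totalDegree ≤ d) (ε : ℝ) (hε : 0 < ε) :
    ((stdGaussian n₂) {Y | partialL2 n₁ n₂ p Y < ε * partialL2 n₁ n₂ q Y}).toReal ≤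
      4 * 9 ^ d *
        (((stdGaussian n₁).prod (stdGaussian n₂))
          {XY | |MvPolynomial.eval (Sum.elim XY.1 XY.2) p| <
                4 * 3 ^ d * ε * |MvPolynomial.eval (Sum.elim XY.1 XY.2) q|}).toReal := by
  set B := {Y | partialL2 n₁ n₂ p Y < ε * partialL2 n₁ n₂ q Y} with hB
  set A := {XY : (Fin n₁ → ℝ) × (Fin n₂ → ℝ) | |MvPolynomial.eval (Sum.elim XY.1 XY.2) p| <
                4 * 3 ^ d * ε * |MvPolynomial.eval (Sum.elim XY.1 XY.2) q|} with hA
  have hmeas : ∀ r : MvPolynomial (Fin n₁ ⊕ Fin n₂) ℝ,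
      Measurable fun XY : (Fin n₁ → ℝ) × (Fin n₂ → ℝ) =>
        MvPolynomial.eval (Sum.elim XY.1 XY.2) r := by
    intro r
    refine (poly_meas r).comp ?_
    refine measurable_pi_lambda _ fun i => ?_
    cases i
    · simp only [Sum.elim_inl]; fun_prop
    · simp only [Sum.elim_inr]; fun_prop
  have hAm : MeasurableSet A := measurableSet_lt (hmeas p).abs ((hmeas q).abs.const_mul _)
  have hfib : ∀ Y ∈ B, ENNReal.ofReal (1 / (4 * 9 ^ d)) ≤
      (gam n₁) ((fun X => (X, Y)) ⁻¹' A) := by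
    intro Y hY
    have h := fiber_bound d (freeze Y p) (freeze Y q) (freeze_degree Y q d hq) ε hε
      (by simp only [eval_freeze]; exact hY)
    simp only [eval_freeze] at h
    rw [measureReal_def] at h
    exact ENNReal.ofReal_le_of_le_toReal h
  have hprod : ((gam n₁).prod (gam n₂)) A = ∫⁻ Y, (gam n₁) ((fun X => (X, Y)) ⁻¹' A) ∂(gam n₂) :=
    Measure.prod_apply_symm hAm
  have hmark := mul_meas_ge_le_lintegral (μ := gam n₂)
    (measurable_measure_prodMk_right (μ := gam n₁) hAm) (ENNReal.ofReal (1 / (4 * 9 ^ d)))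
  have hle : ENNReal.ofReal (1 / (4 * 9 ^ d)) * (gam n₂) B ≤ ((gam n₁).prod (gam n₂)) A := by
    rw [hprod]
    refine le_trans ?_ hmark
    gcongr
    exact hfib
  have hreal := ENNReal.toReal_mono (measure_ne_top _ _) hle
  rw [ENNReal.toReal_mul, ENNReal.toReal_ofReal (by positivity)] at hreal
  rw [div_mul_eq_mul_div, one_mul, div_le_iff₀ (by positivity)] at hreal
  rw [mul_comm]
  exact hreal
end

section
/- For every polynomial p of degree at most d on ℝ^n and every real θ ≠ 0, the quantity |p_θ^{(d)}(X)|_2 is independent of X; that is, the function X ↦ |p_θ^{(d)}(X)|_2 is constant on ℝ^n. -/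
open MeasureTheory ProbabilityTheory

open MvPolynomial in
lemma aux_deg {n : ℕ} (A : MvPolynomial (Fin n) ℝ →ₐ[ℝ] MvPolynomial (Fin n) ℝ)
    (hA : ∀ i, (A (X i)).totalDegree ≤ 1) (m : Multiset (Fin n)) :
    (A (m.map X).prod).totalDegree ≤ m.card := by
  induction m using Multiset.induction with
  | empty => simp
  | cons i m ih =>
    rw [Multiset.map_cons, Multiset.prod_cons, map_mul, Multiset.card_cons]
    have := totalDegree_mul (A (X i)) (A (m.map X).prod)
    have := hA i
    omega

open MvPolynomial in
lemma aux_diff {n : ℕ} (A B : MvPolynomial (Fin n) ℝ →ₐ[ℝ] MvPolynomial (Fin n) ℝ)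
    (hA : ∀ i, (A (X i)).totalDegree ≤ 1) (hB : ∀ i, (B (X i)).totalDegree ≤ 1)
    (hAB : ∀ i, (A (X i) - B (X i)).totalDegree = 0) (m : Multiset (Fin n)) :
    ∀ N : ℕ, m.card ≤ N + 1 →
      (A (m.map X).prod - B (m.map X).prod).totalDegree ≤ N := by
  induction m using Multiset.induction with
  | empty => simp
  | cons i m ih =>
    intro N hN
    rw [Multiset.card_cons] at hN
    rw [Multiset.map_cons, Multiset.prod_cons, map_mul, map_mul]
    have e : A (X i) * A (m.map X).prod - B (X i) * B (m.map X).prod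
        = A (X i) * (A (m.map X).prod - B (m.map X).prod)
          + (A (X i) - B (X i)) * B (m.map X).prod := by ring
    rw [e]
    refine (totalDegree_add _ _).trans (max_le ?_ ?_)
    · cases N with
      | zero =>
        have : m = 0 := Multiset.card_eq_zero.mp (by omega)
        subst this
        simp
      | succ M =>
        have := totalDegree_mul (A (X i)) (A (m.map X).prod - B (m.map X).prod)
        have := hA i
        have := ih M (by omega)
        omega
    · have := totalDegree_mul (A (X i) - B (X i)) (B (m.map X).prod)
      have := hAB i
      have := aux_deg B hB m
      omega

open MvPolynomial in
lemma monomial_toMultiset {n : ℕ} (s : Fin n →₀ ℕ) (a : ℝ) :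
    monomial s a = a • ((Finsupp.toMultiset s).map (X : Fin n → MvPolynomial (Fin n) ℝ)).prod := by
  rw [monomial_eq, smul_eq_C_mul, Finsupp.toMultiset_map, Finsupp.prod_toMultiset,
    Finsupp.prod_mapDomain_index (by simp) (by intros; rw [pow_add])]

open MvPolynomial in
lemma aux_poly {n : ℕ} (A B : MvPolynomial (Fin n) ℝ →ₐ[ℝ] MvPolynomial (Fin n) ℝ)
    (hA : ∀ i, (A (X i)).totalDegree ≤ 1) (hB : ∀ i, (B (X i)).totalDegree ≤ 1)
    (hAB : ∀ i, (A (X i) - B (X i)).totalDegree = 0) (p : MvPolynomial (Fin n) ℝ) (N : ℕ)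
    (hp : p.totalDegree ≤ N + 1) : (A p - B p).totalDegree ≤ N := by
  have e : A p - B p = ∑ s ∈ p.support,
      (A (monomial s (coeff s p)) - B (monomial s (coeff s p))) := by
    conv_lhs => rw [p.as_sum]
    rw [map_sum, map_sum, Finset.sum_sub_distrib]
  rw [e]
  refine totalDegree_finsetSum_le fun s hs => ?_
  rw [monomial_toMultiset, map_smul, map_smul, ← smul_sub]
  refine (totalDegree_smul_le _ _).trans (aux_diff A B hA hB hAB _ N ?_)
  rw [Finsupp.card_toMultiset]
  exact (le_totalDegree hs).trans hp

open MvPolynomial in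
lemma noisyDeriv_poly {n : ℕ} (θ : ℝ) (Y Z : Fin n → ℝ) (p : MvPolynomial (Fin n) ℝ) (N : ℕ)
    (hp : p.totalDegree ≤ N + 1) : ∃ q : MvPolynomial (Fin n) ℝ, q.totalDegree ≤ N ∧
      noisyDeriv θ Y Z (fun W => eval W p) = fun W => eval W q := by
  let S : (Fin n → ℝ) → (MvPolynomial (Fin n) ℝ →ₐ[ℝ] MvPolynomial (Fin n) ℝ) := fun Y =>
    aeval (fun i => Real.cos θ • X i + C (Real.sin θ * Y i))
  have hS : ∀ Y i, (S Y (X i)).totalDegree ≤ 1 := by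
    intro Y i
    simp only [S, aeval_X]
    refine (totalDegree_add _ _).trans (max_le ?_ ?_)
    · exact (totalDegree_smul_le _ _).trans (totalDegree_X i).le
    · rw [totalDegree_C]; exact Nat.zero_le _
  have hE : ∀ Y W, eval W (S Y p) = eval (noisy θ Y W) p := by
    intro Y W
    have : ((aeval W : MvPolynomial (Fin n) ℝ →ₐ[ℝ] ℝ).comp (S Y)) = aeval (noisy θ Y W) := by
      ext i
      simp [S, noisy]
    have h := DFunLike.congr_fun this p
    simpa [aeval_eq_eval] using h
  refine ⟨θ⁻¹ • (S Y p - S Z p), (totalDegree_smul_le _ _).trans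
    (aux_poly (S Y) (S Z) (hS Y) (hS Z) ?_ p N hp), ?_⟩
  · intro i
    simp only [S, aeval_X, add_sub_add_left_eq_sub, ← C_sub, totalDegree_C]
  · funext W
    simp only [noisyDeriv, smul_eval, map_sub, hE]
    rw [div_eq_inv_mul]

lemma derivNormSq_const (n d : ℕ) (θ : ℝ) (X X' : Fin n → ℝ) :
    ∀ p : MvPolynomial (Fin n) ℝ, p.totalDegree ≤ d →
      derivNormSq n θ d (fun W => MvPolynomial.eval W p) X =
        derivNormSq n θ d (fun W => MvPolynomial.eval W p) X' := by
  induction d with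
  | zero =>
    intro p hp
    rw [MvPolynomial.totalDegree_eq_zero_iff_eq_C.mp (Nat.le_zero.mp hp)]
    simp [derivNormSq]
  | succ d ih =>
    intro p hp
    simp only [derivNormSq]
    congr 1
    funext YZ
    obtain ⟨q, hq, e⟩ := noisyDeriv_poly θ YZ.1 YZ.2 p d hp
    rw [e]
    exact ih q hq

/-- For a degree-`d` polynomial, `|p_θ^{(d)}(X)|₂` does not depend on `X`. -/
theorem stmt6 (n d : ℕ) (p : MvPolynomial (Fin n) ℝ) (hp : p.totalDegree ≤ d)
    (θ : ℝ) (hθ : θ ≠ 0) :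
    ∀ X X' : Fin n → ℝ,
      Real.sqrt (derivNormSq n θ d (fun W => MvPolynomial.eval W p) X) =
        Real.sqrt (derivNormSq n θ d (fun W => MvPolynomial.eval W p) X') := by
  intro X X'
  rw [derivNormSq_const n d θ X X' p hp]
end
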